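/- Every Conway invariant weak Jacobi form of index 2 and weight k < −4 vanishes: J^{w,Co₀}_{k,Λ,2} = {0} for all integers k < −4. -/

import Mathlib

open Complex Matrix UpperHalfPlane
open scoped Manifold MatrixGroups Real Topology BigOperators

noncomputable section

/-- Vectors of the rank-24 lattice (coordinates w.r.t. a fixed basis). -/
abbrev LV := Fin 24 → ℤ

/-- Complexified vectors. -/
abbrev CV := Fin 24 → ℂ

/-- The bilinear form attached to a Gram matrix `B`. -/
def pairZ (B : Matrix (Fin 24) (Fin 24) ℤ) (v u : LV) : ℤ := v ⬝ᵥ B.mulVec u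

/-- The complex bilinear extension of the form. -/
def pairC (B : Matrix (Fin 24) (Fin 24) ℤ) (z w : CV) : ℂ :=
  z ⬝ᵥ ((B.map (Int.cast : ℤ → ℂ)).mulVec w)

/-- Inclusion of lattice vectors into complexified vectors. -/
def liftC (v : LV) : CV := fun i => (v i : ℂ)

/-- `B` is a Gram matrix of the Leech lattice: even, unimodular, positive definite of
rank 24, with no vectors of norm 2 (no roots). -/
def IsLeech (B : Matrix (Fin 24) (Fin 24) ℤ) : Prop :=
  B.IsSymm ∧ B.det = 1 ∧ (∀ v : LV, v ≠ 0 → 0 < pairZ B v v) ∧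
    (∀ v : LV, Even (pairZ B v v)) ∧ (∀ v : LV, pairZ B v v ≠ 2)

/-- The automorphism group `Co₀ = Aut(Λ)` of the lattice, as a set of integral matrices. -/
def ConwayGroup (B : Matrix (Fin 24) (Fin 24) ℤ) : Set (Matrix (Fin 24) (Fin 24) ℤ) :=
  {σ | IsUnit σ.det ∧ σᵀ * B * σ = B}

/-- Action of an integral matrix on complexified vectors. -/
def actC (σ : Matrix (Fin 24) (Fin 24) ℤ) (z : CV) : CV :=
  (σ.map (Int.cast : ℤ → ℂ)).mulVec z

/-- `e(x) = exp(2πix)`. -/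
def eC (x : ℂ) : ℂ := Complex.exp (2 * (Real.pi : ℂ) * Complex.I * x)

/-- The Fourier term `qⁿ ζ^ℓ`. -/
def fterm (B : Matrix (Fin 24) (Fin 24) ℤ) (n : ℕ) (ℓ : LV) (τ : UpperHalfPlane) (z : CV) : ℂ :=
  eC ((n : ℂ) * (τ : ℂ)) * eC (pairC B (liftC ℓ) z)

/-- Lower-left entry of `A ∈ SL(2,ℤ)`, as a complex number. -/
def slc (A : SL(2, ℤ)) : ℂ := ((A : Matrix (Fin 2) (Fin 2) ℤ) 1 0 : ℤ)

/-- Lower-right entry of `A ∈ SL(2,ℤ)`, as a complex number. -/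
def sld (A : SL(2, ℤ)) : ℂ := ((A : Matrix (Fin 2) (Fin 2) ℤ) 1 1 : ℤ)

/-- The automorphy factor `cτ + d`. -/
def jfactor (A : SL(2, ℤ)) (τ : UpperHalfPlane) : ℂ := slc A * (τ : ℂ) + sld A

/-- `φ : ℍ × (Λ⊗ℂ) → ℂ` is a Conway invariant weak Jacobi form of weight `k` and index `t`
with Fourier coefficients `f`. -/
structure IsJacobiFormWith (B : Matrix (Fin 24) (Fin 24) ℤ) (k : ℤ) (t : ℕ)
    (φ : UpperHalfPlane → CV → ℂ) (f : ℕ → LV → ℂ) : Prop where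
  holo_tau : ∀ z : CV, MDifferentiable 𝓘(ℂ) 𝓘(ℂ) fun τ : UpperHalfPlane => φ τ z
  holo_z : ∀ τ : UpperHalfPlane, Differentiable ℂ (φ τ)
  conway_invar : ∀ σ ∈ ConwayGroup B, ∀ (τ : UpperHalfPlane) (z : CV), φ τ (actC σ z) = φ τ z
  quasi_periodic : ∀ (x y : LV) (τ : UpperHalfPlane) (z : CV),
    φ τ (z + (τ : ℂ) • liftC x + liftC y) =
      Complex.exp (-(t : ℂ) * (Real.pi : ℂ) * Complex.I * (pairZ B x x : ℂ) * (τ : ℂ)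
        - 2 * (t : ℂ) * (Real.pi : ℂ) * Complex.I * pairC B (liftC x) z) * φ τ z
  modular : ∀ (A : SL(2, ℤ)) (τ : UpperHalfPlane) (z : CV),
    φ (A • τ) ((jfactor A τ)⁻¹ • z) =
      (jfactor A τ) ^ k *
        Complex.exp ((t : ℂ) * (Real.pi : ℂ) * Complex.I * slc A * pairC B z z / jfactor A τ) *
        φ τ z
  expansion : ∀ (τ : UpperHalfPlane) (z : CV),
    HasSum (fun p : ℕ × LV => f p.1 p.2 * fterm B p.1 p.2 τ z) (φ τ z)

/-- Conway invariant weak Jacobi forms. -/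
def IsWeakJacobiForm (B : Matrix (Fin 24) (Fin 24) ℤ) (k : ℤ) (t : ℕ)
    (φ : UpperHalfPlane → CV → ℂ) : Prop :=
  ∃ f, IsJacobiFormWith B k t φ f

/-- Conway invariant holomorphic Jacobi forms. -/
def IsHolJacobiForm (B : Matrix (Fin 24) (Fin 24) ℤ) (k : ℤ) (t : ℕ)
    (φ : UpperHalfPlane → CV → ℂ) : Prop :=
  ∃ f, IsJacobiFormWith B k t φ f ∧
    ∀ (n : ℕ) (ℓ : LV), 2 * (n : ℤ) * t - pairZ B ℓ ℓ < 0 → f n ℓ = 0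

/-- Modular forms of weight `k` on `SL₂(ℤ)`; the ring of all of them is `ℂ[E₄,E₆]`. -/
abbrev MForm (k : ℤ) := ModularForm (CongruenceSubgroup.Gamma 1) k

/-- The family `φ i` (of weights `w i`) freely generates the module of all forms satisfying
`P` over the ring `M_*(SL₂(ℤ)) = ℂ[E₄,E₆]` of modular forms on `SL₂(ℤ)`. -/
def FreelyGenerates (P : ℤ → (UpperHalfPlane → CV → ℂ) → Prop) {n : ℕ}
    (w : Fin n → ℤ) (φ : Fin n → UpperHalfPlane → CV → ℂ) : Prop :=
  (∀ i, P (w i) (φ i)) ∧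
  ∀ (k : ℤ) (ψ : UpperHalfPlane → CV → ℂ), P k ψ →
    ∃! g : (i : Fin n) → MForm (k - w i),
      ∀ (τ : UpperHalfPlane) (z : CV), ψ τ z = ∑ i, (g i) τ * φ i τ z

/-- The point `(aτ+b)/d` of the upper half-plane (for `a, d > 0`). -/
def heckePt (a d b : ℕ) (τ : UpperHalfPlane) : UpperHalfPlane :=
  if h : 0 < ((((a : ℂ) * (τ : ℂ) + (b : ℂ)) / (d : ℂ)).im) then
    ⟨((a : ℂ) * (τ : ℂ) + (b : ℂ)) / (d : ℂ), h⟩ else τ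

/-- The Hecke operator `T₋(m)` on Jacobi forms of weight `k`. -/
def heckeOp (k : ℤ) (m : ℕ) (φ : UpperHalfPlane → CV → ℂ) : UpperHalfPlane → CV → ℂ :=
  fun τ z => (m : ℂ)⁻¹ * ∑ d ∈ m.divisors, ∑ b ∈ Finset.range d,
    ((m / d : ℕ) : ℂ) ^ k * φ (heckePt (m / d) d b τ) (((m / d : ℕ) : ℂ) • z)

/-- The Jacobi theta function `Θ_Λ = A₁` of the lattice. -/
def thetaLeech (B : Matrix (Fin 24) (Fin 24) ℤ) : UpperHalfPlane → CV → ℂ := fun τ z =>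
  ∑' ℓ : LV, Complex.exp ((Real.pi : ℂ) * Complex.I * (pairZ B ℓ ℓ : ℂ) * (τ : ℂ)
    + 2 * (Real.pi : ℂ) * Complex.I * pairC B (liftC ℓ) z)

/-- `σ_k(n) = Σ_{d ∣ n} d^k`. -/
def sigmaNat (k n : ℕ) : ℕ := ∑ d ∈ n.divisors, d ^ k

/-- `A_t = σ₁₁(t)⁻¹ (A₁ | T₋(t))`, a holomorphic Jacobi form of weight 12 and index `t`. -/
def Aform (B : Matrix (Fin 24) (Fin 24) ℤ) (t : ℕ) : UpperHalfPlane → CV → ℂ := fun τ z =>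
  ((sigmaNat 11 t : ℂ))⁻¹ * heckeOp 12 t (thetaLeech B) τ z

/-- The quasimodular Eisenstein series `E₂`. -/
def E2 : UpperHalfPlane → ℂ := fun τ =>
  1 - 24 * ∑' n : ℕ, (sigmaNat 1 (n + 1) : ℂ) * eC (((n : ℂ) + 1) * (τ : ℂ))

/-- The discriminant cusp form `Δ(τ) = q ∏ (1-qⁿ)^24`. -/
def DeltaForm : UpperHalfPlane → ℂ := fun τ =>
  eC (τ : ℂ) * ∏' n : ℕ, (1 - eC (((n : ℂ) + 1) * (τ : ℂ))) ^ 24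

/-- `aτ`. -/
def scaleH (a : ℕ) (τ : UpperHalfPlane) : UpperHalfPlane := heckePt a 1 0 τ

/-- `(τ+j)/t`. -/
def sliceH (t j : ℕ) (τ : UpperHalfPlane) : UpperHalfPlane := heckePt 1 t j τ

/-- `f₂(τ) = (tE₂(tτ) - E₂(τ))/(t-1)`, a modular form of weight 2 on `Γ₀(t)`. -/
def f2w (t : ℕ) (τ : UpperHalfPlane) : ℂ := ((t : ℂ) * E2 (scaleH t τ) - E2 τ) / ((t : ℂ) - 1)

/-- `B_t`, a holomorphic Jacobi form of weight 14 and index `t` (for `t` prime). -/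
def Bform (B : Matrix (Fin 24) (Fin 24) ℤ) (t : ℕ) : UpperHalfPlane → CV → ℂ := fun τ z =>
  ((t : ℂ) ^ 12 / ((t : ℂ) ^ 12 - 1)) *
    (f2w t τ * thetaLeech B (scaleH t τ) ((t : ℂ) • z)
      - (t : ℂ) ^ (-13 : ℤ) *
        ∑ j ∈ Finset.range t, f2w t (sliceH t j τ) * thetaLeech B (sliceH t j τ) z)

/-- Fourier coefficients of `E₂`. -/
def e2coeff : ℕ → ℂ := fun m => if m = 0 then 1 else -24 * (sigmaNat 1 m : ℂ)

/-- Fourier coefficients of the image `H_k(φ)` of the modified heat operator applied to a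
Jacobi form of weight `k` and index `t` with Fourier coefficients `f`:
`H_k(φ) = 𝓗(φ) + ((12-k)/12)E₂φ` where `𝓗` multiplies `f(n,ℓ)` by `n - (ℓ,ℓ)/(2t)`. -/
def heatCoeff (B : Matrix (Fin 24) (Fin 24) ℤ) (k : ℤ) (t : ℕ) (f : ℕ → LV → ℂ) :
    ℕ → LV → ℂ := fun n ℓ =>
  ((n : ℂ) - (pairZ B ℓ ℓ : ℂ) / (2 * (t : ℂ))) * f n ℓ +
    ((12 - k : ℤ) : ℂ) / 12 * ∑ m ∈ Finset.range (n + 1), e2coeff m * f (n - m) ℓ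

/-- The function with Fourier coefficients `f`. -/
def fourierSeries (B : Matrix (Fin 24) (Fin 24) ℤ) (f : ℕ → LV → ℂ) :
    UpperHalfPlane → CV → ℂ := fun τ z =>
  ∑' p : ℕ × LV, f p.1 p.2 * fterm B p.1 p.2 τ z

/-- The family `Φ m = Φ_{12,m}` of Fourier–Jacobi coefficients of the Borcherds form `Φ₁₂`
at the Leech cusp:
`Δ(τ)·exp(−Σ_{m≥1}((Δ⁻¹A₁)|T₋(m))(τ,𝔷)e^{2πimω}) = Σ_{m≥0} Φ_{12,m}(τ,𝔷)e^{2πimω}`. -/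
def IsFJExpansionOfPhi12 (B : Matrix (Fin 24) (Fin 24) ℤ)
    (Φ : ℕ → UpperHalfPlane → CV → ℂ) : Prop :=
  ∀ (τ ω : UpperHalfPlane) (z : CV),
    HasSum (fun m : ℕ => Φ m τ z * eC ((m : ℂ) * (ω : ℂ)))
      (DeltaForm τ * Complex.exp
        (- ∑' m : ℕ, heckeOp 0 (m + 1) (fun σ w => thetaLeech B σ w / DeltaForm σ) τ z *
            eC (((m : ℂ) + 1) * (ω : ℂ))))

/-- `S_t`: the set of lattice vectors of minimal norm in their coset modulo `tΛ`. -/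
def minimalSet (B : Matrix (Fin 24) (Fin 24) ℤ) (t : ℕ) : Set LV :=
  {v | ∀ u : LV, (∃ w : LV, u = v + (t : ℤ) • w) → pairZ B v v ≤ pairZ B u u}

/-- `v` and `u` are conjugate modulo `tΛ` up to the Conway group. -/
def conjModT (B : Matrix (Fin 24) (Fin 24) ℤ) (t : ℕ) (v u : LV) : Prop :=
  ∃ σ ∈ ConwayGroup B, ∃ w : LV, v - σ.mulVec u = (t : ℤ) • w

/-- `s(t) = |(S_t/Co₀)/tΛ|`. -/
def sRank (B : Matrix (Fin 24) (Fin 24) ℤ) (t : ℕ) : ℕ :=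
  Nat.card (Quot (fun v u : minimalSet B t => conjModT B t v.1 u.1))

/-- `R` is a system of representatives for `(S_t/Co₀)/tΛ` (of minimal length). -/
def IsRepSystem (B : Matrix (Fin 24) (Fin 24) ℤ) (t : ℕ) (R : Finset LV) : Prop :=
  (↑R ⊆ minimalSet B t) ∧ ∀ v ∈ minimalSet B t, ∃! r, r ∈ R ∧ conjModT B t v r

/-- The Conway orbit of a lattice vector. -/
def orbitOf (B : Matrix (Fin 24) (Fin 24) ℤ) (v : LV) : Set LV :=
  {u | ∃ σ ∈ ConwayGroup B, u = σ.mulVec v}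

/-- `O` is a Conway orbit of Leech vectors of type `x` (i.e. norm `2x`) with `c` elements. -/
def OrbitData (B : Matrix (Fin 24) (Fin 24) ℤ) (O : Set LV) (x c : ℕ) : Prop :=
  (∃ v : LV, O = orbitOf B v) ∧ (∀ v ∈ O, pairZ B v v = 2 * (x : ℤ)) ∧ Nat.card O = c

/-- `W` is a `d`-dimensional subspace of the space of functions `ℍ × (Λ⊗ℂ) → ℂ`. -/
def SpanDimIs (W : (UpperHalfPlane → CV → ℂ) → Prop) (d : ℕ) : Prop :=
  ∃ φ : Fin d → UpperHalfPlane → CV → ℂ, (∀ i, W (φ i)) ∧ LinearIndependent ℂ φ ∧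
    ∀ ψ, W ψ → ∃ c : Fin d → ℂ, ψ = ∑ i, c i • φ i

section L0
variable {B : Matrix (Fin 24) (Fin 24) ℤ}

lemma pz_add_left (x y z : LV) : pairZ B (x + y) z = pairZ B x z + pairZ B y z := by
  simp [pairZ, add_dotProduct]
lemma pz_add_right (x y z : LV) : pairZ B z (x + y) = pairZ B z x + pairZ B z y := by
  simp [pairZ, mulVec_add]
lemma pz_sub_left (x y z : LV) : pairZ B (x - y) z = pairZ B x z - pairZ B y z := by
  simp [pairZ, sub_dotProduct]
lemma pz_sub_right (x y z : LV) : pairZ B z (x - y) = pairZ B z x - pairZ B z y := by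
  simp [pairZ, mulVec_sub]
lemma pz_neg_left (x z : LV) : pairZ B (-x) z = - pairZ B x z := by
  simp [pairZ]
lemma pz_neg_right (x z : LV) : pairZ B z (-x) = - pairZ B z x := by
  simp [pairZ, mulVec_neg]
lemma pz_smul_left (a : ℤ) (x z : LV) : pairZ B (a • x) z = a * pairZ B x z := by
  rw [pairZ, smul_dotProduct, smul_eq_mul, pairZ]
lemma pz_smul_right (a : ℤ) (x z : LV) : pairZ B z (a • x) = a * pairZ B z x := by
  rw [pairZ, mulVec_smul, dotProduct_smul, smul_eq_mul, pairZ]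
lemma pz_zero_left (z : LV) : pairZ B 0 z = 0 := by simp [pairZ]
lemma pz_zero_right (z : LV) : pairZ B z 0 = 0 := by simp [pairZ]
lemma pz_sum_left {ι : Type*} (s : Finset ι) (f : ι → LV) (z : LV) :
    pairZ B (∑ i ∈ s, f i) z = ∑ i ∈ s, pairZ B (f i) z := by
  classical
  induction s using Finset.induction_on with
  | empty => simp [pz_zero_left]
  | insert a s ha ih => simp [Finset.sum_insert ha, pz_add_left, ih]
lemma pz_sum_right {ι : Type*} (s : Finset ι) (f : ι → LV) (z : LV) :
    pairZ B z (∑ i ∈ s, f i) = ∑ i ∈ s, pairZ B z (f i) := by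
  classical
  induction s using Finset.induction_on with
  | empty => simp [pz_zero_right]
  | insert a s ha ih => simp [Finset.sum_insert ha, pz_add_right, ih]
lemma pz_comm (hB : IsLeech B) (x y : LV) : pairZ B x y = pairZ B y x := by
  unfold pairZ
  rw [dotProduct_mulVec, ← mulVec_transpose, hB.1.eq, dotProduct_comm]
lemma pz_nonneg (hB : IsLeech B) (x : LV) : 0 ≤ pairZ B x x := by
  by_cases h : x = 0
  · subst h; simp [pz_zero_left]
  · exact (hB.2.2.1 x h).le
lemma pz_eq_zero (hB : IsLeech B) {x : LV} (h : pairZ B x x = 0) : x = 0 := by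
  by_contra hx
  exact (hB.2.2.1 x hx).ne' h
lemma pz_even (hB : IsLeech B) (x : LV) : Even (pairZ B x x) := hB.2.2.2.1 x
lemma pz_ge4 (hB : IsLeech B) {x : LV} (h : x ≠ 0) : 4 ≤ pairZ B x x := by
  have h1 := hB.2.2.1 x h
  obtain ⟨r, hr⟩ := pz_even hB x
  have h3 := hB.2.2.2.2 x
  omega

lemma pz_dual (hB : IsLeech B) (h : LV →ₗ[ℤ] ℤ) : ∃ u : LV, ∀ x, pairZ B u x = h x := by
  have hu : IsUnit B.det := by rw [hB.2.1]; exact isUnit_one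
  refine ⟨(fun i => h (Pi.single i 1)) ᵥ* B⁻¹, fun x => ?_⟩
  rw [pairZ, dotProduct_mulVec, vecMul_vecMul, Matrix.nonsing_inv_mul _ hu, vecMul_one]
  conv_rhs => rw [pi_eq_sum_univ' x, map_sum]
  refine Finset.sum_congr rfl fun i _ => ?_
  rw [map_smul, smul_eq_mul, mul_comm]

lemma pz_ext (hB : IsLeech B) {x y : LV} (h : ∀ z, pairZ B x z = pairZ B y z) : x = y := by
  have : x - y = 0 := pz_eq_zero hB (by rw [pz_sub_left, h]; ring)
  exact sub_eq_zero.1 this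

lemma pz_isom (hB : IsLeech B) (F : LV →ₗ[ℤ] LV) (h : ∀ x y, pairZ B (F x) (F y) = pairZ B x y) :
    LinearMap.toMatrix' F ∈ ConwayGroup B ∧ ∀ x, (LinearMap.toMatrix' F).mulVec x = F x := by
  have h2 : ∀ x, (LinearMap.toMatrix' F).mulVec x = F x := fun x => by
    rw [← Matrix.toLin'_apply, Matrix.toLin'_toMatrix']
  have h3 : (LinearMap.toMatrix' F)ᵀ * B * (LinearMap.toMatrix' F) = B := by
    ext i j
    have := h (Pi.single i 1) (Pi.single j 1)
    rw [← h2, ← h2] at this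
    unfold pairZ at this
    rw [← vecMul_transpose, ← dotProduct_mulVec, mulVec_mulVec, mulVec_mulVec] at this
    simpa [Matrix.mul_assoc] using this
  refine ⟨⟨?_, h3⟩, h2⟩
  have := congrArg Matrix.det h3
  rw [det_mul, det_mul, det_transpose, hB.2.1] at this
  exact IsUnit.of_mul_eq_one (LinearMap.toMatrix' F).det (by linarith)

/-- equivalence under the Conway group -/
def CoEq (B : Matrix (Fin 24) (Fin 24) ℤ) (x y : LV) : Prop :=
  ∃ F : LV →ₗ[ℤ] LV, (∀ x y, pairZ B (F x) (F y) = pairZ B x y) ∧ F x = y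

lemma CoEq.refl (x : LV) : CoEq B x x := ⟨LinearMap.id, by simp⟩
lemma CoEq.trans {x y z : LV} (h : CoEq B x y) (h' : CoEq B y z) : CoEq B x z := by
  obtain ⟨F, hF, rfl⟩ := h
  obtain ⟨G, hG, rfl⟩ := h'
  exact ⟨G ∘ₗ F, by simp [hF, hG]⟩
lemma CoEq.symm (hB : IsLeech B) {x y : LV} (h : CoEq B x y) : CoEq B y x := by
  obtain ⟨F, hF, rfl⟩ := h
  obtain ⟨⟨h1, h2⟩, h3⟩ := pz_isom hB F hF
  set M := LinearMap.toMatrix' F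
  have hM : ∀ x, M⁻¹.mulVec (F x) = x := fun x => by
    rw [← h3, mulVec_mulVec, Matrix.nonsing_inv_mul _ h1, one_mulVec]
  have hM' : ∀ x, F (M⁻¹.mulVec x) = x := fun x => by
    rw [← h3, mulVec_mulVec, Matrix.mul_nonsing_inv _ h1, one_mulVec]
  exact ⟨Matrix.toLin' M⁻¹, fun x y => by
    rw [← hF]; simp only [Matrix.toLin'_apply, hM'], by simp [hM]⟩
lemma CoEq.neg (x : LV) : CoEq B x (-x) :=
  ⟨-LinearMap.id, by simp [pz_neg_left, pz_neg_right]⟩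
lemma CoEq.norm {x y : LV} (h : CoEq B x y) : pairZ B y y = pairZ B x x := by
  obtain ⟨F, hF, rfl⟩ := h
  exact hF _ _

/-- orthogonal families have at most 24 members -/
lemma orth_card_le (hB : IsLeech B) {ι : Type*} [Fintype ι] (w : ι → LV)
    (h0 : ∀ i, w i ≠ 0) (ho : ∀ i j, i ≠ j → pairZ B (w i) (w j) = 0) :
    Fintype.card ι ≤ 24 := by
  classical
  have hli : LinearIndependent ℤ w := by
    rw [Fintype.linearIndependent_iff]
    intro g hg i
    have h1 : pairZ B (∑ i, g i • w i) (w i) = 0 := by rw [hg, pz_zero_left]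
    rw [pz_sum_left, Finset.sum_eq_single i] at h1
    · rw [pz_smul_left] at h1
      rcases mul_eq_zero.1 h1 with h | h
      · exact h
      · exact absurd (pz_eq_zero hB h) (h0 i)
    · intro j _ hj
      rw [pz_smul_left, ho j i hj, mul_zero]
    · simp
  simpa using hli.fintype_card_le_finrank

lemma orth_complete (hB : IsLeech B) (w : Fin 24 → LV)
    (h0 : ∀ i, w i ≠ 0) (ho : ∀ i j, i ≠ j → pairZ B (w i) (w j) = 0) (y : LV)
    (hy : ∀ i, pairZ B y (w i) = 0) : y = 0 := by
  by_contra hne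
  have := orth_card_le hB (ι := Option (Fin 24)) (fun o => o.elim y w)
    (by rintro (_ | i); exacts [hne, h0 i])
    (by
      rintro (_ | i) (_ | j) hij
      · exact absurd rfl hij
      · exact hy j
      · rw [pz_comm hB]; exact hy i
      · exact ho i j (fun h => hij (by rw [h])))
  simp at this

lemma orth_expand (hB : IsLeech B) (w : Fin 24 → LV) (d : ℤ)
    (h0 : d ≠ 0) (hd : ∀ i, pairZ B (w i) (w i) = d)
    (ho : ∀ i j, i ≠ j → pairZ B (w i) (w j) = 0) (x : LV) :
    d • x = ∑ i, pairZ B x (w i) • w i := by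
  rw [← sub_eq_zero]
  refine orth_complete hB w (fun i h => h0 ?_) ho _ (fun i => ?_)
  · rw [← hd i, h, pz_zero_left]
  · rw [pz_sub_left, pz_sum_left, Finset.sum_eq_single i]
    · rw [pz_smul_left, pz_smul_left, hd]; ring
    · intro j _ hj
      rw [pz_smul_left, ho j i hj, mul_zero]
    · simp

lemma orth_parseval (hB : IsLeech B) (w : Fin 24 → LV) (d : ℤ)
    (h0 : d ≠ 0) (hd : ∀ i, pairZ B (w i) (w i) = d)
    (ho : ∀ i j, i ≠ j → pairZ B (w i) (w j) = 0) (x y : LV) :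
    d * pairZ B x y = ∑ i, pairZ B x (w i) * pairZ B y (w i) := by
  rw [← pz_smul_left, orth_expand hB w d h0 hd ho x, pz_sum_left]
  exact Finset.sum_congr rfl fun i _ => by rw [pz_smul_left, pz_comm hB y]

end L0

section L2
variable {B : Matrix (Fin 24) (Fin 24) ℤ}

lemma lin_div (G : LV →ₗ[ℤ] LV) (c : ℤ) (hc : c ≠ 0) (h : ∀ x, ∃ u : LV, G x = c • u) :
    ∃ U : LV →ₗ[ℤ] LV, ∀ x, G x = c • U x := by
  choose u hu using h
  have inj : ∀ a b : LV, c • a = c • b → a = b := fun a b hab => smul_right_injective _ hc hab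
  refine ⟨{ toFun := u, map_add' := fun x y => inj _ _ ?_, map_smul' := fun a x => inj _ _ ?_ }, hu⟩
  · rw [← hu, map_add, hu, hu, smul_add]
  · rw [← hu, map_smul, hu, smul_comm]; rfl

lemma pz_div (hB : IsLeech B) (c : ℤ) (hc : c ≠ 0) (y : LV) (h : ∀ x, c ∣ pairZ B y x) :
    ∃ u : LV, y = c • u := by
  choose g hg using h
  obtain ⟨u, hu⟩ := pz_dual hB
    { toFun := g
      map_add' := fun a b => by
        have : c * g (a + b) = c * (g a + g b) := by
          rw [← hg, mul_add, ← hg, ← hg, pz_add_right]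
        exact mul_left_cancel₀ hc this
      map_smul' := fun a b => by
        have : c * g (a • b) = c * (a * g b) := by
          rw [← hg, mul_left_comm, ← hg, pz_smul_right]
        exact mul_left_cancel₀ hc this }
  refine ⟨u, pz_ext hB fun z => ?_⟩
  rw [pz_smul_left, hu, hg]; rfl

def IsFrame (B : Matrix (Fin 24) (Fin 24) ℤ) (v : Fin 24 → LV) : Prop :=
  (∀ i, pairZ B (v i) (v i) = 8) ∧ (∀ i j, i ≠ j → pairZ B (v i) (v j) = 0) ∧
    ∀ i j, ∃ w : LV, v i = v j + (2:ℤ) • w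

lemma frame_parseval (hB : IsLeech B) {v : Fin 24 → LV} (hv : IsFrame B v) (x y : LV) :
    8 * pairZ B x y = ∑ i, pairZ B x (v i) * pairZ B y (v i) :=
  orth_parseval hB v 8 (by norm_num) hv.1 hv.2.1 x y

lemma frame_ext (hB : IsLeech B) {v : Fin 24 → LV} (hv : IsFrame B v) {x y : LV}
    (h : ∀ i, pairZ B x (v i) = pairZ B y (v i)) : x = y := by
  refine pz_ext hB fun z => ?_
  have h1 := frame_parseval hB hv x z
  have h2 := frame_parseval hB hv y z
  simp only [h] at h1
  linarith

lemma frame_parity {v : Fin 24 → LV} (hv : IsFrame B v) (x : LV) (i j : Fin 24) :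
    pairZ B x (v i) % 2 = pairZ B x (v j) % 2 := by
  obtain ⟨w, hw⟩ := hv.2.2 i j
  rw [hw, pz_add_right, pz_smul_right]; omega

lemma frame_sign (v : Fin 24 → LV) (hv : IsFrame B v) (e : Fin 24 → ℤ)
    (he : ∀ i, e i = 1 ∨ e i = -1) : IsFrame B (fun i => e i • v i) := by
  refine ⟨fun i => ?_, fun i j hij => ?_, fun i j => ?_⟩
  · rw [pz_smul_left, pz_smul_right, hv.1]
    rcases he i with h | h <;> rw [h] <;> norm_num
  · rw [pz_smul_left, pz_smul_right, hv.2.1 i j hij]; ring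
  · obtain ⟨w, hw⟩ := hv.2.2 i j
    rcases he i with h | h <;> rcases he j with h' | h' <;> simp only [h, h', hw]
    · exact ⟨w, by module⟩
    · exact ⟨w + v j, by module⟩
    · exact ⟨-w - v j, by module⟩
    · exact ⟨-w, by module⟩

/-- two vectors congruent mod 2 -/
lemma cong_bound (hB : IsLeech B) {x y w : LV} (h : x = y + (2:ℤ) • w) (h1 : x ≠ y) (h2 : x ≠ -y) :
    16 ≤ pairZ B x x + pairZ B y y - 2 * |pairZ B x y| := by
  have hw : w ≠ 0 := by rintro rfl; simp at h; exact h1 h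
  have hw' : w + y ≠ 0 := by
    intro h0
    apply h2
    have : w = -y := eq_neg_of_add_eq_zero_left h0
    rw [h, this]; module
  have e1 := pz_ge4 hB hw
  have e2 := pz_ge4 hB hw'
  have c := pz_comm hB y w
  subst h
  simp only [pz_add_left, pz_add_right, pz_smul_left, pz_smul_right] at *
  rcases abs_cases (pairZ B y y + 2 * pairZ B w y) with ⟨h, _⟩ | ⟨h, _⟩ <;> rw [h] <;> linarith

lemma frame_complete (hB : IsLeech B) {v : Fin 24 → LV} (hv : IsFrame B v) {x w : LV} {i : Fin 24}
    (hx : pairZ B x x = 8) (h : x = v i + (2:ℤ) • w) : ∃ j, x = v j ∨ x = - v j := by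
  by_contra hne
  push Not at hne
  have : x = 0 := orth_complete hB v
    (fun j h0 => by have := hv.1 j; rw [h0, pz_zero_left] at this; norm_num at this) hv.2.1 x
    (fun j => by
      obtain ⟨w', hw'⟩ := hv.2.2 i j
      have := cong_bound hB (x := x) (y := v j) (w := w' + w) (by rw [h, hw']; module)
        (hne j).1 (hne j).2
      rw [hx, hv.1] at this
      exact abs_eq_zero.1 (le_antisymm (by linarith) (abs_nonneg _)))
  rw [this, pz_zero_left] at hx
  norm_num at hx

def IsCode (B : Matrix (Fin 24) (Fin 24) ℤ) (v : Fin 24 → LV) (S : Finset (Fin 24)) : Prop :=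
  ∃ (s : LV) (t : Fin 24 → ℤ), ∀ i, pairZ B s (v i) = 2 * t i ∧ (i ∈ S ↔ Odd (t i))

lemma dvd4_of (n a : ℤ) (h : 2 * n = 4 * a) : Even n := ⟨a, by linarith⟩

lemma code_even (hB : IsLeech B) {v : Fin 24 → LV} (hv : IsFrame B v) {S : Finset (Fin 24)}
    (hS : IsCode B v S) (x : LV) (al : Fin 24 → ℤ) (ha : ∀ i, pairZ B x (v i) = 2 * al i) :
    Even (∑ i ∈ S, al i) := by
  obtain ⟨s, t, hst⟩ := hS
  have h := frame_parseval hB hv x s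
  simp only [ha, (hst _).1] at h
  have h1 : ∑ i, al i * t i = 2 * pairZ B x s := by
    have : ∑ i, 2 * al i * (2 * t i) = 4 * ∑ i, al i * t i := by
      rw [Finset.mul_sum]; exact Finset.sum_congr rfl fun i _ => by ring
    linarith
  have h2 : Even (∑ i, al i * t i - ∑ i ∈ S, al i) := by
    rw [← Finset.sum_filter_add_sum_filter_not Finset.univ (· ∈ S)]
    rw [Finset.filter_mem_eq_inter, Finset.univ_inter, add_sub_right_comm, ← Finset.sum_sub_distrib]
    refine Even.add (Finset.even_sum _ fun i hi => ?_) (Finset.even_sum _ fun i hi => ?_)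
    · have := (hst i).2.1 hi
      obtain ⟨r, hr⟩ := this
      exact ⟨al i * r, by rw [hr]; ring⟩
    · have := (hst i).2.not.1 (Finset.mem_filter.1 hi).2
      exact (Int.not_odd_iff_even.1 this).mul_left _
  rw [h1] at h2
  have := (Int.even_sub.1 h2).1 ⟨pairZ B x s, by ring⟩
  exact this

lemma code_card (hB : IsLeech B) {v : Fin 24 → LV} (hv : IsFrame B v) {S : Finset (Fin 24)}
    (hS : IsCode B v S) : (4:ℤ) ∣ S.card := by
  obtain ⟨s, t, hst⟩ := hS
  have h := frame_parseval hB hv s s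
  simp only [(hst _).1] at h
  obtain ⟨r, hr⟩ := pz_even hB s
  have h1 : ∑ i, t i * t i = 4 * r := by
    have : ∑ i, 2 * t i * (2 * t i) = 4 * ∑ i, t i * t i := by
      rw [Finset.mul_sum]; exact Finset.sum_congr rfl fun i _ => by ring
    linarith
  have h2 : (4:ℤ) ∣ (∑ i, t i * t i - ∑ i ∈ S, 1) := by
    rw [← Finset.sum_filter_add_sum_filter_not Finset.univ (· ∈ S)]
    rw [Finset.filter_mem_eq_inter, Finset.univ_inter, add_sub_right_comm, ← Finset.sum_sub_distrib]
    refine dvd_add (Finset.dvd_sum fun i hi => ?_) (Finset.dvd_sum fun i hi => ?_)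
    · have := (hst i).2.1 hi
      obtain ⟨r, hr⟩ := this
      exact ⟨r * r + r, by rw [hr]; ring⟩
    · have := (hst i).2.not.1 (Finset.mem_filter.1 hi).2
      obtain ⟨r, hr⟩ := Int.not_odd_iff_even.1 this
      exact ⟨r * r, by rw [hr]; ring⟩
  rw [h1] at h2
  simp at h2
  omega

lemma code_dvd (hB : IsLeech B) {v : Fin 24 → LV} (hv : IsFrame B v) {S : Finset (Fin 24)}
    (hS : IsCode B v S) (x y : LV) : 4 ∣ ∑ i ∈ S, pairZ B x (v i) * pairZ B y (v i) := by
  -- one even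
  have key : ∀ x y : LV, pairZ B x (v 0) % 2 = 0 →
      4 ∣ ∑ i ∈ S, pairZ B x (v i) * pairZ B y (v i) := by
    intro x y hx
    have hx' : ∀ i, pairZ B x (v i) = 2 * (pairZ B x (v i) / 2) := fun i => by
      have := frame_parity hv x i 0
      omega
    have he := code_even hB hv hS x (fun i => pairZ B x (v i) / 2) hx'
    generalize hal : (fun i => pairZ B x (v i) / 2) = al at *
    have hal' : ∀ i, pairZ B x (v i) = 2 * al i := fun i => by rw [← hal]; exact hx' i
    simp only [hal']
    have e : ∑ i ∈ S, 2 * al i * pairZ B y (v i) = 2 * ∑ i ∈ S, al i * pairZ B y (v i) := by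
      rw [Finset.mul_sum]; exact Finset.sum_congr rfl fun i _ => by ring
    rw [e]
    suffices Even (∑ i ∈ S, al i * pairZ B y (v i)) by
      obtain ⟨r, hr⟩ := this
      exact ⟨r, by rw [hr]; ring⟩
    rcases Int.even_or_odd (pairZ B y (v 0)) with h0 | h0
    · refine Finset.even_sum _ fun i _ => Even.mul_left ?_ _
      have := frame_parity hv y i 0
      rw [Int.even_iff] at *; omega
    · have h3 : Even (∑ i ∈ S, al i * pairZ B y (v i) - ∑ i ∈ S, al i) := by
        rw [← Finset.sum_sub_distrib]
        refine Finset.even_sum _ fun i _ => ?_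
        have := frame_parity hv y i 0
        have h4 : Even (pairZ B y (v i) - 1) := by
          rw [Int.even_iff]; rw [Int.odd_iff] at h0; omega
        have h5 := h4.mul_left (al i)
        rwa [mul_sub, mul_one] at h5
      exact (Int.even_sub.1 h3).2 he
  by_cases h1 : pairZ B x (v 0) % 2 = 0
  · exact key x y h1
  by_cases h2 : pairZ B y (v 0) % 2 = 0
  · simpa only [mul_comm] using key y x h2
  have h3 := key (x - y) y (by rw [pz_sub_left]; omega)
  have h4 : (4:ℤ) ∣ ∑ i ∈ S, pairZ B y (v i) * pairZ B y (v i) := by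
    have : (4:ℤ) ∣ (∑ i ∈ S, pairZ B y (v i) * pairZ B y (v i) - ∑ i ∈ S, 1) := by
      rw [← Finset.sum_sub_distrib]
      refine Finset.dvd_sum fun i hi => ?_
      have := frame_parity hv y i 0
      obtain ⟨r, hr⟩ : Odd (pairZ B y (v i)) := by rw [Int.odd_iff]; omega
      exact ⟨r * r + r, by rw [hr]; ring⟩
    have h5 := code_card hB hv hS
    simp at this
    omega
  have h6 : ∑ i ∈ S, pairZ B x (v i) * pairZ B y (v i) =
      ∑ i ∈ S, pairZ B (x - y) (v i) * pairZ B y (v i) +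
      ∑ i ∈ S, pairZ B y (v i) * pairZ B y (v i) := by
    rw [← Finset.sum_add_distrib]
    exact Finset.sum_congr rfl fun i _ => by rw [pz_sub_left]; ring
  rw [h6]
  exact dvd_add h3 h4

lemma sign_change (hB : IsLeech B) {v : Fin 24 → LV} (hv : IsFrame B v) {S : Finset (Fin 24)}
    (hS : IsCode B v S) : ∃ F : LV →ₗ[ℤ] LV, (∀ x y, pairZ B (F x) (F y) = pairZ B x y) ∧
      ∀ x i, pairZ B (F x) (v i) = if i ∈ S then - pairZ B x (v i) else pairZ B x (v i) := by
  let G : LV →ₗ[ℤ] LV :=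
    { toFun := fun x => ∑ i ∈ S, pairZ B x (v i) • v i
      map_add' := fun x y => by
        rw [← Finset.sum_add_distrib]
        exact Finset.sum_congr rfl fun i _ => by rw [pz_add_left, add_smul]
      map_smul' := fun a x => by
        rw [RingHom.id_apply, Finset.smul_sum]
        exact Finset.sum_congr rfl fun i _ => by rw [pz_smul_left, mul_smul] }
  obtain ⟨U, hU⟩ := lin_div G 4 (by norm_num) (fun x => pz_div hB 4 (by norm_num) _ fun y => by
    show 4 ∣ pairZ B (∑ i ∈ S, pairZ B x (v i) • v i) y
    rw [pz_sum_left]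
    have := code_dvd hB hv hS x y
    simpa only [pz_smul_left, pz_comm hB y] using this)
  have hU' : ∀ x i, 4 * pairZ B (U x) (v i) = if i ∈ S then 8 * pairZ B x (v i) else 0 := by
    intro x i
    rw [← pz_smul_left, ← hU]
    show pairZ B (∑ i ∈ S, pairZ B x (v i) • v i) (v i) = _
    rw [pz_sum_left]
    split_ifs with h
    · rw [Finset.sum_eq_single i]
      · rw [pz_smul_left, hv.1]; ring
      · intro j _ hj; rw [pz_smul_left, hv.2.1 j i hj]; ring
      · exact fun h' => absurd h h'
    · refine Finset.sum_eq_zero fun j hj => ?_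
      rw [pz_smul_left, hv.2.1 j i (fun e => h (e ▸ hj))]; ring
  have hF : ∀ x i, pairZ B ((LinearMap.id - U : LV →ₗ[ℤ] LV) x) (v i) =
      if i ∈ S then - pairZ B x (v i) else pairZ B x (v i) := by
    intro x i
    have := hU' x i
    rw [LinearMap.sub_apply, pz_sub_left, LinearMap.id_apply]
    split_ifs at * <;> linarith
  refine ⟨LinearMap.id - U, fun x y => ?_, hF⟩
  have h1 := frame_parseval hB hv ((LinearMap.id - U : LV →ₗ[ℤ] LV) x) ((LinearMap.id - U : LV →ₗ[ℤ] LV) y)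
  have h2 := frame_parseval hB hv x y
  have : ∑ i, pairZ B ((LinearMap.id - U : LV →ₗ[ℤ] LV) x) (v i) * pairZ B ((LinearMap.id - U : LV →ₗ[ℤ] LV) y) (v i) =
      ∑ i, pairZ B x (v i) * pairZ B y (v i) := by
    refine Finset.sum_congr rfl fun i _ => ?_
    rw [hF, hF]
    split_ifs <;> ring
  linarith

end L2

section L3
variable {B : Matrix (Fin 24) (Fin 24) ℤ}

/-- no short combination -/
lemma no_short (hB : IsLeech B) {v : Fin 24 → LV} (hv : IsFrame B v) (p : Fin 4 → Fin 24)
    (hp : Function.Injective p) (m : Fin 4 → ℤ) (hm : ∀ j, m j = 0 ∨ m j = 1 ∨ m j = -1)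
    (hm0 : m 0 ≠ 0) (hd : ∀ x, 4 ∣ ∑ j, m j * pairZ B x (v (p j))) : False := by
  obtain ⟨u, hu⟩ := pz_div hB 4 (by norm_num) (∑ j, m j • v (p j)) (fun x => by
    rw [pz_sum_left]
    simpa only [pz_smul_left, pz_comm hB x] using hd x)
  have h1 : ∀ i, pairZ B (∑ j, m j • v (p j)) (v (p i)) = 8 * m i := fun i => by
    rw [pz_sum_left, Finset.sum_eq_single i]
    · rw [pz_smul_left, hv.1]; ring
    · intro j _ hj; rw [pz_smul_left, hv.2.1 _ _ (hp.ne hj)]; ring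
    · simp
  have h2 : 16 * pairZ B u u = ∑ i, 8 * (m i * m i) := by
    have : 16 * pairZ B u u = pairZ B ((4:ℤ) • u) ((4:ℤ) • u) := by
      rw [pz_smul_left, pz_smul_right]; ring
    rw [this, ← hu, pz_sum_right]
    exact Finset.sum_congr rfl fun i _ => by rw [pz_smul_right, h1]; ring
  have h3 : ∀ i, m i * m i ≤ 1 := fun i => by rcases hm i with h | h | h <;> rw [h] <;> norm_num
  have h4 : 0 < m 0 * m 0 := mul_self_pos.2 hm0
  have h5 : ∀ i, 0 ≤ m i * m i := fun i => mul_self_nonneg _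
  rw [Fin.sum_univ_four] at h2
  have hu0 : u ≠ 0 := by
    rintro rfl
    rw [pz_zero_left] at h2
    linarith [h5 1, h5 2, h5 3]
  have := pz_ge4 hB hu0
  linarith [h3 0, h3 1, h3 2, h3 3]

lemma pattern (hB : IsLeech B) {v : Fin 24 → LV} (hv : IsFrame B v) (p : Fin 4 → Fin 24)
    (hp : Function.Injective p) : ∃ S, IsCode B v S ∧ ∀ j, p j ∈ S ↔ j = 0 := by
  classical
  let I : Submodule (ZMod 2) (Fin 4 → ZMod 2) :=
    { carrier := {c | ∃ (s : LV) (b : Fin 24 → ℤ), (∀ i, pairZ B s (v i) = 2 * b i) ∧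
        ∀ j, c j = ((b (p j) : ℤ) : ZMod 2)}
      add_mem' := by
        rintro c c' ⟨s, b, h1, h2⟩ ⟨s', b', h1', h2'⟩
        refine ⟨s + s', b + b', fun i => ?_, fun j => ?_⟩
        · rw [pz_add_left, h1, h1', Pi.add_apply]; ring
        · rw [Pi.add_apply, h2, h2', Pi.add_apply]; push_cast; rfl
      zero_mem' := ⟨0, 0, fun i => by simp [pz_zero_left], fun j => by simp⟩
      smul_mem' := by
        rintro a c ⟨s, b, h1, h2⟩
        refine ⟨(a.val : ℤ) • s, (a.val : ℤ) • b, fun i => ?_, fun j => ?_⟩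
        · rw [pz_smul_left, h1, Pi.smul_apply, smul_eq_mul]; ring
        · rw [Pi.smul_apply, h2, Pi.smul_apply, smul_eq_mul, smul_eq_mul]; push_cast
          rw [ZMod.natCast_val, ZMod.cast_id] }
  by_cases hI : Pi.single 0 1 ∈ I
  · obtain ⟨s, b, h1, h2⟩ := hI
    refine ⟨Finset.univ.filter fun i => Odd (b i), ⟨s, b, fun i => ⟨h1 i, by simp⟩⟩, fun j => ?_⟩
    have h3 := h2 j
    rw [Finset.mem_filter]
    by_cases hj : j = 0
    · subst hj
      simp at h3
      have : ((b (p 0) : ℤ) : ZMod 2) = 1 := h3.symm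
      simpa using (ZMod.intCast_eq_one_iff_odd).1 this
    · rw [Pi.single_eq_of_ne hj] at h3
      simpa [hj] using (ZMod.intCast_eq_zero_iff_even).1 h3.symm
  · exfalso
    obtain ⟨g, hg0, hg⟩ := Submodule.exists_le_ker_of_notMem hI
    let l : Fin 4 → ℤ := fun j => ((g (Pi.single j 1)).val : ℤ)
    have hl : ∀ j, l j = 0 ∨ l j = 1 := fun j => by
      have : (g (Pi.single j 1)).val < 2 := ZMod.val_lt _
      simp only [l]; omega
    have hl0 : l 0 = 1 := by
      rcases hl 0 with h | h
      · exfalso; apply hg0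
        simp only [l, Nat.cast_eq_zero] at h
        exact (ZMod.val_eq_zero _).1 h
      · exact h
    have hE : ∀ (s : LV) (b : Fin 24 → ℤ), (∀ i, pairZ B s (v i) = 2 * b i) →
        Even (∑ j, l j * b (p j)) := by
      intro s b hb
      have h1 : (fun j => ((b (p j) : ℤ) : ZMod 2)) ∈ I := ⟨s, b, hb, fun j => rfl⟩
      have h2 : g (fun j => ((b (p j) : ℤ) : ZMod 2)) = 0 := hg h1
      rw [← ZMod.intCast_eq_zero_iff_even]
      push_cast
      rw [← h2, pi_eq_sum_univ' (fun j => ((b (p j) : ℤ) : ZMod 2)), map_sum]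
      refine Finset.sum_congr rfl fun j _ => ?_
      rw [map_smul, smul_eq_mul, mul_comm]
      congr 1
      simp only [l]
      push_cast
      rw [ZMod.natCast_val, ZMod.cast_id]
    have hEv : ∀ x, pairZ B x (v 0) % 2 = 0 → 4 ∣ ∑ j, l j * pairZ B x (v (p j)) := by
      intro x hx
      have hx' : ∀ i, pairZ B x (v i) = 2 * (pairZ B x (v i) / 2) := fun i => by
        have := frame_parity hv x i 0
        omega
      obtain ⟨r, hr⟩ := hE x _ hx'
      refine ⟨r, ?_⟩
      have : ∑ j, l j * pairZ B x (v (p j)) = 2 * ∑ j, l j * (pairZ B x (v (p j)) / 2) := by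
        rw [Finset.mul_sum]
        refine Finset.sum_congr rfl fun j _ => ?_
        conv_lhs => rw [hx']
        ring
      rw [this, hr]; ring
    by_cases hall : ∀ x, 4 ∣ ∑ j, l j * pairZ B x (v (p j))
    · exact no_short hB hv p hp l (fun j => by rcases hl j with h | h <;> simp [h])
        (by rw [hl0]; norm_num) hall
    · push Not at hall
      obtain ⟨x0, hx0⟩ := hall
      have hodd : pairZ B x0 (v 0) % 2 = 1 := by
        by_contra h
        exact hx0 (hEv x0 (by omega))
      have hev : Even (∑ j, l j * pairZ B x0 (v (p j))) := hE ((2:ℤ) • x0) _ (fun i => by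
        rw [pz_smul_left])
      let m : Fin 4 → ℤ := fun j => if j = 0 then -1 else l j
      have hm : ∀ x, ∑ j, m j * pairZ B x (v (p j)) =
          ∑ j, l j * pairZ B x (v (p j)) - 2 * pairZ B x (v (p 0)) := by
        intro x
        simp [m, Fin.sum_univ_four, hl0]; ring
      refine no_short hB hv p hp m (fun j => ?_) (by simp [m]) (fun x => ?_)
      · by_cases hj : j = 0
        · simp [m, hj]
        · rcases hl j with h | h <;> simp [m, hj, h]
      · rw [hm]
        have h1 := frame_parity hv x (p 0) 0
        by_cases hx : pairZ B x (v 0) % 2 = 0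
        · have := hEv x hx
          omega
        · have h2 := hEv (x - x0) (by rw [pz_sub_left]; omega)
          have h3 : ∑ j, l j * pairZ B (x - x0) (v (p j)) = ∑ j, l j * pairZ B x (v (p j))
              - ∑ j, l j * pairZ B x0 (v (p j)) := by
            rw [← Finset.sum_sub_distrib]
            exact Finset.sum_congr rfl fun j _ => by rw [pz_sub_left]; ring
          rw [h3] at h2
          rw [Int.even_iff] at hev
          omega

end L3

section L4
variable {B : Matrix (Fin 24) (Fin 24) ℤ}

/-- every norm 8 vector lies in a frame -/
def HasFrames (B : Matrix (Fin 24) (Fin 24) ℤ) : Prop :=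
  ∀ y, pairZ B y y = 8 → ∃ v, IsFrame B v ∧ ∃ i, v i = y

/-- a congruent orthogonal family of four norm 8 vectors lies in a frame -/
lemma frame_of_four (hB : IsLeech B) (hF : HasFrames B) (w : Fin 4 → LV)
    (h8 : ∀ i, pairZ B (w i) (w i) = 8) (ho : ∀ i j, i ≠ j → pairZ B (w i) (w j) = 0)
    (hc : ∀ i, ∃ u : LV, w i = w 0 + (2:ℤ) • u) :
    ∃ v, IsFrame B v ∧ ∃ p : Fin 4 → Fin 24, Function.Injective p ∧ ∀ j, v (p j) = w j := by
  obtain ⟨v, hv, i0, hi0⟩ := hF (w 0) (h8 0)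
  have h1 : ∀ j, ∃ i, w j = v i ∨ w j = - v i := fun j => by
    obtain ⟨u, hu⟩ := hc j
    exact frame_complete hB hv (h8 j) (i := i0) (w := u) (by rw [hu, hi0])
  choose p hp using h1
  have hinj : Function.Injective p := by
    intro a b hab
    by_contra hne
    have h2 := ho a b hne
    have h8a := hv.1 (p b)
    rcases hp a with h | h <;> rcases hp b with h' | h' <;>
      rw [h, h', hab] at h2 <;> (try simp only [pz_neg_left, pz_neg_right] at h2) <;> linarith
  classical
  let e : Fin 24 → ℤ := fun i => if ∃ j, p j = i ∧ w j = - v i then -1 else 1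
  refine ⟨fun i => e i • v i, frame_sign v hv e (fun i => by simp only [e]; split_ifs <;> simp),
    p, hinj, fun j => ?_⟩
  by_cases h : w j = - v (p j)
  · have : e (p j) = -1 := if_pos ⟨j, rfl, h⟩
    simp only [this, h]; module
  · have : e (p j) = 1 := if_neg (by
      rintro ⟨j', hj', h'⟩
      have := hinj hj'
      subst this
      exact h h')
    simp only [this]
    rcases hp j with h' | h'
    · rw [h']; module
    · exact absurd h' h

/-- flipping one of four -/
lemma flip_four (hB : IsLeech B) {v : Fin 24 → LV} (hv : IsFrame B v) (p : Fin 4 → Fin 24)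
    (hp : Function.Injective p) : ∃ F : LV →ₗ[ℤ] LV, (∀ x y, pairZ B (F x) (F y) = pairZ B x y) ∧
      F (v (p 0)) = - v (p 0) ∧ ∀ j, j ≠ 0 → F (v (p j)) = v (p j) := by
  obtain ⟨S, hS, hpS⟩ := pattern hB hv p hp
  obtain ⟨F, hF, hFv⟩ := sign_change hB hv hS
  refine ⟨F, hF, frame_ext hB hv fun i => ?_, fun j hj => frame_ext hB hv fun i => ?_⟩
  · rw [hFv, pz_neg_left]
    split_ifs with h
    · rfl
    · have : p 0 ≠ i := fun e => h (e ▸ (hpS 0).2 rfl)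
      rw [hv.2.1 _ _ this]; rfl
  · rw [hFv]
    split_ifs with h
    · have : p j ≠ i := fun e => hj ((hpS j).1 (e ▸ h))
      rw [hv.2.1 _ _ this]; rfl
    · rfl

lemma half_inj {x y : LV} (h : (2:ℤ) • x = (2:ℤ) • y) : x = y :=
  smul_right_injective LV (two_ne_zero : (2:ℤ) ≠ 0) h

lemma frame_half {v : Fin 24 → LV} (hv : IsFrame B v) (p : Fin 4 → Fin 24) :
    ∃ z : LV, (2:ℤ) • z = v (p 0) + v (p 1) + v (p 2) + v (p 3) := by
  obtain ⟨u1, h1⟩ := hv.2.2 (p 1) (p 0)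
  obtain ⟨u2, h2⟩ := hv.2.2 (p 2) (p 0)
  obtain ⟨u3, h3⟩ := hv.2.2 (p 3) (p 0)
  exact ⟨(2:ℤ) • v (p 0) + u1 + u2 + u3, by rw [h1, h2, h3]; module⟩

lemma R2 (hB : IsLeech B) (hF : HasFrames B) {v : Fin 24 → LV} (hv : IsFrame B v)
    (p : Fin 4 → Fin 24) (hp : Function.Injective p) (z : LV)
    (hz : (2:ℤ) • z = v (p 0) + v (p 1) + v (p 2) + v (p 3)) : 
    CoEq B z (v (p 0)) ∧ CoEq B z (z - v (p 0)) := by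
  have hzv : ∀ j, pairZ B z (v (p j)) = 4 := by
    intro j
    have : 2 * pairZ B z (v (p j)) = 8 := by
      rw [← pz_smul_left, hz]
      simp only [pz_add_left]
      fin_cases j <;> simp only [Fin.zero_eta, Fin.mk_one, Fin.reduceFinMk, hv.1] <;>
        repeat rw [hv.2.1 _ _ (hp.ne (by decide))]
      all_goals norm_num
    linarith
  have hzz : pairZ B z z = 8 := by
    have : 2 * pairZ B z z = 16 := by
      rw [← pz_smul_right, hz]
      simp only [pz_add_right, hzv]; norm_num
    linarith
  let w : Fin 4 → LV := fun j => z - v (p j)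
  obtain ⟨v', hv', q, hq, hqw⟩ := frame_of_four hB hF w
    (fun i => by simp only [w, pz_sub_left, pz_sub_right, hzz, hzv, pz_comm hB (v (p i)) z, hv.1]
                 norm_num)
    (fun i j hij => by
      simp only [w, pz_sub_left, pz_sub_right, hzz, hzv, pz_comm hB (v (p i)) z,
        hv.2.1 _ _ (hp.ne hij)]
      norm_num)
    (fun i => by
      obtain ⟨u, hu⟩ := hv.2.2 (p i) (p 0)
      exact ⟨-u, by simp only [w, hu]; module⟩)
  obtain ⟨F, hFi, hF0, hF1⟩ := flip_four hB hv' q hq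
  have hzw : (2:ℤ) • z = w 0 + w 1 + w 2 + w 3 := by
    have : w 0 + w 1 + w 2 + w 3 = (4:ℤ) • z - (v (p 0) + v (p 1) + v (p 2) + v (p 3)) := by
      simp only [w]; module
    rw [this, ← hz]; module
  have hFz : F z = v (p 0) := by
    apply half_inj
    rw [← map_smul, hzw, map_add, map_add, map_add, ← hqw, hF0, ← hqw, hF1 1 (by decide), ← hqw,
      hF1 2 (by decide), ← hqw, hF1 3 (by decide)]
    simp only [hqw]
    have : -w 0 + w 1 + w 2 + w 3 = (2:ℤ) • z - (2:ℤ) • w 0 := by rw [hzw]; module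
    rw [this]; simp only [w]; module
  refine ⟨⟨F, hFi, hFz⟩, ?_⟩
  obtain ⟨G, hGi, hG0, hG1⟩ := flip_four hB hv p hp
  have hGz : G z = z - v (p 0) := by
    apply half_inj
    rw [← map_smul, hz, map_add, map_add, map_add, hG0, hG1 1 (by decide),
      hG1 2 (by decide), hG1 3 (by decide), smul_sub, hz]
    module
  exact ⟨G, hGi, hGz⟩

/-- find an injective quadruple -/
lemma quad (a b : Fin 24) (h : a ≠ b) :
    ∃ p : Fin 4 → Fin 24, Function.Injective p ∧ p 0 = a ∧ p 1 = b := by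
  have : ∀ s : Finset (Fin 24), s.card ≤ 3 → ∃ c, c ∉ s := fun s hs => by
    by_contra! hc
    have : s = Finset.univ := by ext; simp [hc]
    rw [this] at hs; simp at hs
  obtain ⟨c, hc⟩ := this {a, b} (le_trans Finset.card_le_two (by norm_num))
  obtain ⟨d, hd⟩ := this {a, b, c} Finset.card_le_three
  simp at hc hd
  refine ⟨![a, b, c, d], ?_, rfl, rfl⟩
  intro i j hij
  fin_cases i <;> fin_cases j <;> simp at hij ⊢ <;> grind

lemma frame_equiv (hB : IsLeech B) (hF : HasFrames B) {v : Fin 24 → LV} (hv : IsFrame B v)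
    (i j : Fin 24) : CoEq B (v i) (v j) := by
  by_cases h : i = j
  · subst h; exact CoEq.refl _
  obtain ⟨p, hp, rfl, rfl⟩ := quad i j h
  obtain ⟨z, hz⟩ := frame_half hv p
  have h1 := (R2 hB hF hv p hp z hz).1
  have h2 := (R2 hB hF hv (p ∘ Equiv.swap 0 1) (hp.comp (Equiv.injective _)) z (by
    rw [hz]
    simp only [Function.comp_apply, Equiv.swap_apply_left, Equiv.swap_apply_right,
      Equiv.swap_apply_of_ne_of_ne (show (2 : Fin 4) ≠ 0 by decide) (show (2 : Fin 4) ≠ 1 by decide),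
      Equiv.swap_apply_of_ne_of_ne (show (3 : Fin 4) ≠ 0 by decide) (show (3 : Fin 4) ≠ 1 by decide)]
    module)).1
  simp only [Function.comp_apply, Equiv.swap_apply_left] at h2
  exact (h1.symm hB).trans h2

/-- type 2, orthogonal -/
lemma type2_orth (hB : IsLeech B) (hF : HasFrames B) {x y : LV} (hx : pairZ B x x = 4)
    (hy : pairZ B y y = 4) (hxy : pairZ B x y = 0) : CoEq B x y := by
  have hyx : pairZ B y x = 0 := by rw [pz_comm hB]; exact hxy
  have n1 : pairZ B (x + y) (x + y) = 8 := by
    simp only [pz_add_left, pz_add_right, hx, hy, hxy, hyx]; norm_num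
  have n2 : pairZ B (x - y) (x - y) = 8 := by
    simp only [pz_sub_left, pz_sub_right, hx, hy, hxy, hyx]; norm_num
  have n3 : pairZ B (x + y) (x - y) = 0 := by
    simp only [pz_add_left, pz_sub_right, hx, hy, hxy, hyx]; norm_num
  obtain ⟨v, hv, i, hi⟩ := hF _ n1
  obtain ⟨j, hj⟩ := frame_complete hB hv (x := x - y) (w := -y) (i := i) n2 (by rw [hi]; module)
  have hij : j ≠ i := by
    rintro rfl
    have := hv.1 j
    rcases hj with h | h
    · rw [h, ← hi] at n3
      linarith
    · rw [h, ← hi, pz_neg_right] at n3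
      linarith
  obtain ⟨p, hp, h0, h1⟩ := quad j i hij
  obtain ⟨F, hFi, hF0, hF1⟩ := flip_four hB hv p hp
  have e1 : F (x + y) = x + y := by rw [← hi, ← h1]; exact hF1 1 (by decide)
  have e2 : F (x - y) = -(x - y) := by
    rw [h0] at hF0
    rcases hj with h | h <;> rw [h]
    · exact hF0
    · rw [map_neg, hF0]
  refine ⟨F, hFi, half_inj ?_⟩
  have : (2:ℤ) • x = (x + y) + (x - y) := by module
  rw [← map_smul, this, map_add, e1, e2]; module

lemma card_big (a : Fin 24 → ℤ) (h : ∑ i, a i * a i = 32) :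
    (Finset.univ.filter fun i => 2 ≤ |a i|).card ≤ 8 := by
  by_contra hc
  push Not at hc
  have h1 : ∑ i ∈ Finset.univ.filter (fun i => 2 ≤ |a i|), (4:ℤ) ≤ ∑ i, a i * a i := by
    refine le_trans (Finset.sum_le_sum (g := fun i => a i * a i) fun i hi => ?_)
      (Finset.sum_le_sum_of_subset_of_nonneg (Finset.subset_univ _) fun i _ _ => mul_self_nonneg _)
    have := (Finset.mem_filter.1 hi).2
    rw [← abs_mul_abs_self]; nlinarith
  rw [h] at h1
  simp at h1
  omega

lemma sgn_lem (a b c d : ℤ) (h1 : a * a = c * c) (h2 : a * b = c * d) (h3 : b * b = d * d) :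
    ∃ s : ℤ, (s = 1 ∨ s = -1) ∧ a = s * c ∧ b = s * d := by
  rcases mul_self_eq_mul_self_iff.1 h1 with rfl | rfl <;>
    rcases mul_self_eq_mul_self_iff.1 h3 with rfl | rfl
  · exact ⟨1, by simp⟩
  · have : a * d = 0 := by linarith
    rcases mul_eq_zero.1 this with rfl | rfl
    · exact ⟨-1, by simp⟩
    · exact ⟨1, by simp⟩
  · have : c * b = 0 := by linarith
    rcases mul_eq_zero.1 this with rfl | rfl
    · exact ⟨1, by simp⟩
    · exact ⟨-1, by simp⟩
  · exact ⟨-1, by simp⟩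

lemma type2 (hB : IsLeech B) (hF : HasFrames B) {y : LV} (hy : pairZ B y y = 8) {x x' : LV}
    (hx : pairZ B x x = 4) (hx' : pairZ B x' x' = 4) : CoEq B x x' := by
  classical
  obtain ⟨v, hv, -⟩ := hF y hy
  have s1 := frame_parseval hB hv x x
  have s2 := frame_parseval hB hv x' x'
  rw [hx] at s1; rw [hx'] at s2
  set a : Fin 24 → ℤ := fun i => pairZ B x (v i) with ha
  set b : Fin 24 → ℤ := fun i => pairZ B x' (v i) with hb
  have c1 := card_big a (by rw [← s1]; norm_num)
  have c2 := card_big b (by rw [← s2]; norm_num)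
  set T := Finset.univ.filter fun i => |a i| < 2 ∧ |b i| < 2 with hT
  have cT : 8 ≤ T.card := by
    have hu : (Finset.univ : Finset (Fin 24)) ⊆ T ∪ (Finset.univ.filter fun i => 2 ≤ |a i|) ∪
        (Finset.univ.filter fun i => 2 ≤ |b i|) := by
      intro i _
      simp only [hT, Finset.mem_union, Finset.mem_filter, Finset.mem_univ, true_and]
      by_cases h1 : |a i| < 2 <;> by_cases h2 : |b i| < 2 <;> simp [h1, h2] <;> omega
    have := (Finset.card_le_card hu).trans
      ((Finset.card_union_le _ _).trans (add_le_add_left (Finset.card_union_le _ _) _))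
    simp at this
    omega
  have hmap : ∀ i ∈ T, (a i * a i, a i * b i, b i * b i) ∈
      ({(0,0,0),(1,0,0),(0,0,1),(1,1,1),(1,-1,1)} : Finset (ℤ × ℤ × ℤ)) := by
    intro i hi
    obtain ⟨h1, h2⟩ := (Finset.mem_filter.1 hi).2
    rw [abs_lt] at h1 h2
    have e1 : a i = -1 ∨ a i = 0 ∨ a i = 1 := by omega
    have e2 : b i = -1 ∨ b i = 0 ∨ b i = 1 := by omega
    rcases e1 with e1 | e1 | e1 <;> rcases e2 with e2 | e2 | e2 <;> rw [e1, e2] <;> decide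
  obtain ⟨i, hi, j, hj, hij, he⟩ := Finset.exists_ne_map_eq_of_card_lt_of_maps_to
    (lt_of_lt_of_le (by decide) cT) hmap
  have hs : ∃ s : ℤ, (s = 1 ∨ s = -1) ∧ a i = s * a j ∧ b i = s * b j := by
    simp only [Prod.mk.injEq] at he
    exact sgn_lem _ _ _ _ he.1 he.2.1 he.2.2
  obtain ⟨s, hs1, hs2, hs3⟩ := hs
  obtain ⟨u, hu⟩ : ∃ u : LV, v i - s • v j = (2:ℤ) • u := by
    obtain ⟨w, hw⟩ := hv.2.2 i j
    rcases hs1 with rfl | rfl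
    · exact ⟨w, by rw [hw]; module⟩
    · exact ⟨w + v j, by rw [hw]; module⟩
  have hss : s * s = 1 := by rcases hs1 with rfl | rfl <;> norm_num
  have hu4 : pairZ B u u = 4 := by
    have : 4 * pairZ B u u = pairZ B ((2:ℤ) • u) ((2:ℤ) • u) := by
      rw [pz_smul_left, pz_smul_right]; ring
    rw [← hu] at this
    simp only [pz_sub_left, pz_sub_right, pz_smul_left, pz_smul_right, hv.1, hv.2.1 _ _ hij,
      hv.2.1 _ _ hij.symm] at this
    linarith
  have hxu : ∀ t : LV, pairZ B t (v i) = s * pairZ B t (v j) → pairZ B t u = 0 := by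
    intro t ht
    have : 2 * pairZ B t u = 0 := by
      rw [← pz_smul_right, ← hu, pz_sub_right, pz_smul_right, ht]; ring
    linarith
  exact (type2_orth hB hF hx hu4 (hxu x hs2)).trans
    ((type2_orth hB hF hx' hu4 (hxu x' hs3)).symm hB)

end L4

section L5
variable {B : Matrix (Fin 24) (Fin 24) ℤ}

lemma four_bound (hB : IsLeech B) (hF : HasFrames B) {y0 x : LV} {m : ℤ}
    (hmax : ∀ z, CoEq B y0 z → pairZ B x z ≤ m) {v : Fin 24 → LV} (hv : IsFrame B v) {i0 : Fin 24}
    (h0 : CoEq B y0 (v i0)) (p : Fin 4 → Fin 24) (hp : Function.Injective p) :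
    |pairZ B x (v (p 0))| + |pairZ B x (v (p 1))| + |pairZ B x (v (p 2))| + |pairZ B x (v (p 3))|
      ≤ 2 * m := by
  classical
  let e : Fin 24 → ℤ := fun i => if 0 ≤ pairZ B x (v i) then 1 else -1
  have he : ∀ i, e i = 1 ∨ e i = -1 := fun i => by simp only [e]; split_ifs <;> simp
  have hev := frame_sign v hv e he
  have hab : ∀ i, pairZ B x (e i • v i) = |pairZ B x (v i)| := fun i => by
    rw [pz_smul_right]
    simp only [e]
    split_ifs with h
    · rw [abs_of_nonneg h]; ring
    · rw [abs_of_neg (not_le.1 h)]; ring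
  obtain ⟨z, hz⟩ := frame_half hev p
  have h1 := (R2 hB hF hev p hp z hz).1
  have h2 : CoEq B y0 z := by
    refine CoEq.trans ?_ (h1.symm hB)
    refine (h0.trans (frame_equiv hB hF hv i0 (p 0))).trans ?_
    rcases he (p 0) with h | h <;> simp only [h]
    · rw [one_smul]; exact CoEq.refl _
    · rw [neg_one_smul]; exact CoEq.neg _
  have h3 := hmax z h2
  have h4 : 2 * pairZ B x z = pairZ B x ((2:ℤ) • z) := by rw [pz_smul_right]
  rw [hz] at h4
  simp only [pz_add_right, hab] at h4
  linarith

lemma comb (a : Fin 24 → ℤ) (h0 : ∀ i, 0 ≤ a i) (i0 : Fin 24) (m N : ℤ) (hm : a i0 = m)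
    (hN : ∑ i, a i * a i = N)
    (h4 : ∀ p : Fin 4 → Fin 24, Function.Injective p → a (p 0) + a (p 1) + a (p 2) + a (p 3) ≤ 2 * m) :
    ∃ p : Fin 4 → Fin 24, Function.Injective p ∧ p 0 = i0 ∧ a (p 1) + a (p 2) + a (p 3) ≤ m ∧
      a (p 2) ≤ a (p 1) ∧ a (p 3) ≤ a (p 2) ∧
      N ≤ m * m + a (p 1) * a (p 1) + a (p 2) * a (p 2) + 21 * (a (p 3) * a (p 3)) ∧
      m * m + a (p 1) * a (p 1) ≤ N := by
  have ne : ∀ s : Finset (Fin 24), s.card ≠ 0 → s.Nonempty := fun s h =>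
    Finset.card_pos.1 (Nat.pos_of_ne_zero h)
  have c0 : (Finset.univ.erase i0).card = 23 := by simp
  obtain ⟨i1, hi1, m1⟩ := Finset.exists_max_image (Finset.univ.erase i0) a (ne _ (by rw [c0]; simp))
  have c1 : ((Finset.univ.erase i0).erase i1).card = 22 := by rw [Finset.card_erase_of_mem hi1, c0]
  obtain ⟨i2, hi2, m2⟩ := Finset.exists_max_image ((Finset.univ.erase i0).erase i1) a
    (ne _ (by rw [c1]; simp))
  have c2 : (((Finset.univ.erase i0).erase i1).erase i2).card = 21 := by
    rw [Finset.card_erase_of_mem hi2, c1]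
  obtain ⟨i3, hi3, m3⟩ := Finset.exists_max_image (((Finset.univ.erase i0).erase i1).erase i2) a
    (ne _ (by rw [c2]; simp))
  have hinj : Function.Injective ![i0, i1, i2, i3] := by
    simp only [Finset.mem_erase] at hi1 hi2 hi3
    intro i j hij
    fin_cases i <;> fin_cases j <;> simp at hij ⊢ <;> grind
  refine ⟨![i0, i1, i2, i3], hinj, rfl, ?_, ?_, ?_, ?_, ?_⟩
  · have := h4 _ hinj
    simp at this ⊢
    linarith
  · exact m1 _ (Finset.mem_of_mem_erase hi2)
  · exact m2 _ (Finset.mem_of_mem_erase hi3)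
  · rw [← hN, ← Finset.add_sum_erase _ _ (Finset.mem_univ i0), ← Finset.add_sum_erase _ _ hi1,
      ← Finset.add_sum_erase _ _ hi2, hm]
    have : ∑ i ∈ ((Finset.univ.erase i0).erase i1).erase i2, a i * a i ≤
        ∑ i ∈ ((Finset.univ.erase i0).erase i1).erase i2, a i3 * a i3 :=
      Finset.sum_le_sum fun i hi => mul_self_le_mul_self (h0 i) (m3 i hi)
    rw [Finset.sum_const, c2] at this
    simp at this ⊢
    linarith
  · rw [← hN, ← Finset.add_sum_erase _ _ (Finset.mem_univ i0), ← Finset.add_sum_erase _ _ hi1, hm]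
    have : 0 ≤ ∑ i ∈ (Finset.univ.erase i0).erase i1, a i * a i :=
      Finset.sum_nonneg fun i _ => mul_self_nonneg _
    simp at this ⊢
    linarith

lemma comb_odd (a : Fin 24 → ℤ) (i0 : Fin 24) (h : ∀ i, 1 ≤ a i) :
    a i0 * a i0 + 23 ≤ ∑ i, a i * a i := by
  rw [← Finset.add_sum_erase _ _ (Finset.mem_univ i0)]
  have : ∑ i ∈ Finset.univ.erase i0, (1:ℤ) ≤ ∑ i ∈ Finset.univ.erase i0, a i * a i :=
    Finset.sum_le_sum fun i _ => by nlinarith [h i]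
  simp at this ⊢
  linarith

lemma abs_par (x : ℤ) : |x| % 2 = x % 2 := by
  rcases abs_cases x with ⟨h, _⟩ | ⟨h, _⟩ <;> rw [h]; omega

lemma exists_max (hB : IsLeech B) (y0 x : LV) (hy0 : pairZ B y0 y0 = 8) :
    ∃ z, CoEq B y0 z ∧ ∀ z', CoEq B y0 z' → pairZ B x z' ≤ pairZ B x z := by
  obtain ⟨m, ⟨z, hz, hm⟩, hmax⟩ := Int.exists_greatest_of_bdd
    (P := fun m => ∃ z, CoEq B y0 z ∧ pairZ B x z = m)
    ⟨8 + pairZ B x x, by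
      rintro m ⟨z, hz, rfl⟩
      have h1 := hz.norm
      have h2 := pz_nonneg hB (x - z)
      have h3 := pz_nonneg hB x
      simp only [pz_sub_left, pz_sub_right, pz_comm hB z x] at h2
      linarith⟩ ⟨_, y0, CoEq.refl _, rfl⟩
  exact ⟨z, hz, fun z' hz' => by rw [hm]; exact hmax _ ⟨z', hz', rfl⟩⟩

lemma type4_aux (m r1 r2 r3 : ℤ) (h3 : 0 ≤ r3) (h23 : r3 ≤ r2) (h12 : r2 ≤ r1)
    (hs : r1 + r2 + r3 ≤ m) (hm : m ≤ 8)
    (p1 : r1 % 2 = m % 2) (p2 : r2 % 2 = m % 2) (p3 : r3 % 2 = m % 2)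
    (hM : m * m + r1 * r1 ≤ 64) (hN : 64 ≤ m * m + r1 * r1 + r2 * r2 + 21 * (r3 * r3)) (ho : m % 2 = 1 → m * m + 23 ≤ 64) :
    m = 8 ∨ (m = 6 ∧ r1 = 2 ∧ r2 = 2 ∧ r3 = 2) := by
  have : r3 ≤ 2 := by omega
  have : r2 ≤ 4 := by omega
  have hm0 : 0 ≤ m := by omega
  interval_cases r3 <;> interval_cases r2 <;> try omega
  all_goals interval_cases m <;> try omega
  all_goals
    have hr1 : r1 ≤ 8 := by omega
    interval_cases r1 <;> first | omega | simp

lemma type3_aux (m r1 r2 r3 : ℤ) (h3 : 0 ≤ r3) (h23 : r3 ≤ r2) (h12 : r2 ≤ r1)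
    (hs : r1 + r2 + r3 ≤ m) (hm : m ≤ 5)
    (p1 : r1 % 2 = m % 2) (p2 : r2 % 2 = m % 2) (p3 : r3 % 2 = m % 2)
    (hN : 48 ≤ m * m + r1 * r1 + r2 * r2 + 21 * (r3 * r3)) :
    m = 5 := by
  have : r3 ≤ 2 := by omega
  have : r2 ≤ 4 := by omega
  have hm0 : 0 ≤ m := by omega
  interval_cases r3 <;> interval_cases r2 <;> try omega
  all_goals interval_cases m <;> try omega
  all_goals
    have hr1 : r1 ≤ 8 := by omega
    interval_cases r1 <;> omega

lemma type4 (hB : IsLeech B) (hF : HasFrames B) {y0 x : LV} (hy0 : pairZ B y0 y0 = 8)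
    (hx : pairZ B x x = 8) : CoEq B y0 x := by
  classical
  obtain ⟨z, hz, hmax⟩ := exists_max hB y0 x hy0
  have hz8 : pairZ B z z = 8 := by rw [hz.norm, hy0]
  have hm8 : pairZ B x z ≤ 8 := by
    have := pz_nonneg hB (x - z)
    simp only [pz_sub_left, pz_sub_right, pz_comm hB z x] at this
    linarith
  obtain ⟨v, hv, i0, hi0⟩ := hF z hz8
  have hb := four_bound hB hF hmax hv (i0 := i0) (by rw [hi0]; exact hz)
  have hS := frame_parseval hB hv x x
  rw [hx] at hS
  by_cases hm0 : 0 ≤ pairZ B x z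
  swap
  · obtain ⟨p, hp, -, -⟩ := quad 0 1 (by decide)
    have := hb p hp
    have h1 := abs_nonneg (pairZ B x (v (p 0)))
    have h2 := abs_nonneg (pairZ B x (v (p 1)))
    have h3 := abs_nonneg (pairZ B x (v (p 2)))
    have h4 := abs_nonneg (pairZ B x (v (p 3)))
    linarith
  set a : Fin 24 → ℤ := fun i => |pairZ B x (v i)| with ha
  have hai : a i0 = pairZ B x z := by simp only [ha, hi0, abs_of_nonneg hm0]
  have hS' : ∑ i, a i * a i = 64 := by simp only [ha, abs_mul_abs_self, ← hS]; norm_num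
  have hpar : ∀ i, a i % 2 = a i0 % 2 := fun i => by
    simp only [ha, abs_par]; exact frame_parity hv x i i0
  have ha0 : ∀ i, 0 ≤ a i := fun i => abs_nonneg _
  obtain ⟨p, hp, hp0, hc1, hc2, hc3, hc4, hc5⟩ := comb a ha0 i0 _ 64 hai hS' hb
  rcases type4_aux (pairZ B x z) (a (p 1)) (a (p 2)) (a (p 3)) (ha0 _) hc3 hc2 hc1 hm8
    (by rw [hpar, hai]) (by rw [hpar, hai]) (by rw [hpar, hai]) hc5 hc4 (fun ho => by
      have := comb_odd a i0 (fun i => by have := hpar i; have := ha0 i; omega)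
      rw [hS', hai] at this; exact this) with h | ⟨h, h1, h2, h3⟩
  · have : x - z = 0 := pz_eq_zero hB (by
      simp only [pz_sub_left, pz_sub_right, pz_comm hB z x]; linarith)
    rw [sub_eq_zero.1 this]; exact hz
  · exfalso
    -- signed frame
    let e : Fin 24 → ℤ := fun i => if 0 ≤ pairZ B x (v i) then 1 else -1
    have he : ∀ i, e i = 1 ∨ e i = -1 := fun i => by simp only [e]; split_ifs <;> simp
    have hev := frame_sign v hv e he
    have hab : ∀ i, pairZ B x (e i • v i) = a i := fun i => by
      rw [pz_smul_right]
      simp only [e, ha]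
      split_ifs with h
      · rw [abs_of_nonneg h]; ring
      · rw [abs_of_neg (not_le.1 h)]; ring
    set v' : Fin 24 → LV := fun i => e i • v i with hv'
    obtain ⟨u, hu⟩ := frame_half hev p
    have hcu : CoEq B u (v' (p 0)) := (R2 hB hF hev p hp u hu).1
    have hcw : CoEq B u (u - v' (p 0)) := (R2 hB hF hev p hp u hu).2
    have hv0 : v' (p 0) = z := by
      rw [hv', hp0]; simp only [e, hi0, hm0, if_true, one_smul]
    have hab' : ∀ i, pairZ B x (v' i) = a i := hab
    have hap0 : a (p 0) = 6 := by rw [hp0, hai, h]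
    have hxu : pairZ B x u = 6 := by
      have : 2 * pairZ B x u = pairZ B x ((2:ℤ) • u) := by rw [pz_smul_right]
      rw [hu] at this
      simp only [pz_add_right] at this
      have h5 := hab' (p 0); have h6 := hab' (p 1); have h7 := hab' (p 2); have h8 := hab' (p 3)
      simp only [hv'] at h5 h6 h7 h8
      linarith
    have hzv : ∀ j, pairZ B u (v' (p j)) = 4 := by
      intro j
      have : 2 * pairZ B u (v' (p j)) = 8 := by
        rw [← pz_smul_left, hu]
        simp only [pz_add_left]
        fin_cases j <;> simp only [Fin.zero_eta, Fin.mk_one, Fin.reduceFinMk, hev.1] <;>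
          repeat rw [hev.2.1 _ _ (hp.ne (by decide))]
        all_goals norm_num
      linarith
    have huu : pairZ B u u = 8 := by rw [← hcu.norm]; exact hev.1 _
    let w : Fin 4 → LV := fun j => u - v' (p j)
    obtain ⟨f, hf, q, hq, hqw⟩ := frame_of_four hB hF w
      (fun i => by
        simp only [w, pz_sub_left, pz_sub_right, huu, hzv, pz_comm hB (v' (p i)) u]
        have := hev.1 (p i)
        linarith)
      (fun i j hij => by
        simp only [w, pz_sub_left, pz_sub_right, huu, hzv, pz_comm hB (v' (p i)) u]
        have := hev.2.1 _ _ (hp.ne hij)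
        linarith)
      (fun i => by
        obtain ⟨t, ht⟩ := hev.2.2 (p i) (p 0)
        have ht' : v' (p i) = v' (p 0) + (2:ℤ) • t := ht
        exact ⟨-t, by simp only [w, ht']; module⟩)
    have hxw : ∀ j, pairZ B x (w j) = 6 - a (p j) := fun j => by
      simp only [w, pz_sub_right, hxu, hab']
    have hb2 := four_bound hB hF hmax hf (i0 := q 0) (by
      rw [hqw]
      have : CoEq B y0 u := hz.trans (by rw [← hv0]; exact hcu.symm hB)
      exact this.trans hcw)
    have hS2 := frame_parseval hB hf x x
    have hz2 : ∀ i, i ≠ q 1 → i ≠ q 2 → i ≠ q 3 → pairZ B x (f i) = 0 := by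
      intro i e1 e2 e3
      have hinj : Function.Injective ![i, q 1, q 2, q 3] := by
        have a1 : q 1 ≠ q 2 := hq.ne (by decide)
        have a2 : q 1 ≠ q 3 := hq.ne (by decide)
        have a3 : q 2 ≠ q 3 := hq.ne (by decide)
        intro k l hkl
        fin_cases k <;> fin_cases l <;> simp at hkl ⊢ <;> grind
      have := hb2 _ hinj
      simp [hqw, hxw, h1, h2, h3, h] at this
      exact abs_eq_zero.1 (le_antisymm (by linarith) (abs_nonneg _))
    have hS3 : ∑ i, pairZ B x (f i) * pairZ B x (f i) =
        ∑ i ∈ ({q 1, q 2, q 3} : Finset (Fin 24)), pairZ B x (f i) * pairZ B x (f i) := by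
      symm
      refine Finset.sum_subset (Finset.subset_univ _) fun i _ hi => ?_
      simp only [Finset.mem_insert, Finset.mem_singleton, not_or] at hi
      rw [hz2 i hi.1 hi.2.1 hi.2.2]; rfl
    rw [hS3, hx, Finset.sum_insert, Finset.sum_insert, Finset.sum_singleton] at hS2
    · simp only [hqw, hxw, h1, h2, h3] at hS2
      norm_num at hS2
    · simpa using hq.ne (show (2 : Fin 4) ≠ 3 by decide)
    · simp only [Finset.mem_insert, Finset.mem_singleton, not_or]
      exact ⟨hq.ne (by decide), hq.ne (by decide)⟩

lemma type3_five (hB : IsLeech B) (hF : HasFrames B) {y0 x : LV} (hy0 : pairZ B y0 y0 = 8)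
    (hx : pairZ B x x = 6) : ∃ z, CoEq B y0 z ∧ pairZ B x z = 5 := by
  classical
  obtain ⟨z, hz, hmax⟩ := exists_max hB y0 x hy0
  refine ⟨z, hz, ?_⟩
  have hz8 : pairZ B z z = 8 := by rw [hz.norm, hy0]
  have hm8 : pairZ B x z ≤ 5 := by
    have hne : x - z ≠ 0 := fun h => by
      rw [sub_eq_zero.1 h] at hx; rw [hx] at hz8; norm_num at hz8
    have := pz_ge4 hB hne
    simp only [pz_sub_left, pz_sub_right, pz_comm hB z x] at this
    linarith
  obtain ⟨v, hv, i0, hi0⟩ := hF z hz8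
  have hb := four_bound hB hF hmax hv (i0 := i0) (by rw [hi0]; exact hz)
  have hS := frame_parseval hB hv x x
  rw [hx] at hS
  by_cases hm0 : 0 ≤ pairZ B x z
  swap
  · obtain ⟨p, hp, -, -⟩ := quad 0 1 (by decide)
    have := hb p hp
    have h1 := abs_nonneg (pairZ B x (v (p 0)))
    have h2 := abs_nonneg (pairZ B x (v (p 1)))
    have h3 := abs_nonneg (pairZ B x (v (p 2)))
    have h4 := abs_nonneg (pairZ B x (v (p 3)))
    linarith
  set a : Fin 24 → ℤ := fun i => |pairZ B x (v i)| with ha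
  have hai : a i0 = pairZ B x z := by simp only [ha, hi0, abs_of_nonneg hm0]
  have hS' : ∑ i, a i * a i = 48 := by simp only [ha, abs_mul_abs_self, ← hS]; norm_num
  have hpar : ∀ i, a i % 2 = a i0 % 2 := fun i => by
    simp only [ha, abs_par]; exact frame_parity hv x i i0
  have ha0 : ∀ i, 0 ≤ a i := fun i => abs_nonneg _
  obtain ⟨p, hp, hp0, hc1, hc2, hc3, hc4, hc5⟩ := comb a ha0 i0 _ 48 hai hS' hb
  exact type3_aux (pairZ B x z) (a (p 1)) (a (p 2)) (a (p 3)) (ha0 _) hc3 hc2 hc1 hm8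
    (by rw [hpar, hai]) (by rw [hpar, hai]) (by rw [hpar, hai]) hc4

lemma five_one (hB : IsLeech B) {v : Fin 24 → LV} (hv : IsFrame B v) {x : LV} {i0 : Fin 24}
    (hx : pairZ B x x = 6) (h5 : pairZ B x (v i0) = 5) (i : Fin 24) (hi : i ≠ i0) :
    pairZ B x (v i) = 1 ∨ pairZ B x (v i) = -1 := by
  have hS := frame_parseval hB hv x x
  rw [hx, ← Finset.add_sum_erase _ _ (Finset.mem_univ i0), h5,
    ← Finset.add_sum_erase _ _ (show i ∈ Finset.univ.erase i0 by simp [hi])] at hS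
  have hodd : ∀ j, 1 ≤ pairZ B x (v j) * pairZ B x (v j) := fun j => by
    have := frame_parity hv x j i0
    have hne : pairZ B x (v j) ≠ 0 := by intro h; rw [h, h5] at this; norm_num at this
    have := mul_self_pos.2 hne
    linarith
  have h1 : ∑ j ∈ (Finset.univ.erase i0).erase i, (1:ℤ) ≤
      ∑ j ∈ (Finset.univ.erase i0).erase i, pairZ B x (v j) * pairZ B x (v j) :=
    Finset.sum_le_sum fun j _ => hodd j
  have c1 : ((Finset.univ.erase i0).erase i).card = 22 := by
    rw [Finset.card_erase_of_mem (by simp [hi]), Finset.card_erase_of_mem (by simp)]; simp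
  rw [Finset.sum_const, c1] at h1
  have h2 : pairZ B x (v i) * pairZ B x (v i) = 1 := by
    have := hodd i
    simp at h1
    linarith
  exact mul_self_eq_one_iff.1 h2

lemma type3 (hB : IsLeech B) (hF : HasFrames B) {y0 x x' : LV} (hy0 : pairZ B y0 y0 = 8)
    (hx : pairZ B x x = 6) (hx' : pairZ B x' x' = 6) : CoEq B x x' := by
  classical
  obtain ⟨z, hz, h5⟩ := type3_five hB hF hy0 hx
  obtain ⟨z', hz', h5'⟩ := type3_five hB hF hy0 hx'
  obtain ⟨F, hFi, hFz⟩ := (hz'.symm hB).trans hz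
  have hz8 : pairZ B z z = 8 := by rw [hz.norm, hy0]
  have hxF : pairZ B (F x') (F x') = 6 := by rw [hFi, hx']
  have h5F : pairZ B (F x') z = 5 := by rw [← hFz, hFi, h5']
  obtain ⟨v, hv, i0, hi0⟩ := hF z hz8
  have ha : ∀ i, ∃ t : ℤ, pairZ B (x - F x') (v i) = 2 * t ∧
      (pairZ B x (v i) ≠ pairZ B (F x') (v i) ↔ Odd t) ∧ 
      (pairZ B x (v i) ≠ pairZ B (F x') (v i) → pairZ B x (v i) = - pairZ B (F x') (v i)) := by
    intro i
    rw [pz_sub_left]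
    by_cases hi : i = i0
    · subst hi
      rw [hi0, h5, h5F]
      exact ⟨0, by norm_num, by simp, by simp⟩
    · rcases five_one hB hv hx (i0 := i0) (by rw [hi0]; exact h5) i hi with h | h <;>
        rcases five_one hB hv hxF (i0 := i0) (by rw [hi0]; exact h5F) i hi with h' | h' <;>
        rw [h, h']
      · exact ⟨0, by norm_num, by simp, by simp⟩
      · exact ⟨1, by norm_num, by norm_num, by norm_num⟩
      · exact ⟨-1, by norm_num, by norm_num, by norm_num⟩
      · exact ⟨0, by norm_num, by simp, by simp⟩
  choose t ht1 ht2 ht3 using ha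
  let S := Finset.univ.filter fun i => pairZ B x (v i) ≠ pairZ B (F x') (v i)
  have hS : IsCode B v S := ⟨x - F x', t, fun i => ⟨ht1 i, by rw [← ht2]; simp [S]⟩⟩
  obtain ⟨E, hE, hEv⟩ := sign_change hB hv hS
  have h1 : CoEq B x (F x') := ⟨E, hE, frame_ext hB hv fun i => by
    rw [hEv]
    split_ifs with h
    · rw [ht3 i (by simpa [S] using h)]; ring
    · by_contra hne
      exact h (by simpa [S] using hne)⟩
  exact h1.trans (CoEq.symm hB ⟨F, hFi, rfl⟩)

end L5

section L1
variable {B : Matrix (Fin 24) (Fin 24) ℤ}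

def wtn (n : ℤ) : ℕ := if n = 0 then 48 else if n = 8 then 1 else 24

def cl (x : LV) : Fin 24 → ZMod 2 := fun i => (x i : ZMod 2)

lemma cl_eq {x y : LV} (h : cl x = cl y) : ∃ w : LV, x = y + (2:ℤ) • w := by
  have : ∀ i, ∃ w : ℤ, x i = y i + 2 * w := fun i => by
    have h1 := congrFun h i
    simp only [cl] at h1
    have h2 := (ZMod.intCast_eq_intCast_iff_dvd_sub (y i) (x i) 2).1 h1.symm
    obtain ⟨w, hw⟩ := h2
    exact ⟨w, by push_cast at hw; linarith⟩
  choose w hw using this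
  exact ⟨w, by ext i; rw [hw]; simp⟩

lemma cl_add (x w : LV) : cl (x + (2:ℤ) • w) = cl x := by
  ext i
  have : (2 : ZMod 2) = 0 := rfl
  simp [cl, this]

def lexpos (w : LV) : Prop := 0 < toLex w

lemma lexpos_or (w : LV) (h : w ≠ 0) : lexpos w ∨ lexpos (-w) := by
  rcases lt_trichotomy (toLex w) 0 with h1 | h1 | h1
  · right
    have : (0 : Lex (Fin 24 → ℤ)) < - toLex w := neg_pos.2 h1
    exact this
  · exact absurd h1 h
  · exact Or.inl h1

lemma lexpos_not (w : LV) (h : lexpos w) (h' : lexpos (-w)) : False := by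
  have h1 : (0 : Lex (Fin 24 → ℤ)) < - toLex w := h'
  exact lt_asymm (neg_pos.1 h1) h

lemma class_orth (hB : IsLeech B) {x y : LV} (hc : cl x = cl y) (h1 : x ≠ y) (h2 : x ≠ -y) :
    16 ≤ pairZ B x x + pairZ B y y - 2 * |pairZ B x y| := by
  obtain ⟨w, hw⟩ := cl_eq hc
  exact cong_bound hB hw h1 h2

lemma half_card (A : Finset LV) (h0 : ∀ x ∈ A, x ≠ 0) (hneg : ∀ x ∈ A, -x ∈ A) :
    letI := Classical.decPred lexpos
    A.card ≤ 2 * (A.filter lexpos).card := by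
  classical
  have : A ⊆ A.filter lexpos ∪ (A.filter lexpos).image (fun x => -x) := by
    intro x hx
    rw [Finset.mem_union, Finset.mem_filter, Finset.mem_image]
    rcases lexpos_or x (h0 x hx) with h | h
    · exact Or.inl ⟨hx, h⟩
    · exact Or.inr ⟨-x, Finset.mem_filter.2 ⟨hneg x hx, h⟩, neg_neg x⟩
  have h2 := (Finset.card_le_card this).trans (Finset.card_union_le _ _)
  have h3 := Finset.card_image_le (s := A.filter lexpos) (f := fun x => -x)
  have e : A.card ≤ 2 * (A.filter lexpos).card := by omega
  convert e

lemma half_orth (hB : IsLeech B) (A : Finset LV) (c : Fin 24 → ZMod 2)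
    (h8 : ∀ x ∈ A, pairZ B x x = 8 ∧ cl x = c) :
    letI := Classical.decPred lexpos
    ∀ x ∈ A.filter lexpos, ∀ y ∈ A.filter lexpos, x ≠ y → pairZ B x y = 0 := by
  intro x hx y hy hne
  letI := Classical.decPred lexpos
  replace hx := Finset.mem_filter.1 hx
  replace hy := Finset.mem_filter.1 hy
  have := class_orth hB (x := x) (y := y) (by rw [(h8 x hx.1).2, (h8 y hy.1).2]) hne (by
    rintro rfl
    exact lexpos_not y hy.2 hx.2)
  rw [(h8 x hx.1).1, (h8 y hy.1).1] at this
  exact abs_eq_zero.1 (le_antisymm (by linarith) (abs_nonneg _))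

lemma half_le (hB : IsLeech B) (A : Finset LV) (c : Fin 24 → ZMod 2)
    (h8 : ∀ x ∈ A, pairZ B x x = 8 ∧ cl x = c) :
    letI := Classical.decPred lexpos
    (A.filter lexpos).card ≤ 24 := by
  classical
  have := orth_card_le hB (ι := A.filter lexpos) (fun x => x.1)
    (fun x h => by
      have h1 := (h8 x.1 (Finset.mem_filter.1 x.2).1).1
      rw [h, pz_zero_left] at h1; norm_num at h1)
    (fun x y hxy => by
      have := half_orth hB A c h8 x.1 (by convert x.2) y.1 (by convert y.2)
        (fun h => hxy (Subtype.ext h))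
      exact this)
  rw [Fintype.card_coe] at this
  convert this

lemma norm_cases (hB : IsLeech B) {x : LV} (h : pairZ B x x ≤ 8) :
    pairZ B x x = 0 ∨ pairZ B x x = 4 ∨ pairZ B x x = 6 ∨ pairZ B x x = 8 := by
  by_cases hx : x = 0
  · left; rw [hx, pz_zero_left]
  · have := pz_ge4 hB hx
    obtain ⟨r, hr⟩ := pz_even hB x
    omega

lemma class_bound (hB : IsLeech B) (A : Finset LV) (c : Fin 24 → ZMod 2)
    (hA : ∀ x ∈ A, pairZ B x x ≤ 8 ∧ cl x = c) (hneg : ∀ x ∈ A, -x ∈ A) :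
    ∑ x ∈ A, wtn (pairZ B x x) ≤ 48 := by
  classical
  by_cases h : ∃ x ∈ A, pairZ B x x < 8
  · obtain ⟨x, hx, hx8⟩ := h
    have hsub : A ⊆ {x, -x} := by
      intro y hy
      by_contra hne
      simp only [Finset.mem_insert, Finset.mem_singleton, not_or] at hne
      have := class_orth hB (x := y) (y := x) (by rw [(hA x hx).2, (hA y hy).2]) hne.1 hne.2
      have := abs_nonneg (pairZ B y x)
      linarith [(hA y hy).1]
    refine (Finset.sum_le_sum_of_subset hsub).trans ?_
    rcases norm_cases hB hx8.le with h | h | h | h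
    · have hx0 := pz_eq_zero hB h
      subst hx0
      simp [pz_zero_left, wtn]
    · by_cases he : x = -x
      · rw [← he]; simp [h, wtn]
      · rw [Finset.sum_pair he]; simp [pz_neg_left, pz_neg_right, h, wtn]
    · by_cases he : x = -x
      · rw [← he]; simp [h, wtn]
      · rw [Finset.sum_pair he]; simp [pz_neg_left, pz_neg_right, h, wtn]
    · omega
  · push Not at h
    have h8 : ∀ x ∈ A, pairZ B x x = 8 ∧ cl x = c := fun x hx =>
      ⟨le_antisymm (hA x hx).1 (h x hx), (hA x hx).2⟩
    have h1 : ∑ x ∈ A, wtn (pairZ B x x) = A.card := by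
      rw [Finset.card_eq_sum_ones]
      exact Finset.sum_congr rfl fun x hx => by rw [(h8 x hx).1]; rfl
    rw [h1]
    have h2 := half_card A (fun x hx h0 => by
      have := (h8 x hx).1
      rw [h0, pz_zero_left] at this; norm_num at this) hneg
    have h3 := half_le hB A c h8
    exact h2.trans (by linarith)

lemma class_exact (hB : IsLeech B) (U : Finset LV) (hU : ∀ x, x ∈ U ↔ pairZ B x x ≤ 8)
    (hsum : ∑ x ∈ U, wtn (pairZ B x x) = 48 * 2 ^ 24) (c : Fin 24 → ZMod 2) :
    ∑ x ∈ U.filter (fun x => cl x = c), wtn (pairZ B x x) = 48 := by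
  classical
  have hle : ∀ c ∈ (Finset.univ : Finset (Fin 24 → ZMod 2)),
      ∑ x ∈ U.filter (fun x => cl x = c), wtn (pairZ B x x) ≤ 48 := fun c _ =>
    class_bound hB _ c (fun x hx => by
      rw [Finset.mem_filter, hU] at hx; exact hx) (fun x hx => by
      rw [Finset.mem_filter, hU] at hx ⊢
      refine ⟨by rw [pz_neg_left, pz_neg_right, neg_neg]; exact hx.1, ?_⟩
      rw [← hx.2, ← cl_add (-x) x]; congr 1; module)
  have h1 : ∑ c, ∑ x ∈ U.filter (fun x => cl x = c), wtn (pairZ B x x) =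
      ∑ c : Fin 24 → ZMod 2, 48 := by
    rw [Finset.sum_fiberwise, hsum, Finset.sum_const, Finset.card_univ]
    rw [Fintype.card_fun, ZMod.card, Fintype.card_fin, smul_eq_mul, mul_comm]
  exact (Finset.sum_eq_sum_iff_of_le hle).1 h1 c (Finset.mem_univ _)

lemma class_short (hB : IsLeech B) (U : Finset LV) (hU : ∀ x, x ∈ U ↔ pairZ B x x ≤ 8)
    (hsum : ∑ x ∈ U, wtn (pairZ B x x) = 48 * 2 ^ 24) (x : LV) :
    ∃ w : LV, pairZ B (x + (2:ℤ) • w) (x + (2:ℤ) • w) ≤ 8 := by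
  classical
  have h := class_exact hB U hU hsum (cl x)
  by_contra hne
  push Not at hne
  rw [Finset.sum_eq_zero] at h
  · norm_num at h
  · intro y hy
    rw [Finset.mem_filter, hU] at hy
    obtain ⟨w, hw⟩ := cl_eq hy.2
    exact absurd hy.1 (not_le.2 (hw ▸ hne w))

lemma hasFrames (hB : IsLeech B) (U : Finset LV) (hU : ∀ x, x ∈ U ↔ pairZ B x x ≤ 8)
    (hsum : ∑ x ∈ U, wtn (pairZ B x x) = 48 * 2 ^ 24) : HasFrames B := by
  classical
  intro y hy
  have h := class_exact hB U hU hsum (cl y)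
  set A := U.filter (fun x => cl x = cl y) with hA
  have h8 : ∀ x ∈ A, pairZ B x x = 8 ∧ cl x = cl y := by
    intro x hx
    rw [hA, Finset.mem_filter, hU] at hx
    refine ⟨?_, hx.2⟩
    by_contra hne
    have hlt : pairZ B x x < 8 := lt_of_le_of_ne hx.1 hne
    have := class_orth hB hx.2 (by rintro rfl; exact hne hy) (by
      rintro rfl; rw [pz_neg_left, pz_neg_right, neg_neg] at hne; exact hne hy)
    have := abs_nonneg (pairZ B x y)
    linarith
  have hneg : ∀ x ∈ A, -x ∈ A := fun x hx => by
    rw [hA, Finset.mem_filter, hU] at hx ⊢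
    refine ⟨by rw [pz_neg_left, pz_neg_right, neg_neg]; exact hx.1, ?_⟩
    rw [← hx.2, ← cl_add (-x) x]; congr 1; module
  have h1 : ∑ x ∈ A, wtn (pairZ B x x) = A.card := by
    rw [Finset.card_eq_sum_ones]
    exact Finset.sum_congr rfl fun x hx => by rw [(h8 x hx).1]; rfl
  rw [h1] at h
  have ne0 : ∀ x ∈ A, x ≠ 0 := fun x hx h0 => by
      have := (h8 x hx).1
      rw [h0, pz_zero_left] at this; norm_num at this
  have h2 := half_card A ne0 hneg
  have h3 := half_le hB A _ h8
  have h4 := half_orth hB A _ h8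
  have h5 : (A.filter lexpos).card = 24 := by
    have e : (A.filter lexpos).card ≤ 24 := by convert h3
    have e' : A.card ≤ 2 * (A.filter lexpos).card := by convert h2
    omega
  let E := (A.filter lexpos).equivFinOfCardEq h5
  let v : Fin 24 → LV := fun i => (E.symm i).1
  have hvA : ∀ i, v i ∈ A.filter lexpos := fun i => (E.symm i).2
  have hv : IsFrame B v := by
    refine ⟨fun i => (h8 _ (Finset.mem_filter.1 (hvA i)).1).1, fun i j hij => ?_, fun i j => ?_⟩
    · exact h4 _ (by convert hvA i) _ (by convert hvA j) (fun h => hij (by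
        have : E.symm i = E.symm j := Subtype.ext h
        exact E.symm.injective this))
    · exact cl_eq (by
        rw [(h8 _ (Finset.mem_filter.1 (hvA i)).1).2, (h8 _ (Finset.mem_filter.1 (hvA j)).1).2])
  have hyA : y ∈ A := by rw [hA, Finset.mem_filter, hU]; exact ⟨hy.le, rfl⟩
  rcases lexpos_or y (ne0 y hyA) with h | h
  · exact ⟨v, hv, E ⟨y, Finset.mem_filter.2 ⟨hyA, h⟩⟩, by simp [v]⟩
  · refine ⟨_, frame_sign v hv (fun _ => -1) (fun _ => Or.inr rfl),
      E ⟨-y, Finset.mem_filter.2 ⟨hneg y hyA, h⟩⟩, ?_⟩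
    simp [v]

/-- Summary of the lattice part: transitivity on short vectors. -/
lemma lattice_main (hB : IsLeech B) (U : Finset LV) (hU : ∀ x, x ∈ U ↔ pairZ B x x ≤ 8)
    (hsum : ∑ x ∈ U, wtn (pairZ B x x) = 48 * 2 ^ 24) (hex : ∃ y0, pairZ B y0 y0 = 8) :
    (∀ x : LV, ∃ w : LV, pairZ B (x + (2:ℤ) • w) (x + (2:ℤ) • w) ≤ 8) ∧
    ∀ x y : LV, pairZ B x x ≤ 8 → pairZ B x x = pairZ B y y → CoEq B x y := by
  refine ⟨class_short hB U hU hsum, fun x y hx hxy => ?_⟩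
  have hF := hasFrames hB U hU hsum
  obtain ⟨y0, hy0⟩ := hex
  rcases norm_cases hB hx with h | h | h | h <;> rw [h] at hxy
  · rw [pz_eq_zero hB h, pz_eq_zero hB hxy.symm]; exact CoEq.refl _
  · exact type2 hB hF hy0 h hxy.symm
  · exact type3 hB hF hy0 h hxy.symm
  · exact type4 hB hF h hxy.symm

end L1

section Q
open ModularForm ModularGroup

def qq (τ : ℍ) : ℂ := Function.Periodic.qParam 1 τ

def QE (F : ℍ → ℂ) (p : PowerSeries ℂ) : Prop :=
  ∀ τ : ℍ, HasSum (fun m => p.coeff m • Function.Periodic.qParam 1 τ ^ m) (F τ)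

variable {F G : ℍ → ℂ} {p r : PowerSeries ℂ}

lemma qparam_eq (τ : ℂ) : Function.Periodic.qParam 1 τ = Complex.exp (2 * π * Complex.I * τ) := by
  simp [Function.Periodic.qParam]

lemma qpow_eq (τ : ℂ) (n : ℕ) : Function.Periodic.qParam 1 τ ^ n = eC (n * τ) := by
  rw [qparam_eq, ← Complex.exp_nat_mul, eC]; congr 1; ring

lemma QE.norm_sum (h : QE F p) (τ : ℍ) :
    Summable (fun m => ‖p.coeff m‖ * ‖Function.Periodic.qParam 1 (τ : ℂ)‖ ^ m) := by
  have := (h τ).summable.norm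
  simpa [norm_smul] using this

lemma QE.mdiff (h : QE F p) : MDifferentiable 𝓘(ℂ) 𝓘(ℂ) F := by
  rw [UpperHalfPlane.mdifferentiable_iff]
  intro z hz
  have hz' : 0 < z.im := hz
  let σ : ℍ := ⟨Complex.I * (z.im / 2 : ℝ), by simpa using hz'⟩
  have hσ := h.norm_sum σ
  have hd : DifferentiableOn ℂ (fun w : ℂ => ∑' m, p.coeff m * Function.Periodic.qParam 1 w ^ m)
      {w : ℂ | z.im / 2 < w.im} := by
    refine differentiableOn_tsum_of_summable_norm hσ ?_ ?_ ?_
    · intro m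
      refine DifferentiableOn.const_mul (DifferentiableOn.pow ?_ _) _
      exact Differentiable.differentiableOn (by
        unfold Function.Periodic.qParam; fun_prop)
    · exact isOpen_lt continuous_const Complex.continuous_im
    · intro m w hw
      rw [norm_mul, norm_pow]
      refine mul_le_mul_of_nonneg_left (pow_le_pow_left₀ (norm_nonneg _) ?_ _) (norm_nonneg _)
      rw [Function.Periodic.norm_qParam, Function.Periodic.norm_qParam]
      have hw' : z.im / 2 < w.im := hw
      have e : (σ : ℂ).im = z.im / 2 := by simp [σ]
      rw [e]
      apply Real.exp_le_exp.2
      have := Real.pi_pos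
      rw [div_one, div_one]
      nlinarith
  have hzm : {w : ℂ | z.im / 2 < w.im} ∈ 𝓝 z :=
    (isOpen_lt continuous_const Complex.continuous_im).mem_nhds (by
      show z.im / 2 < z.im; linarith)
  have := (hd.differentiableAt hzm)
  refine (this.congr_of_eventuallyEq ?_).differentiableWithinAt
  filter_upwards [hzm] with w hw
  have hw0 : 0 < w.im := by have : z.im / 2 < w.im := hw; linarith
  have := (h ⟨w, hw0⟩).tsum_eq
  simp only [Function.comp, UpperHalfPlane.ofComplex_apply_of_im_pos hw0]
  rw [← this]; simp

lemma QE.sT (h : QE F p) (k : ℤ) : F ∣[k] T = F := by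
  ext τ
  rw [ModularForm.SL_slash_apply]
  have e1 : denom (T : GL (Fin 2) ℝ) τ = 1 := by
    erw [ModularGroup.denom_apply]; simp [ModularGroup.T]
  rw [e1, _root_.one_zpow, mul_one]
  have h2 := h (T • τ)
  have e : Function.Periodic.qParam 1 ((T • τ : ℍ) : ℂ) = Function.Periodic.qParam 1 (τ : ℂ) := by
    rw [UpperHalfPlane.modular_T_smul, UpperHalfPlane.coe_vadd, qparam_eq, qparam_eq,
      Complex.exp_eq_exp_iff_exists_int]
    exact ⟨1, by push_cast; ring⟩
  rw [e] at h2
  exact h2.unique (h τ)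

lemma QE.sS {k : ℤ} (hS : ∀ τ : ℍ, F (S • τ) = (τ : ℂ) ^ k * F τ) : F ∣[k] S = F := by
  ext τ
  rw [ModularForm.SL_slash_apply, hS]
  have e1 : denom (S : GL (Fin 2) ℝ) τ = (τ : ℂ) := by
    erw [ModularGroup.denom_apply]; simp [ModularGroup.S]
  rw [e1, mul_right_comm, ← zpow_add₀ (UpperHalfPlane.ne_zero τ)]
  simp

def QE.toMF (h : QE F p) {k : ℤ} (hS : ∀ τ : ℍ, F (S • τ) = (τ : ℂ) ^ k * F τ) :
    ModularForm 𝒮ℒ k where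
  toFun := F
  slash_action_eq' := fun _ ⟨γ, hγ⟩ ↦ hγ ▸
    SlashInvariantForm.slash_action_generators_SL2Z (QE.sS hS) (h.sT k) γ
  holo' := h.mdiff
  bdd_at_cusps' {c} hc := by
    rw [Subgroup.IsArithmetic.isCusp_iff_isCusp_SL2Z] at hc
    rw [OnePoint.isBoundedAt_iff_forall_SL2Z hc]
    intro γ _
    rw [SlashInvariantForm.slash_action_generators_SL2Z (QE.sS hS) (h.sT k) γ]
    exact isBoundedAtImInfty_of_hasSum_qExpansion one_pos h

lemma QE.qexp (h : QE F p) {k : ℤ} (hS : ∀ τ : ℍ, F (S • τ) = (τ : ℂ) ^ k * F τ) :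
    qExpansion 1 (h.toMF hS) = p := by
  ext m
  exact (ModularFormClass.qExpansion_coeff_unique (f := h.toMF hS) one_pos
    one_mem_strictPeriods_SL h m).symm

lemma QE.uniq (h : QE F p) (h' : QE F r) {k : ℤ}
    (hS : ∀ τ : ℍ, F (S • τ) = (τ : ℂ) ^ k * F τ) : p = r := by
  rw [← h.qexp hS, ← h'.qexp hS]; rfl

lemma QE.of_mf {k : ℤ} (f : ModularForm 𝒮ℒ k) : QE f (qExpansion 1 f) :=
  fun τ => UpperHalfPlane.hasSum_qExpansion one_pos
    (SlashInvariantFormClass.periodic_comp_ofComplex f one_mem_strictPeriods_SL)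
    (ModularFormClass.holo f) (ModularFormClass.bdd_at_infty f) τ

/-- vanishing of coefficients in low weight -/
lemma QE.low (h : QE F p) {k : ℤ} (hS : ∀ τ : ℍ, F (S • τ) = (τ : ℂ) ^ k * F τ) (n : ℕ)
    (hk : k < 0 ∨ (k = 0 ∧ 1 ≤ n) ∨ k = 2) : p.coeff n = 0 := by
  rw [← h.qexp hS]
  rcases hk with hk | ⟨hk, hn⟩ | hk
  · rw [ModularFormClass.levelOne_neg_weight_eq_zero hk (h.toMF hS), qExpansion_zero]; simp
  · subst hk
    obtain ⟨c, hc⟩ := ModularFormClass.levelOne_weight_zero_const (h.toMF hS)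
    refine ((ModularFormClass.qExpansion_coeff_unique (f := h.toMF hS) one_pos
      one_mem_strictPeriods_SL (c := fun m => if m = 0 then c else 0) ?_ n).symm).trans ?_
    · intro τ
      rw [hc, Function.const_apply]
      convert hasSum_ite_eq 0 c using 2 with m
      by_cases hm : m = 0 <;> simp [hm]
    · simp; omega
  · subst hk
    have := rank_zero_iff_forall_zero.mp ModularForm.levelOne_weight_two_rank_zero (h.toMF hS)
    rw [this, FunLike.coe_zero, qExpansion_zero]; simp

lemma HasSum.congr_fun' {ι : Type*} {f g : ι → ℂ} {a : ℂ} (h : HasSum f a) (e : ∀ i, g i = f i) :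
    HasSum g a := by
  rw [show g = f from funext e]; exact h

lemma QE.mul (hF : QE F p) (hG : QE G r) : QE (fun τ => F τ * G τ) (p * r) := by
  intro τ
  have h := summable_norm_sum_mul_antidiagonal_of_summable_norm (hF τ).summable.norm
    (hG τ).summable.norm
  have h2 := tsum_mul_tsum_eq_tsum_sum_antidiagonal_of_summable_norm (hF τ).summable.norm
    (hG τ).summable.norm
  rw [(hF τ).tsum_eq, (hG τ).tsum_eq] at h2
  have h3 := h.of_norm.hasSum
  rw [← h2] at h3
  refine HasSum.congr_fun' h3 fun m => ?_
  rw [PowerSeries.coeff_mul, Finset.sum_smul]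
  refine Finset.sum_congr rfl fun x hx => ?_
  rw [← Finset.HasAntidiagonal.mem_antidiagonal.1 hx, pow_add]
  simp only [smul_eq_mul]; ring

lemma QE.add (hF : QE F p) (hG : QE G r) : QE (fun τ => F τ + G τ) (p + r) := by
  intro τ
  simpa [add_mul] using (hF τ).add (hG τ)

lemma QE.smul (c : ℂ) (hF : QE F p) : QE (fun τ => c * F τ) (c • p) := by
  intro τ
  simpa [mul_assoc] using (hF τ).mul_left c

lemma QE.one : QE (fun _ => 1) 1 := by
  intro τ
  convert hasSum_ite_eq 0 (1 : ℂ) using 2 with m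
  by_cases hm : m = 0 <;> simp [hm, PowerSeries.coeff_one]

lemma QE.pow (hF : QE F p) (n : ℕ) : QE (fun τ => F τ ^ n) (p ^ n) := by
  induction n with
  | zero => simpa using QE.one
  | succ n ih => simpa [pow_succ] using ih.mul hF

lemma QE.sum {ι : Type*} (s : Finset ι) {F : ι → ℍ → ℂ} {p : ι → PowerSeries ℂ}
    (h : ∀ i ∈ s, QE (F i) (p i)) : QE (fun τ => ∑ i ∈ s, F i τ) (∑ i ∈ s, p i) := by
  intro τ
  have := hasSum_sum (fun i hi => h i hi τ)
  simpa [Finset.sum_mul] using this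

end Q

section T1

variable {B : Matrix (Fin 24) (Fin 24) ℤ}

def OB (B : Matrix (Fin 24) (Fin 24) ℤ) (w : Fin 24 → LV) : Prop :=
  (∀ i, 0 < pairZ B (w i) (w i)) ∧ ∀ i j, i ≠ j → pairZ B (w i) (w j) = 0

lemma exists_ob_aux (hB : IsLeech B) (m : ℕ) (hm : m ≤ 24) : ∃ w : Fin m → LV,
    (∀ i, w i ≠ 0) ∧ ∀ i j, i ≠ j → pairZ B (w i) (w j) = 0 := by
  induction m with
  | zero => exact ⟨fun i => i.elim0, fun i => i.elim0, fun i => i.elim0⟩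
  | succ m ih =>
    obtain ⟨w, h0, ho⟩ := ih (by omega)
    let L : LV →ₗ[ℤ] (Fin m → ℤ) :=
      { toFun := fun x i => pairZ B x (w i)
        map_add' := fun x y => by ext i; simp [pz_add_left]
        map_smul' := fun c x => by ext i; exact pz_smul_left ..}
    have : LinearMap.ker L ≠ ⊥ := by
      intro h
      have := LinearMap.finrank_le_finrank_of_injective (LinearMap.ker_eq_bot.1 h)
      simp at this; omega
    obtain ⟨x, hx, hx0⟩ := Submodule.exists_mem_ne_zero_of_ne_bot this
    have hx' : ∀ i, pairZ B x (w i) = 0 := fun i => congrFun (LinearMap.mem_ker.1 hx) i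
    refine ⟨Fin.snoc w x, ?_, ?_⟩
    · intro i
      refine Fin.lastCases ?_ (fun i => ?_) i
      · simpa using hx0
      · simpa using h0 i
    · intro i j
      refine Fin.lastCases ?_ (fun i => ?_) i <;> refine Fin.lastCases ?_ (fun j => ?_) j
      · simp
      · intro _; simpa using hx' j
      · intro _; rw [pz_comm hB]; simpa using hx' i
      · intro h; simpa using ho i j (fun e => h (by rw [e]))

lemma exists_ob (hB : IsLeech B) : ∃ w, OB B w := by
  obtain ⟨w, h0, ho⟩ := exists_ob_aux hB 24 le_rfl
  exact ⟨w, fun i => lt_of_le_of_ne (pz_nonneg hB _) (fun h => h0 i (pz_eq_zero hB h.symm)), ho⟩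

variable {w : Fin 24 → LV}

lemma ob_inj (hB : IsLeech B) (hw : OB B w) {x y : LV}
    (h : ∀ i, pairZ B x (w i) = pairZ B y (w i)) : x = y := by
  rw [← sub_eq_zero]
  refine orth_complete hB w (fun i e => (hw.1 i).ne' (by rw [e, pz_zero_left])) hw.2 _ fun i => ?_
  rw [pz_sub_left, h, sub_self]

lemma ob_coord (hw : OB B w) (n : Fin 24 → ℤ) (i : Fin 24) :
    pairZ B (∑ j, n j • w j) (w i) = n i * pairZ B (w i) (w i) := by
  rw [pz_sum_left, Finset.sum_eq_single i]
  · rw [pz_smul_left]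
  · intro j _ hj
    rw [pz_smul_left, hw.2 j i hj, mul_zero]
  · simp

lemma ob_parseval (hB : IsLeech B) (hw : OB B w) (x y : LV) :
    (pairZ B x y : ℂ) = ∑ i, (pairZ B x (w i) : ℂ) * pairZ B y (w i) / pairZ B (w i) (w i) := by
  set P : ℤ := ∏ i, pairZ B (w i) (w i) with hP
  have hP0 : P ≠ 0 := Finset.prod_ne_zero_iff.2 fun i _ => (hw.1 i).ne'
  have hdv : ∀ i, ∃ e, P = pairZ B (w i) (w i) * e := fun i =>
    Finset.dvd_prod_of_mem _ (Finset.mem_univ i)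
  choose e he using hdv
  have h1 : P • x = ∑ i, (e i * pairZ B x (w i)) • w i := by
    refine ob_inj hB hw fun i => ?_
    rw [ob_coord hw, pz_smul_left, he i]; ring
  have h2 : P * pairZ B x y = ∑ i, (e i * pairZ B x (w i)) * pairZ B y (w i) := by
    rw [← pz_smul_left, h1, pz_sum_left]
    exact Finset.sum_congr rfl fun i _ => by rw [pz_smul_left, pz_comm hB y]
  have h3 : (P : ℂ) * pairZ B x y =
      ∑ i, ((e i : ℂ) * pairZ B x (w i)) * pairZ B y (w i) := by exact_mod_cast h2
  have hPc : (P : ℂ) ≠ 0 := by exact_mod_cast hP0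
  apply mul_left_cancel₀ hPc
  rw [h3, Finset.mul_sum]
  refine Finset.sum_congr rfl fun i _ => ?_
  have hd : (pairZ B (w i) (w i) : ℂ) ≠ 0 := by exact_mod_cast (hw.1 i).ne'
  rw [show (P : ℂ) = pairZ B (w i) (w i) * e i by exact_mod_cast he i]
  field_simp

/-- product of sums -/
lemma prod_sums {n : ℕ} (f : Fin n → ℤ → ℂ) (hf : ∀ i, Summable fun k => ‖f i k‖) :
    Summable (fun k : Fin n → ℤ => ‖∏ i, f i (k i)‖) ∧
    ∑' k : Fin n → ℤ, ∏ i, f i (k i) = ∏ i, ∑' k, f i k := by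
  induction n with
  | zero =>
    refine ⟨(hasSum_fintype _).summable, ?_⟩
    rw [tsum_fintype]; simp
  | succ n ih =>
    obtain ⟨h1, h2⟩ := ih (fun i => f i.succ) (fun i => hf _)
    have e : ∀ p : ℤ × (Fin n → ℤ), ∏ i, f i (Fin.consEquiv (fun _ => ℤ) p i) =
        f 0 p.1 * ∏ i, f i.succ (p.2 i) := by
      intro p; rw [Fin.prod_univ_succ]; simp [Fin.consEquiv]
    constructor
    · rw [← (Fin.consEquiv (fun _ : Fin (n+1) => ℤ)).summable_iff]
      refine (summable_mul_of_summable_norm (hf 0) h1).norm.congr fun p => ?_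
      rw [← e]; rfl
    · rw [← (Fin.consEquiv (fun _ : Fin (n+1) => ℤ)).tsum_eq, Fin.prod_univ_succ, ← h2,
        tsum_mul_tsum_of_summable_norm (hf 0) h1]
      exact tsum_congr fun p => e p

end T1

section T2

variable {B : Matrix (Fin 24) (Fin 24) ℤ} {w : Fin 24 → LV}

lemma eC_add (x y : ℂ) : eC (x + y) = eC x * eC y := by
  rw [eC, eC, eC, mul_add, Complex.exp_add]

lemma eC_int (n : ℤ) : eC n = 1 := by
  rw [eC, Complex.exp_eq_one_iff]; exact ⟨n, by ring⟩

lemma eC_eq_one {x : ℂ} (h : eC x = 1) : ∃ n : ℤ, x = n := by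
  rw [eC, Complex.exp_eq_one_iff] at h
  obtain ⟨n, hn⟩ := h
  refine ⟨n, ?_⟩
  have h2 : (2 * (π : ℂ) * Complex.I) ≠ 0 := Complex.two_pi_I_ne_zero
  apply mul_left_cancel₀ h2
  rw [hn]; ring

/-- the subgroup generated by the orthogonal vectors, as a kernel -/
def obHom (B : Matrix (Fin 24) (Fin 24) ℤ) (w : Fin 24 → LV) :
    LV →+ ((i : Fin 24) → ZMod (pairZ B (w i) (w i)).toNat) where
  toFun x i := (pairZ B x (w i) : ℤ)
  map_zero' := by ext i; simp [pz_zero_left]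
  map_add' x y := by ext i; simp [pz_add_left]

abbrev obQ (B : Matrix (Fin 24) (Fin 24) ℤ) (w : Fin 24 → LV) := LV ⧸ (obHom B w).ker

lemma obQ_finite (hw : OB B w) : Finite (obQ B w) := by
  have : ∀ i, NeZero (pairZ B (w i) (w i)).toNat := fun i => ⟨by
    have := hw.1 i; omega⟩
  exact Finite.of_injective _ (QuotientAddGroup.kerLift_injective (obHom B w))

lemma mem_ker_iff (hB : IsLeech B) (hw : OB B w) (x : LV) :
    x ∈ (obHom B w).ker ↔ ∃ n : Fin 24 → ℤ, x = ∑ j, n j • w j := by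
  rw [AddMonoidHom.mem_ker]
  constructor
  · intro h
    have h1 : ∀ i, ∃ n, pairZ B x (w i) = pairZ B (w i) (w i) * n := by
      intro i
      have h2 : ((pairZ B x (w i) : ℤ) : ZMod (pairZ B (w i) (w i)).toNat) = 0 := congrFun h i
      rw [ZMod.intCast_zmod_eq_zero_iff_dvd] at h2
      rwa [Int.toNat_of_nonneg (hw.1 i).le] at h2
    choose n hn using h1
    refine ⟨n, ob_inj hB hw fun i => ?_⟩
    rw [ob_coord hw, hn]; ring
  · rintro ⟨n, rfl⟩
    ext i
    show ((pairZ B _ (w i) : ℤ) : ZMod (pairZ B (w i) (w i)).toNat) = 0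
    rw [ob_coord hw, ZMod.intCast_zmod_eq_zero_iff_dvd, Int.toNat_of_nonneg (hw.1 i).le]
    exact Dvd.intro_left _ rfl

lemma ob_bij (hB : IsLeech B) (hw : OB B w) :
    Function.Bijective (fun p : obQ B w × (Fin 24 → ℤ) => p.1.out + ∑ j, p.2 j • w j) := by
  constructor
  · rintro ⟨a, n⟩ ⟨b, m⟩ h
    simp only at h
    have ha : ∀ (a : obQ B w) (n : Fin 24 → ℤ),
        (QuotientAddGroup.mk (a.out + ∑ j, n j • w j) : obQ B w) = a := by
      intro a n
      rw [QuotientAddGroup.mk_add, (QuotientAddGroup.eq_zero_iff _).2 ((mem_ker_iff hB hw _).2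
        ⟨n, rfl⟩), add_zero]
      exact Quotient.out_eq' a
    have hab : a = b := by rw [← ha a n, h, ha b m]
    subst hab
    have h2 := add_left_cancel h
    have : n = m := by
      ext i
      have h3 := ob_coord hw n i
      rw [h2, ob_coord hw] at h3
      exact (mul_right_cancel₀ (hw.1 i).ne' h3).symm
    rw [this]
  · intro x
    have h : -(QuotientAddGroup.mk x : obQ B w).out + x ∈ (obHom B w).ker :=
      QuotientAddGroup.eq.1 (Quotient.out_eq' _)
    obtain ⟨n, hn⟩ := (mem_ker_iff hB hw _).1 h
    exact ⟨⟨_, n⟩, by simp only; rw [← hn]; abel⟩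

def chi (B : Matrix (Fin 24) (Fin 24) ℤ) (w : Fin 24 → LV) (k : Fin 24 → ℤ) (x : LV) : ℂ :=
  eC (∑ i, (k i : ℂ) * pairZ B x (w i) / pairZ B (w i) (w i))

lemma chi_add (k : Fin 24 → ℤ) (x y : LV) : chi B w k (x + y) = chi B w k x * chi B w k y := by
  rw [chi, chi, chi, ← eC_add, ← Finset.sum_add_distrib]
  congr 1
  refine Finset.sum_congr rfl fun i _ => ?_
  rw [pz_add_left]; push_cast; ring

lemma chi_ker (hB : IsLeech B) (hw : OB B w) (k : Fin 24 → ℤ) {x : LV}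
    (hx : x ∈ (obHom B w).ker) : chi B w k x = 1 := by
  obtain ⟨n, rfl⟩ := (mem_ker_iff hB hw _).1 hx
  rw [chi, ← eC_int (∑ i, k i * n i)]
  congr 1
  push_cast
  refine Finset.sum_congr rfl fun i _ => ?_
  rw [ob_coord hw]
  have hd : (pairZ B (w i) (w i) : ℂ) ≠ 0 := by exact_mod_cast (hw.1 i).ne'
  push_cast; field_simp

lemma chi_trivial (hB : IsLeech B) (hw : OB B w) (k : Fin 24 → ℤ) (h : ∀ x, chi B w k x = 1) :
    ∃ u, ∀ i, pairZ B u (w i) = k i := by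
  have h1 : ∀ x, ∃ n : ℤ, ∑ i, (k i : ℂ) * pairZ B x (w i) / pairZ B (w i) (w i) = n :=
    fun x => eC_eq_one (h x)
  choose n hn using h1
  have hadd : ∀ x y, n (x + y) = n x + n y := by
    intro x y
    have : (n (x + y) : ℂ) = n x + n y := by
      rw [← hn, ← hn, ← hn, ← Finset.sum_add_distrib]
      refine Finset.sum_congr rfl fun i _ => ?_
      rw [pz_add_left]; push_cast; ring
    exact_mod_cast this
  let L : LV →+ ℤ := AddMonoidHom.mk' n hadd
  obtain ⟨u, hu⟩ := pz_dual hB L.toIntLinearMap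
  refine ⟨u, fun i => ?_⟩
  have h2 : pairZ B u (w i) = n (w i) := hu (w i)
  have h3 := hn (w i)
  rw [Finset.sum_eq_single i] at h3
  · have hd : (pairZ B (w i) (w i) : ℂ) ≠ 0 := by exact_mod_cast (hw.1 i).ne'
    rw [mul_div_assoc, div_self hd, mul_one] at h3
    rw [h2]; exact_mod_cast h3.symm
  · intro j _ hj
    rw [hw.2 i j (Ne.symm hj)]; simp
  · simp

lemma chi_range (hB : IsLeech B) (hw : OB B w) (u x : LV) :
    chi B w (fun i => pairZ B u (w i)) x = 1 := by
  rw [chi, ← ob_parseval hB hw, eC_int]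

lemma chi_out (hB : IsLeech B) (hw : OB B w) (k : Fin 24 → ℤ) (x : LV) :
    chi B w k (QuotientAddGroup.mk x : obQ B w).out = chi B w k x := by
  have h : -(QuotientAddGroup.mk x : obQ B w).out + x ∈ (obHom B w).ker :=
      QuotientAddGroup.eq.1 (Quotient.out_eq' _)
  have h2 := chi_add (B := B) (w := w) k (QuotientAddGroup.mk x : obQ B w).out
    (-(QuotientAddGroup.mk x : obQ B w).out + x)
  rw [chi_ker hB hw k h, mul_one] at h2
  rw [← h2]; congr 1; abel

open Classical in
lemma chi_sum (hB : IsLeech B) (hw : OB B w) [Fintype (obQ B w)] (k : Fin 24 → ℤ) :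
    ∑ a : obQ B w, chi B w k a.out =
      if (∃ u, ∀ i, pairZ B u (w i) = k i) then (Fintype.card (obQ B w) : ℂ) else 0 := by
  split_ifs with h
  · obtain ⟨u, hu⟩ := h
    have : k = fun i => pairZ B u (w i) := funext fun i => (hu i).symm
    subst this
    simp [chi_range hB hw]
  · have h1 : ∃ x, chi B w k x ≠ 1 := by
      by_contra hc
      push Not at hc
      exact h (chi_trivial hB hw k hc)
    obtain ⟨x, hx⟩ := h1
    have h2 : chi B w k x * ∑ a : obQ B w, chi B w k a.out = ∑ a : obQ B w, chi B w k a.out := by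
      rw [Finset.mul_sum, ← Equiv.sum_comp (Equiv.addLeft (QuotientAddGroup.mk x : obQ B w))
        (fun a : obQ B w => chi B w k a.out)]
      refine Finset.sum_congr rfl fun a _ => ?_
      rw [← chi_add, ← chi_out hB hw k (x + a.out)]
      congr 3
      rw [Equiv.coe_addLeft, QuotientAddGroup.mk_add]
      congr 1
      exact (Quotient.out_eq' a)
    have h3 : (chi B w k x - 1) * ∑ a : obQ B w, chi B w k a.out = 0 := by
      rw [sub_mul, h2, one_mul, sub_self]
    exact (mul_eq_zero.1 h3).resolve_left (sub_ne_zero.2 hx)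

end T2

section T3

variable {B : Matrix (Fin 24) (Fin 24) ℤ} {w : Fin 24 → LV}

def tht (B : Matrix (Fin 24) (Fin 24) ℤ) (u : LV) (τ : ℂ) : ℂ :=
  cexp (π * Complex.I * pairZ B u u * τ)

def tth (B : Matrix (Fin 24) (Fin 24) ℤ) (τ : ℂ) : ℂ := ∑' u : LV, tht B u τ

lemma tht_prod (hB : IsLeech B) (hw : OB B w) (u : LV) (τ : ℂ) :
    tht B u τ = ∏ i, cexp (π * Complex.I * (pairZ B u (w i)) ^ 2 * (τ / pairZ B (w i) (w i))) := by
  rw [tht, ← Complex.exp_sum, ob_parseval hB hw u u, Finset.mul_sum, Finset.sum_mul]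
  congr 1
  refine Finset.sum_congr rfl fun i _ => ?_
  ring

lemma im_div (hw : OB B w) {τ : ℂ} (hτ : 0 < τ.im) (i : Fin 24) :
    0 < (τ / (pairZ B (w i) (w i) : ℂ)).im := by
  rw [show (pairZ B (w i) (w i) : ℂ) = ((pairZ B (w i) (w i) : ℝ) : ℂ) by push_cast; rfl,
    Complex.div_ofReal_im]
  exact div_pos hτ (by exact_mod_cast hw.1 i)

lemma term_summable (hw : OB B w) {τ : ℂ} (hτ : 0 < τ.im) (c : Fin 24 → ℂ) (i : Fin 24) :
    Summable fun k : ℤ => ‖jacobiTheta₂_term k (c i) (τ / pairZ B (w i) (w i))‖ :=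
  ((summable_jacobiTheta₂_term_iff _ _).2 (im_div hw hτ i)).norm

lemma tht_summable (hB : IsLeech B) {τ : ℂ} (hτ : 0 < τ.im) :
    Summable fun u => ‖tht B u τ‖ := by
  obtain ⟨w, hw⟩ := exists_ob hB
  have h := (prod_sums (fun i k => jacobiTheta₂_term k ((0 : Fin 24 → ℂ) i)
    (τ / pairZ B (w i) (w i))) (term_summable hw hτ 0)).1
  have hinj : Function.Injective (fun (u : LV) (i : Fin 24) => pairZ B u (w i)) :=
    fun x y e => ob_inj hB hw fun i => congrFun e i
  refine (h.comp_injective hinj).congr fun u => ?_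
  rw [tht_prod hB hw]
  simp [jacobiTheta₂_term]

/-- one dimensional step -/
lemma one_dim {d : ℝ} (hd : 0 < d) {τ : ℂ} (hτ : 0 < τ.im) (c : ℤ) :
    Summable (fun n : ℤ => ‖cexp (π * Complex.I * (c + n * d) ^ 2 * ((-1 / τ) / d))‖) ∧
    ∑' n : ℤ, cexp (π * Complex.I * (c + n * d) ^ 2 * ((-1 / τ) / d)) =
      (-Complex.I * (τ / d)) ^ (1 / 2 : ℂ) * jacobiTheta₂ (c / d) (τ / d) := by
  have hτ0 : τ ≠ 0 := by rintro rfl; simp at hτ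
  have hd0 : (d : ℂ) ≠ 0 := by exact_mod_cast hd.ne'
  have e : ∀ n : ℤ, cexp (π * Complex.I * (c + n * d) ^ 2 * ((-1 / τ) / d)) =
      cexp (-π * Complex.I * (c / d) ^ 2 / (τ / d)) *
        jacobiTheta₂_term (-n) ((c / d) / (τ / d)) (-1 / (τ / d)) := by
    intro n
    rw [jacobiTheta₂_term, ← Complex.exp_add]
    congr 1
    push_cast
    field_simp
    ring
  have him : 0 < (-1 / (τ / d)).im := by
    have : 0 < (τ / (d : ℂ)).im := by rw [Complex.div_ofReal_im]; exact div_pos hτ hd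
    rw [neg_div, Complex.neg_im, one_div, Complex.inv_im]
    have h2 : 0 < Complex.normSq (τ / d) := Complex.normSq_pos.2 (div_ne_zero hτ0 hd0)
    rw [neg_div, neg_neg]
    exact div_pos this h2
  have hs := (summable_jacobiTheta₂_term_iff ((c / d) / (τ / d)) _).2 him
  constructor
  · simp_rw [e, norm_mul]
    refine Summable.mul_left _ ?_
    exact ((Equiv.neg ℤ).summable_iff.2 hs.norm)
  · simp_rw [e]
    have hn := (Equiv.neg ℤ).tsum_eq (fun n => jacobiTheta₂_term n ((c / d) / (τ / d))
      (-1 / (τ / d)))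
    simp only [Equiv.neg_apply] at hn
    rw [tsum_mul_left, hn, jacobiTheta₂_functional_equation (c / d) (τ / d), jacobiTheta₂]
    have hne : (-Complex.I * (τ / d)) ^ (1 / 2 : ℂ) ≠ 0 := by
      rw [Complex.cpow_ne_zero_iff_of_exponent_ne_zero (by norm_num)]
      exact mul_ne_zero (neg_ne_zero.2 Complex.I_ne_zero) (div_ne_zero hτ0 hd0)
    rw [← mul_assoc, ← mul_assoc, mul_one_div_cancel hne, one_mul]

lemma tth_S_aux (hB : IsLeech B) (hw : OB B w) {τ : ℂ} (hτ : 0 < τ.im) :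
    tth B (-1 / τ) = (∏ i, (-Complex.I * (τ / pairZ B (w i) (w i))) ^ (1 / 2 : ℂ)) *
      (Nat.card (obQ B w) * tth B τ) := by
  classical
  have := obQ_finite hw
  have := Fintype.ofFinite (obQ B w)
  have hτ' : 0 < (-1 / τ).im := by
    rw [neg_div, Complex.neg_im, one_div, Complex.inv_im, neg_div, neg_neg]
    exact div_pos hτ (Complex.normSq_pos.2 (by rintro rfl; simp at hτ))
  have hdc : ∀ i, (((pairZ B (w i) (w i) : ℤ) : ℝ) : ℂ) = (pairZ B (w i) (w i) : ℂ) := by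
    intro i; push_cast; rfl
  have hod : ∀ c : LV, _ := fun c i => one_dim (d := (pairZ B (w i) (w i) : ℝ))
    (by exact_mod_cast hw.1 i) hτ (pairZ B c (w i))
  -- decompose
  have h1 : tth B (-1 / τ) = ∑ a : obQ B w, ∑' n : Fin 24 → ℤ,
      tht B (a.out + ∑ j, n j • w j) (-1 / τ) := by
    rw [tth, ← (Equiv.ofBijective _ (ob_bij hB hw)).tsum_eq, Summable.tsum_prod, tsum_fintype]
    · rfl
    · exact (Equiv.ofBijective _ (ob_bij hB hw)).summable_iff.2 (tht_summable hB hτ').of_norm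
  have h2 : ∀ a : obQ B w, ∑' n : Fin 24 → ℤ, tht B (a.out + ∑ j, n j • w j) (-1 / τ) =
      (∏ i, (-Complex.I * (τ / pairZ B (w i) (w i))) ^ (1 / 2 : ℂ)) *
       ∑' k : Fin 24 → ℤ, chi B w k a.out *
        ∏ i, cexp (π * Complex.I * (k i) ^ 2 * (τ / pairZ B (w i) (w i))) := by
    intro a
    have h3 := (prod_sums (fun i (n : ℤ) => cexp (π * Complex.I *
      ((pairZ B a.out (w i) : ℂ) + n * ((pairZ B (w i) (w i) : ℝ) : ℂ)) ^ 2 *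
        ((-1 / τ) / ((pairZ B (w i) (w i) : ℝ) : ℂ)))) (fun i => (hod a.out i).1)).2
    rw [Finset.prod_congr rfl (fun i _ => (hod a.out i).2), Finset.prod_mul_distrib] at h3
    have h4 := (prod_sums (fun i k => jacobiTheta₂_term k ((fun i => (pairZ B a.out (w i) : ℂ) /
      pairZ B (w i) (w i)) i) (τ / pairZ B (w i) (w i))) (term_summable hw hτ _)).2
    simp only [hdc] at h3
    simp only [jacobiTheta₂] at h3
    rw [← h4] at h3
    convert h3 using 2
    · ext n
      rw [tht_prod hB hw]
      refine Finset.prod_congr rfl fun i _ => ?_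
      rw [pz_add_left, ob_coord hw]; push_cast; rfl
    · refine tsum_congr fun k => ?_
      rw [chi, eC, Finset.mul_sum, Complex.exp_sum, ← Finset.prod_mul_distrib]
      refine Finset.prod_congr rfl fun i _ => ?_
      rw [← Complex.exp_add, jacobiTheta₂_term]
      congr 1; ring
  rw [h1, Finset.sum_congr rfl fun a _ => h2 a, ← Finset.mul_sum]
  congr 1
  have hs := (prod_sums (fun i k => jacobiTheta₂_term k ((0 : Fin 24 → ℂ) i)
    (τ / pairZ B (w i) (w i))) (term_summable hw hτ 0)).1
  have hs' : ∀ a : obQ B w, Summable fun k : Fin 24 → ℤ => chi B w k a.out *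
        ∏ i, cexp (π * Complex.I * (k i) ^ 2 * (τ / pairZ B (w i) (w i))) := by
    intro a
    refine Summable.of_norm_bounded hs fun k => ?_
    have hc : ‖chi B w k a.out‖ = 1 := by
      rw [chi, eC, show (2 * (π : ℂ) * Complex.I * ∑ i, (k i : ℂ) * pairZ B a.out (w i) /
        pairZ B (w i) (w i)) = ((2 * π * ∑ i, (k i : ℝ) * pairZ B a.out (w i) /
        pairZ B (w i) (w i) : ℝ) : ℂ) * Complex.I by push_cast; ring]
      exact Complex.norm_exp_ofReal_mul_I _
    rw [norm_mul, hc, one_mul]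
    simp [jacobiTheta₂_term]
  rw [← Summable.tsum_finsetSum (fun a _ => hs' a)]
  simp_rw [← Finset.sum_mul, chi_sum hB hw]
  have hinj : Function.Injective (fun (u : LV) (i : Fin 24) => pairZ B u (w i)) :=
    fun x y e => ob_inj hB hw fun i => congrFun e i
  rw [← hinj.tsum_eq, tth, ← tsum_mul_left]
  · refine tsum_congr fun u => ?_
    rw [if_pos ⟨u, fun i => rfl⟩, tht_prod hB hw, Nat.card_eq_fintype_card]
  · intro k hk
    by_contra hc
    apply hk
    simp only
    rw [if_neg, zero_mul]
    rintro ⟨u, hu⟩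
    exact hc ⟨u, funext hu⟩

end T3

section T4

variable {B : Matrix (Fin 24) (Fin 24) ℤ}

lemma half_cpow (d : ℝ) (hd : 0 < d) : ∃ c : ℂ, ∀ x : ℂ, x ≠ 0 →
    (x / d) ^ (1 / 2 : ℂ) = c * x ^ (1 / 2 : ℂ) := by
  refine ⟨cexp (Real.log (1 / d) * (1 / 2 : ℂ)), fun x hx => ?_⟩
  have hd' : (d : ℂ) ≠ 0 := by exact_mod_cast hd.ne'
  rw [Complex.cpow_def_of_ne_zero (div_ne_zero hx hd'), Complex.cpow_def_of_ne_zero hx,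
    ← Complex.exp_add, show x / d = ((1 / d : ℝ) : ℂ) * x by push_cast; ring,
    Complex.log_ofReal_mul (by positivity) hx, add_mul]

lemma tth_S_const (hB : IsLeech B) : ∃ κ : ℂ, ∀ τ : ℂ, 0 < τ.im →
    tth B (-1 / τ) = κ * (τ ^ 12 * tth B τ) := by
  obtain ⟨w, hw⟩ := exists_ob hB
  have hpos : ∀ i, (0 : ℝ) < (pairZ B (w i) (w i) : ℤ) := fun i => by
    exact_mod_cast hw.1 i
  choose c hc using fun i => half_cpow (pairZ B (w i) (w i) : ℤ) (hpos i)
  refine ⟨(∏ i, c i) * Nat.card (obQ B w), fun τ hτ => ?_⟩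
  have hτ0 : τ ≠ 0 := by rintro rfl; simp at hτ
  have h0 : -Complex.I * τ ≠ 0 := by simp [hτ0]
  rw [tth_S_aux hB hw hτ]
  have : ∀ i, (-Complex.I * (τ / pairZ B (w i) (w i))) ^ (1 / 2 : ℂ)
      = c i * (-Complex.I * τ) ^ (1 / 2 : ℂ) := fun i => by
    rw [← hc i _ h0]; congr 1; push_cast; ring
  rw [Finset.prod_congr rfl fun i _ => this i, Finset.prod_mul_distrib]
  have h24 : (∏ _i : Fin 24, (-Complex.I * τ) ^ (1 / 2 : ℂ)) = τ ^ 12 := by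
    rw [Finset.prod_const, Finset.card_univ, Fintype.card_fin, ← Complex.cpow_nat_mul]
    norm_num
    rw [mul_pow, show Complex.I ^ 12 = (Complex.I ^ 4) ^ 3 by ring, Complex.I_pow_four]
    norm_num
  rw [h24]; ring

lemma tth_I_ne (hB : IsLeech B) : tth B Complex.I ≠ 0 := by
  have e : ∀ u, tht B u Complex.I = ((Real.exp (-π * pairZ B u u) : ℝ) : ℂ) := by
    intro u
    rw [tht, Complex.ofReal_exp]; congr 1
    push_cast
    linear_combination (π * (pairZ B u u : ℂ)) * Complex.I_mul_I
  have hs : Summable fun u => Real.exp (-π * pairZ B u u) := by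
    have := tht_summable hB (τ := Complex.I) (by simp)
    refine this.congr fun u => ?_
    rw [e, Complex.norm_real, Real.norm_of_nonneg (Real.exp_pos _).le]
  rw [tth, tsum_congr e, ← Complex.ofReal_tsum]
  have := hs.tsum_pos (fun u => (Real.exp_pos _).le) 0 (Real.exp_pos _)
  exact_mod_cast this.ne'

lemma tth_S (hB : IsLeech B) (τ : ℂ) (hτ : 0 < τ.im) : tth B (-1 / τ) = τ ^ 12 * tth B τ := by
  obtain ⟨κ, hκ⟩ := tth_S_const hB
  have h1 := hκ Complex.I (by simp)
  have hI12 : Complex.I ^ 12 = 1 := by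
    rw [show (12 : ℕ) = 4 * 3 by norm_num, pow_mul, Complex.I_pow_four]; norm_num
  rw [show (-1 : ℂ) / Complex.I = Complex.I by
    rw [div_eq_iff Complex.I_ne_zero, Complex.I_mul_I], hI12, one_mul] at h1
  have : κ = 1 := by
    have h2 := tth_I_ne hB
    exact mul_right_cancel₀ h2 (by rw [one_mul]; exact h1.symm)
  rw [hκ τ hτ, this, one_mul]

lemma shell_finite (hB : IsLeech B) (R : ℤ) : {u : LV | pairZ B u u ≤ R}.Finite := by
  have := (tht_summable hB (τ := Complex.I) (by simp)).tendsto_cofinite_zero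
  have h2 := this.eventually_lt_const (u := Real.exp (-π * R)) (Real.exp_pos _)
  rw [Filter.eventually_cofinite] at h2
  refine h2.subset fun u hu => ?_
  simp only [Set.mem_ofPred_eq, not_lt] at hu ⊢
  rw [tht, Complex.norm_exp]
  apply Real.exp_le_exp.2
  have : (π * Complex.I * pairZ B u u * Complex.I : ℂ).re = -π * pairZ B u u := by
    rw [show (π * Complex.I * pairZ B u u * Complex.I : ℂ) = ((-π * pairZ B u u : ℝ) : ℂ) by
      push_cast; linear_combination (π * (pairZ B u u : ℂ)) * Complex.I_mul_I]
    exact Complex.ofReal_re _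
  rw [this]
  have h3 : ((pairZ B u u : ℤ) : ℝ) ≤ R := by exact_mod_cast hu
  nlinarith [Real.pi_pos]

def halfn (B : Matrix (Fin 24) (Fin 24) ℤ) (u : LV) : ℕ := (pairZ B u u / 2).toNat

lemma halfn_eq (hB : IsLeech B) (u : LV) : pairZ B u u = 2 * (halfn B u : ℤ) := by
  have h1 := pz_nonneg hB u
  obtain ⟨r, hr⟩ := pz_even hB u
  rw [halfn]; omega

lemma fiber_finite (hB : IsLeech B) (n : ℕ) : {u : LV | halfn B u = n}.Finite := by
  refine (shell_finite hB (2 * n)).subset fun u hu => ?_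
  have := halfn_eq hB u
  simp only [Set.mem_ofPred_eq] at hu ⊢
  rw [hu] at this; exact this.le

def shellN (B : Matrix (Fin 24) (Fin 24) ℤ) (n : ℕ) : ℕ := {u : LV | halfn B u = n}.ncard

/-- regroup -/
lemma regroup (hB : IsLeech B) {g : LV → ℂ} {s : ℂ} (h : HasSum g s) :
    HasSum (fun n : ℕ => ∑ u ∈ (fiber_finite hB n).toFinset, g u) s := by
  have h1 := ((Equiv.sigmaFiberEquiv (halfn B)).hasSum_iff).2 h
  refine h1.sigma fun n => ?_
  have hf : Finite {u : LV // halfn B u = n} := (fiber_finite hB n)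
  have := Fintype.ofFinite {u : LV // halfn B u = n}
  have := hasSum_fintype (fun c : {u : LV // halfn B u = n} => g c)
  rw [Finset.sum_subtype (p := fun u => halfn B u = n) _ (fun x => by simp)]
  exact this

lemma tht_half (hB : IsLeech B) (u : LV) (τ : ℂ) :
    tht B u τ = Function.Periodic.qParam 1 τ ^ (halfn B u) := by
  rw [qpow_eq, tht, eC, halfn_eq hB]; congr 1; push_cast; ring

lemma theta_QE (hB : IsLeech B) :
    QE (fun τ => tth B τ) (PowerSeries.mk fun n => (shellN B n : ℂ)) := by
  intro τ
  have := regroup hB (tht_summable hB (τ := τ) τ.im_pos).of_norm.hasSum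
  refine HasSum.congr_fun' this fun n => ?_
  rw [PowerSeries.coeff_mk, Finset.sum_congr rfl (g := fun _ => Function.Periodic.qParam 1 (τ:ℂ) ^ n)]
  · rw [Finset.sum_const, shellN, Set.ncard_eq_toFinset_card _ (fiber_finite hB n), nsmul_eq_mul,
      smul_eq_mul]
  · intro u hu
    rw [tht_half hB]
    congr 1; simpa using hu

lemma theta_S (hB : IsLeech B) (τ : ℍ) :
    tth B ((ModularGroup.S • τ : ℍ) : ℂ) = (τ : ℂ) ^ (12 : ℤ) * tth B τ := by
  rw [UpperHalfPlane.modular_S_smul]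
  have := tth_S hB τ τ.im_pos
  rw [show ((UpperHalfPlane.mk (-(τ : ℂ))⁻¹ τ.im_inv_neg_coe_pos : ℍ) : ℂ) = -1 / τ by
    show (-(τ : ℂ))⁻¹ = _
    rw [neg_div, one_div, inv_neg], this]
  norm_cast

end T4

section T5
open ModularForm

variable {B : Matrix (Fin 24) (Fin 24) ℤ}

lemma mf_S {k : ℤ} (f : ModularForm 𝒮ℒ k) (τ : ℍ) :
    f (ModularGroup.S • τ) = (τ : ℂ) ^ k * f τ := by
  have := SlashInvariantForm.slash_action_eqn'' (Γ := 𝒮ℒ) f (γ := (ModularGroup.S : GL (Fin 2) ℝ))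
    (MonoidHom.mem_range.2 ⟨ModularGroup.S, rfl⟩) τ
  have e1 : denom (ModularGroup.S : GL (Fin 2) ℝ) τ = (τ : ℂ) := by
    erw [ModularGroup.denom_apply]; simp [ModularGroup.S]
  rw [e1] at this
  exact this

lemma e4_coeff (m : ℕ) : (qExpansion 1 (E₄ : ℍ → ℂ)).coeff m =
    if m = 0 then 1 else 240 * (ArithmeticFunction.sigma 3 m : ℂ) := by
  rw [EisensteinSeries.E_qExpansion_coeff _ ⟨2, rfl⟩, show bernoulli 4 = -1 / 30 by decide +kernel]
  norm_num

lemma e6_coeff (m : ℕ) : (qExpansion 1 (E₆ : ℍ → ℂ)).coeff m =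
    if m = 0 then 1 else -504 * (ArithmeticFunction.sigma 5 m : ℂ) := by
  rw [EisensteinSeries.E_qExpansion_coeff _ ⟨3, rfl⟩, show bernoulli 6 = 1 / 42 by decide +kernel]
  norm_num

lemma shellN_zero (hB : IsLeech B) : shellN B 0 = 1 := by
  rw [shellN, Set.ncard_eq_one]
  refine ⟨0, ?_⟩
  ext u
  have := halfn_eq hB u
  simp only [Set.mem_ofPred_eq, Set.mem_singleton_iff]
  constructor
  · intro h; rw [h] at this; exact pz_eq_zero hB (by simpa using this)
  · rintro rfl; rw [pz_zero_left] at this; omega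

lemma shellN_one (hB : IsLeech B) : shellN B 1 = 0 := by
  rw [shellN, Set.ncard_eq_zero (fiber_finite hB 1)]
  ext u
  have := halfn_eq hB u
  simp only [Set.mem_ofPred_eq, Set.mem_empty_iff_false, iff_false]
  intro h; rw [h] at this
  exact hB.2.2.2.2 u (by simpa using this)

lemma theta_series (hB : IsLeech B) :
    (PowerSeries.mk fun n => (shellN B n : ℂ)) = (7 / 12 : ℂ) • (qExpansion 1 (E₄ : ℍ → ℂ)) ^ 3
      + (5 / 12 : ℂ) • (qExpansion 1 (E₆ : ℍ → ℂ)) ^ 2 := by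
  set P := (PowerSeries.mk fun n => (shellN B n : ℂ)) with hP
  have h := ((theta_QE hB).add (((QE.of_mf E₄).pow 3).smul (-(7 / 12)))).add
    (((QE.of_mf E₆).pow 2).smul (-(5 / 12)))
  have hS : ∀ τ : ℍ, (fun τ : ℍ => tth B τ + -(7 / 12) * E₄ τ ^ 3 + -(5 / 12) * E₆ τ ^ 2)
      (ModularGroup.S • τ) = (τ : ℂ) ^ (12 : ℤ) *
      (fun τ : ℍ => tth B τ + -(7 / 12) * E₄ τ ^ 3 + -(5 / 12) * E₆ τ ^ 2) τ := by
    intro τ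
    simp only
    rw [theta_S hB, mf_S, mf_S]
    have e1 : (τ : ℂ) ^ (12 : ℤ) = (τ : ℂ) ^ 12 := by norm_cast
    have e2 : (τ : ℂ) ^ (4 : ℤ) = (τ : ℂ) ^ 4 := by norm_cast
    have e3 : (τ : ℂ) ^ (6 : ℤ) = (τ : ℂ) ^ 6 := by norm_cast
    push_cast
    rw [e1, e2, e3]; ring
  have hz : h.toMF hS = 0 := by
    apply ModularForm.sturm_bound_levelOne
    rw [h.qexp hS]
    have : ((2 : ℕ) : ℕ∞) ≤ (P + -(7 / 12 : ℂ) • (qExpansion 1 (E₄ : ℍ → ℂ)) ^ 3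
      + -(5 / 12 : ℂ) • (qExpansion 1 (E₆ : ℍ → ℂ)) ^ 2).order := by
      apply PowerSeries.nat_le_order
      intro i hi
      interval_cases i <;>
      norm_num [pow_succ, PowerSeries.coeff_mul, Finset.Nat.antidiagonal_succ, e4_coeff,
        e6_coeff, shellN_zero hB, shellN_one hB, hP, -PowerSeries.coeff_zero_eq_constantCoeff]
    refine lt_of_lt_of_le ?_ this
    rw [show Int.toNat 12 / 12 = 1 from rfl]
    norm_num
  have h0 := h.qexp hS
  rw [hz, FunLike.coe_zero, qExpansion_zero] at h0
  have h1 : P + -(7 / 12 : ℂ) • (qExpansion 1 (E₄ : ℍ → ℂ)) ^ 3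
      + -(5 / 12 : ℂ) • (qExpansion 1 (E₆ : ℍ → ℂ)) ^ 2 = 0 := h0.symm
  rw [_root_.neg_smul, _root_.neg_smul] at h1
  linear_combination h1

lemma shell_values (hB : IsLeech B) : shellN B 2 = 196560 ∧ shellN B 3 = 16773120 ∧
    shellN B 4 = 398034000 := by
  have h := theta_series hB
  have s2 : ∀ n : ℕ, (shellN B n : ℂ) = _ := fun n => by
    have := congrArg (fun p => PowerSeries.coeff n p) h
    simp only [PowerSeries.coeff_mk] at this
    exact this
  have d : ∀ k, (ArithmeticFunction.sigma k 2 = 1 + 2 ^ k) ∧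
      (ArithmeticFunction.sigma k 3 = 1 + 3 ^ k) ∧
      (ArithmeticFunction.sigma k 4 = 1 + 2 ^ k + 4 ^ k) := by
    intro k
    simp only [ArithmeticFunction.sigma_apply]
    rw [show Nat.divisors 2 = {1, 2} by decide, show Nat.divisors 3 = {1, 3} by decide,
      show Nat.divisors 4 = {1, 2, 4} by decide]
    simp [add_assoc]
  refine ⟨?_, ?_, ?_⟩ <;> rw [← Nat.cast_inj (R := ℂ), s2] <;>
    norm_num [pow_succ, PowerSeries.coeff_mul, Finset.Nat.antidiagonal_succ, e4_coeff,
        e6_coeff, d, -PowerSeries.coeff_zero_eq_constantCoeff]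

lemma lattice_final (hB : IsLeech B) :
    (∀ x, ∃ w, pairZ B (x + (2:ℤ)•w) (x + (2:ℤ)•w) ≤ 8) ∧
    ∀ x y, pairZ B x x ≤ 8 → pairZ B x x = pairZ B y y → CoEq B x y := by
  obtain ⟨h2, h3, h4⟩ := shell_values hB
  refine lattice_main hB (shell_finite hB 8).toFinset (fun x => by simp) ?_ ?_
  · have : (shell_finite hB 8).toFinset = (Finset.range 5).biUnion
        (fun n => (fiber_finite hB n).toFinset) := by
      ext u
      have := halfn_eq hB u
      simp; omega
    rw [this, Finset.sum_biUnion]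
    · have e : ∀ n ∈ Finset.range 5, ∑ x ∈ (fiber_finite hB n).toFinset, wtn (pairZ B x x)
          = shellN B n * wtn (2 * n) := by
        intro n _
        rw [Finset.sum_congr rfl (g := fun _ => wtn (2 * n)), Finset.sum_const, shellN,
          Set.ncard_eq_toFinset_card _ (fiber_finite hB n), smul_eq_mul]
        intro x hx
        rw [halfn_eq hB x]
        congr 3; simpa using hx
      rw [Finset.sum_congr rfl e]
      simp [Finset.sum_range_succ, h2, h3, h4, shellN_zero hB, shellN_one hB, wtn]
    · intro i _ j _ hij
      simp only [Function.onFun]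
      rw [Finset.disjoint_left]
      intro x hx hy
      simp at hx hy; omega
  · have : {u : LV | halfn B u = 4}.Nonempty := by
      rw [← Set.ncard_pos (fiber_finite hB 4)]
      rw [shellN] at h4; omega
    obtain ⟨y, hy⟩ := this
    refine ⟨y, ?_⟩
    have h' : halfn B y = 4 := hy
    rw [halfn_eq hB, h']; rfl

end T5

section A1

local instance ms0 : MeasureTheory.MeasureSpace UnitAddCircle := ⟨AddCircle.haarAddCircle⟩

local instance ms1 : MeasureTheory.IsProbabilityMeasure
    (MeasureTheory.volume : MeasureTheory.Measure UnitAddCircle) :=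
  inferInstanceAs (MeasureTheory.IsProbabilityMeasure AddCircle.haarAddCircle)

lemma four_uniq {d ι : Type*} [Fintype d] (n : ι → d → ℤ) (hn : Function.Injective n) (c : ι → ℂ)
    (hc : Summable fun i => ‖c i‖)
    (h : ∀ x : d → ℝ, ∑' i, c i * eC (∑ j, (n i j : ℂ) * x j) = 0) : c = 0 := by
  have h1 : Summable fun i => c i • UnitAddTorus.mFourier (n i) := by
    refine Summable.of_norm ?_
    simpa [norm_smul, UnitAddTorus.mFourier_norm] using hc
  have h2 : ∑' i, c i • UnitAddTorus.mFourier (n i) = 0 := by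
    ext x
    have hx : ∃ y : d → ℝ, ∀ j, ((y j : ℝ) : UnitAddCircle) = x j :=
      ⟨fun j => (x j).out, fun j => Quotient.out_eq _⟩
    obtain ⟨y, hy⟩ := hx
    have h3 := ContinuousMap.hasSum_apply h1.hasSum x
    rw [← h3.tsum_eq, ContinuousMap.zero_apply, ← h y]
    refine tsum_congr fun i => ?_
    rw [ContinuousMap.smul_apply, smul_eq_mul]
    congr 1
    simp only [UnitAddTorus.mFourier, ContinuousMap.coe_mk]
    rw [eC, Finset.mul_sum, Complex.exp_sum]
    refine Finset.prod_congr rfl fun j _ => ?_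
    rw [← hy j, fourier_coe_apply]
    congr 1; push_cast; ring
  have h4 := h1.hasSum
  rw [h2] at h4
  have ho := (UnitAddTorus.orthonormal_mFourier (d := d)).comp n hn
  ext m
  have h5 := (h4.mapL (ContinuousMap.toLp 2 _ ℂ)).mapL (innerSL ℂ (UnitAddTorus.mFourierLp 2 (n m)))
  rw [map_zero, map_zero] at h5
  have h6 : ∀ i, i ≠ m → (innerSL ℂ (UnitAddTorus.mFourierLp 2 (n m)))
      ((ContinuousMap.toLp 2 _ ℂ) (c i • UnitAddTorus.mFourier (n i))) = 0 := by
    intro i hi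
    rw [map_smul, map_smul]
    have := ho.2 (Ne.symm hi)
    simp only [Function.comp] at this
    rw [innerSL_apply_apply, this, smul_zero]
  have h7 := (hasSum_single m h6).unique h5
  rw [map_smul, map_smul] at h7
  have := ho.1 m
  simp only [Function.comp] at this
  rw [innerSL_apply_apply, inner_self_eq_norm_sq_to_K, this] at h7
  simpa using h7

lemma pow_uniq (c : ℕ → ℂ) (h : ∀ s : ℂ, HasSum (fun m => c m * s ^ m) 0) : c = 0 := by
  refine four_uniq (d := Unit) (fun (m : ℕ) _ => (m : ℤ)) (fun a b e => by simpa using congrFun e ())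
    c ?_ ?_
  · simpa using (h 1).summable.norm
  · intro x
    rw [← (h (eC (x ()))).tsum_eq]
    refine tsum_congr fun m => ?_
    congr 1
    rw [eC, eC, ← Complex.exp_nat_mul]; congr 1; simp; ring

end A1

section A2

variable {B : Matrix (Fin 24) (Fin 24) ℤ} {k : ℤ} {φ : UpperHalfPlane → CV → ℂ} {f : ℕ → LV → ℂ}

lemma pc_add_left (x y z : CV) : pairC B (x + y) z = pairC B x z + pairC B y z := by
  simp [pairC, add_dotProduct]
lemma pc_add_right (x y z : CV) : pairC B x (y + z) = pairC B x y + pairC B x z := by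
  simp [pairC, mulVec_add, dotProduct_add]
lemma pc_smul_right (c : ℂ) (x y : CV) : pairC B x (c • y) = c * pairC B x y := by
  simp [pairC, mulVec_smul, dotProduct_smul]
lemma pc_smul_left (c : ℂ) (x y : CV) : pairC B (c • x) y = c * pairC B x y := by
  simp [pairC, smul_dotProduct]
lemma pc_lift (x y : LV) : pairC B (liftC x) (liftC y) = (pairZ B x y : ℂ) := by
  simp only [pairC, pairZ, liftC, dotProduct, mulVec, Matrix.map_apply]
  push_cast; rfl
lemma lift_add (x y : LV) : liftC (x + y) = liftC x + liftC y := by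
  ext i; simp [liftC]
lemma lift_smul (a : ℤ) (x : LV) : liftC (a • x) = (a : ℂ) • liftC x := by
  ext i; simp [liftC]

lemma pc_real (ℓ : LV) (x : Fin 24 → ℝ) :
    pairC B (liftC ℓ) (fun i => (x i : ℂ)) = ∑ j, (((ℓ ᵥ* B) j : ℤ) : ℂ) * x j := by
  rw [pairC, dotProduct_mulVec]
  simp only [dotProduct]
  refine Finset.sum_congr rfl fun j _ => ?_
  congr 1
  simp only [vecMul, dotProduct, liftC, Matrix.map_apply]
  push_cast; rfl

lemma vecMul_inj (hB : IsLeech B) {x y : LV} (h : x ᵥ* B = y ᵥ* B) : x = y := by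
  apply pz_ext hB
  intro u
  rw [pairZ, pairZ, dotProduct_mulVec, dotProduct_mulVec, h]

def zt (B : Matrix (Fin 24) (Fin 24) ℤ) (p : ℤ × LV) (τ : ℍ) (z : CV) : ℂ :=
  eC ((p.1 : ℂ) * τ) * eC (pairC B (liftC p.2) z)

lemma jac_uniq (hB : IsLeech B) (c : ℤ × LV → ℂ)
    (h : ∀ (τ : ℍ) (z : CV), HasSum (fun p => c p * zt B p τ z) 0) : c = 0 := by
  have key := four_uniq (d := Option (Fin 24))
    (fun (p : ℤ × LV) o => o.elim p.1 (fun j => (p.2 ᵥ* B) j)) ?_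
    (fun p => c p * eC (p.1 * Complex.I)) ?_ ?_
  · ext p
    have := congrFun key p
    simp only [Pi.zero_apply, mul_eq_zero] at this ⊢
    rcases this with h | h
    · exact h
    · exact absurd h (Complex.exp_ne_zero _)
  · rintro ⟨a, x⟩ ⟨b, y⟩ e
    have e1 := congrFun e none
    have e2 : x ᵥ* B = y ᵥ* B := by
      ext j; exact congrFun e (some j)
    simp at e1
    rw [e1, vecMul_inj hB e2]
  · have := (h UpperHalfPlane.I 0).summable.norm
    refine this.congr fun p => ?_
    simp [zt, pairC, eC]
  · intro x
    have hτ : 0 < ((x none : ℂ) + Complex.I).im := by simp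
    rw [← (h ⟨(x none : ℂ) + Complex.I, hτ⟩ (fun i => (x (some i) : ℂ))).tsum_eq]
    refine tsum_congr fun p => ?_
    rw [mul_assoc]
    congr 1
    rw [zt, pc_real, Fintype.sum_option, eC_add, ← mul_assoc, ← eC_add]
    congr 2
    simp only [Option.elim]
    ring

def ft (f : ℕ → LV → ℂ) (p : ℤ × LV) : ℂ := if 0 ≤ p.1 then f p.1.toNat p.2 else 0

lemma ft_nat (n : ℕ) (ℓ : LV) : ft f ((n : ℤ), ℓ) = f n ℓ := by simp [ft]

lemma ft_sum (h : IsJacobiFormWith B k 2 φ f) (τ : ℍ) (z : CV) :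
    HasSum (fun p => ft f p * zt B p τ z) (φ τ z) := by
  have hi : Function.Injective (fun p : ℕ × LV => ((p.1 : ℤ), p.2)) := by
    rintro ⟨a, x⟩ ⟨b, y⟩ e; simpa using e
  rw [← hi.hasSum_iff]
  · refine HasSum.congr_fun' (h.expansion τ z) fun p => ?_
    simp [ft_nat, zt, fterm]
  · rintro ⟨a, x⟩ hx
    rw [ft, if_neg, zero_mul]
    intro ha
    exact hx ⟨(a.toNat, x), by simp [ha]⟩

lemma ft_shift (hB : IsLeech B) (h : IsJacobiFormWith B k 2 φ f) (x : LV) (N : ℤ) (ℓ : LV) :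
    ft f (N - pairZ B ℓ x, ℓ) = ft f (N + pairZ B x x, ℓ + (2 : ℤ) • x) := by
  have := jac_uniq hB (fun p => ft f (p.1 - pairZ B p.2 x, p.2) -
    ft f (p.1 + pairZ B x x, p.2 + (2 : ℤ) • x)) ?_
  · exact sub_eq_zero.1 (congrFun this (N, ℓ))
  intro τ z
  have h1 := ft_sum h τ (z + (τ : ℂ) • liftC x + liftC 0)
  rw [h.quasi_periodic x 0 τ z] at h1
  have h2 := (ft_sum h τ z).mul_left (Complex.exp (-((2 : ℕ) : ℂ) * (Real.pi : ℂ) * Complex.I *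
    (pairZ B x x : ℂ) * (τ : ℂ)
        - 2 * ((2 : ℕ) : ℂ) * (Real.pi : ℂ) * Complex.I * pairC B (liftC x) z))
  let e1 : ℤ × LV ≃ ℤ × LV :=
    { toFun := fun p => (p.1 - pairZ B p.2 x, p.2)
      invFun := fun p => (p.1 + pairZ B p.2 x, p.2)
      left_inv := fun p => by simp
      right_inv := fun p => by simp }
  let e2 : ℤ × LV ≃ ℤ × LV :=
    { toFun := fun p => (p.1 + pairZ B x x, p.2 + (2 : ℤ) • x)
      invFun := fun p => (p.1 - pairZ B x x, p.2 - (2 : ℤ) • x)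
      left_inv := fun p => by simp
      right_inv := fun p => by simp }
  rw [← e1.hasSum_iff] at h1
  rw [← e2.hasSum_iff] at h2
  have h3 := h1.sub h2
  rw [sub_self] at h3
  refine HasSum.congr_fun' h3 fun p => ?_
  rw [sub_mul]
  congr 1
  · simp only [Function.comp, e1, Equiv.coe_fn_mk, zt]
    congr 1
    rw [pc_add_right, pc_add_right, pc_smul_right, pc_lift, pc_lift, pz_zero_right, ← eC_add,
      ← eC_add]
    congr 1; push_cast; ring
  · simp only [Function.comp, e2, Equiv.coe_fn_mk, zt]
    rw [mul_left_comm (cexp _)]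
    congr 1
    rw [lift_add, pc_add_left, lift_smul, pc_smul_left, ← eC_add, ← eC_add, eC, eC,
      ← Complex.exp_add]
    congr 1; push_cast; ring

lemma pc_act {σ : Matrix (Fin 24) (Fin 24) ℤ} (hσ : σ ∈ ConwayGroup B) (m : LV) (z : CV) :
    pairC B (liftC (σ.mulVec m)) (actC σ z) = pairC B (liftC m) z := by
  have e : liftC (σ.mulVec m) = (σ.map (Int.cast : ℤ → ℂ)).mulVec (liftC m) := by
    ext i; simp [liftC, mulVec, dotProduct]
  have h2 : (σ.map (Int.cast : ℤ → ℂ))ᵀ * B.map Int.cast * σ.map Int.cast = B.map Int.cast := by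
    have := congrArg (fun M => (Int.castRingHom ℂ).mapMatrix M) hσ.2
    simpa [map_mul, Matrix.transpose_map] using this
  rw [e, pairC, actC, pairC, dotProduct_mulVec, vecMul_mulVec, ← dotProduct_mulVec,
    mulVec_mulVec, h2]

lemma ft_conway (hB : IsLeech B) (h : IsJacobiFormWith B k 2 φ f)
    {σ : Matrix (Fin 24) (Fin 24) ℤ} (hσ : σ ∈ ConwayGroup B) (N : ℤ) (ℓ : LV) :
    ft f (N, σ.mulVec ℓ) = ft f (N, ℓ) := by
  have := jac_uniq hB (fun p => ft f (p.1, σ.mulVec p.2) - ft f p) ?_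
  · exact sub_eq_zero.1 (congrFun this (N, ℓ))
  intro τ z
  have h1 := ft_sum h τ (actC σ z)
  rw [h.conway_invar σ hσ] at h1
  let e1 : ℤ × LV ≃ ℤ × LV :=
    { toFun := fun p => (p.1, σ.mulVec p.2)
      invFun := fun p => (p.1, σ⁻¹.mulVec p.2)
      left_inv := fun p => by
        simp only [mulVec_mulVec, nonsing_inv_mul _ hσ.1, one_mulVec]
      right_inv := fun p => by
        simp only [mulVec_mulVec, mul_nonsing_inv _ hσ.1, one_mulVec] }
  rw [← e1.hasSum_iff] at h1
  have h3 := h1.sub (ft_sum h τ z)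
  rw [sub_self] at h3
  refine HasSum.congr_fun' h3 fun p => ?_
  rw [sub_mul]
  congr 1
  simp only [Function.comp, e1, Equiv.coe_fn_mk, zt, pc_act hσ]

/-- lowest coefficients -/
lemma low_support (hB : IsLeech B) (h : IsJacobiFormWith B k 2 φ f) (n : ℕ)
    (hn : ∀ m < n, ∀ ℓ, f m ℓ = 0) (ℓ : LV) (hf : f n ℓ ≠ 0) : pairZ B ℓ ℓ ≤ 8 := by
  obtain ⟨w, hw⟩ := (lattice_final hB).1 ℓ
  have h1 := ft_shift hB h w (n + pairZ B ℓ w) ℓ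
  rw [add_sub_cancel_right, ft_nat] at h1
  rw [h1, ft] at hf
  have h2 : (n : ℤ) ≤ n + pairZ B ℓ w + pairZ B w w := by
    by_contra hc
    push Not at hc
    split_ifs at hf with h0
    · exact hf (hn _ (by simp only at h0 ⊢; omega) _)
    · exact hf rfl
  rw [pz_add_left, pz_add_right, pz_add_right, pz_smul_right, pz_smul_left, pz_smul_left,
    pz_smul_right, pz_comm hB w ℓ] at hw
  linarith

lemma low_const (hB : IsLeech B) (h : IsJacobiFormWith B k 2 φ f) (n : ℕ) (x y : LV)
    (hx : pairZ B x x ≤ 8) (hxy : pairZ B x x = pairZ B y y) : f n x = f n y := by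
  obtain ⟨F, hF, rfl⟩ := (lattice_final hB).2 x y hx hxy
  obtain ⟨h1, h2⟩ := pz_isom hB F hF
  have := ft_conway hB h h1 n x
  rw [h2, ft_nat, ft_nat] at this
  exact this.symm

end A2

section A3

variable {B : Matrix (Fin 24) (Fin 24) ℤ} {k : ℤ} {φ : UpperHalfPlane → CV → ℂ} {f : ℕ → LV → ℂ}

abbrev EE2 : ℍ → ℂ := EisensteinSeries.E2

def e2p : PowerSeries ℂ :=
  PowerSeries.mk fun m => (if m = 0 then 1 else -24 * (ArithmeticFunction.sigma 1 m : ℂ) : ℂ)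

lemma EE2_QE : QE EE2 e2p := by
  intro τ
  have := EisensteinSeries.hasSum_qExpansion_E2 (z := τ)
  refine HasSum.congr_fun' this fun m => ?_
  rw [e2p, PowerSeries.coeff_mk, qparam_eq]

lemma EE2_S (τ : ℍ) : EE2 (ModularGroup.S • τ) =
    (τ : ℂ) ^ 2 * EE2 τ + 6 * τ / (π * Complex.I) := by
  have := congrFun (EisensteinSeries.E2_slash_action ModularGroup.S) τ
  rw [ModularForm.SL_slash_apply] at this
  have e1 : denom (ModularGroup.S : GL (Fin 2) ℝ) τ = (τ : ℂ) := by
    erw [ModularGroup.denom_apply]; simp [ModularGroup.S]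
  have h0 := UpperHalfPlane.ne_zero τ
  have hp : (π : ℂ) ≠ 0 := by exact_mod_cast Real.pi_ne_zero
  rw [e1, Pi.sub_apply, Pi.smul_apply, EisensteinSeries.D2_S, riemannZeta_two, smul_eq_mul,
    _root_.zpow_neg, ← div_eq_mul_inv, div_eq_iff (zpow_ne_zero _ h0)] at this
  rw [EE2, this, show (τ : ℂ) ^ (2 : ℤ) = (τ : ℂ) ^ 2 by norm_cast]
  have hI := Complex.I_ne_zero
  field_simp
  linear_combination (-6 : ℂ) * Complex.I_sq

def lam (B : Matrix (Fin 24) (Fin 24) ℤ) (v ℓ : LV) : ℂ := 2 * π * Complex.I * pairZ B ℓ v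

def acf (f : ℕ → LV → ℂ) (τ : ℍ) (p : ℕ × LV) : ℂ := f p.1 p.2 * eC (p.1 * τ)

lemma exp_sum (h : IsJacobiFormWith B k 2 φ f) (v : LV) (τ : ℍ) (s : ℂ) :
    HasSum (fun p => acf f τ p * cexp (s * lam B v p.2)) (φ τ (s • liftC v)) := by
  refine HasSum.congr_fun' (h.expansion τ (s • liftC v)) fun p => ?_
  rw [acf, fterm, mul_assoc, pc_smul_right, pc_lift]
  congr 2
  rw [eC, lam]; congr 1; ring

lemma norm_lam (v ℓ : LV) : ‖lam B v ℓ‖ = |2 * π * pairZ B ℓ v| := by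
  rw [lam, show 2 * (π : ℂ) * Complex.I * pairZ B ℓ v =
    ((2 * π * pairZ B ℓ v : ℝ) : ℂ) * Complex.I by push_cast; ring, norm_mul, Complex.norm_I,
    mul_one, Complex.norm_real, Real.norm_eq_abs]

lemma norm_summ (h : IsJacobiFormWith B k 2 φ f) (v : LV) (τ : ℍ) (r : ℝ) :
    Summable fun p => ‖acf f τ p‖ * Real.exp (r * ‖lam B v p.2‖) := by
  have e : ∀ (c : ℝ) (ℓ : LV), ‖cexp ((-(c : ℂ) * Complex.I) * lam B v ℓ)‖
      = Real.exp (c * (2 * π * pairZ B ℓ v)) := by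
    intro c ℓ
    rw [lam, show (-(c : ℂ) * Complex.I) * (2 * (π : ℂ) * Complex.I * pairZ B ℓ v) =
      ((c * (2 * π * pairZ B ℓ v) : ℝ) : ℂ) by
        push_cast; linear_combination (-(c : ℂ) * (2 * π * pairZ B ℓ v)) * Complex.I_sq,
      ← Complex.ofReal_exp, Complex.norm_real, Real.norm_of_nonneg (Real.exp_pos _).le]
  have h1 := (exp_sum h v τ (-(r : ℂ) * Complex.I)).summable.norm
  have h2 := (exp_sum h v τ (-((-r : ℝ) : ℂ) * Complex.I)).summable.norm
  refine Summable.of_nonneg_of_le (fun p => by positivity) (fun p => ?_) (h1.add h2)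
  rw [norm_mul, norm_mul, e, e, ← mul_add, norm_lam]
  refine mul_le_mul_of_nonneg_left ?_ (norm_nonneg _)
  rcases abs_cases (2 * π * (pairZ B p.2 v : ℝ)) with ⟨ha, _⟩ | ⟨ha, _⟩ <;> rw [ha]
  · have := Real.exp_pos (-r * (2 * π * (pairZ B p.2 v : ℝ)))
    linarith
  · have := Real.exp_pos (r * (2 * π * (pairZ B p.2 v : ℝ)))
    rw [mul_neg, neg_mul]; linarith

def Ta (B : Matrix (Fin 24) (Fin 24) ℤ) (f : ℕ → LV → ℂ) (v : LV) (a : ℕ) (τ : ℍ) : ℂ :=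
  ∑' p, acf f τ p * lam B v p.2 ^ a

lemma Ta_summ (h : IsJacobiFormWith B k 2 φ f) (v : LV) (τ : ℍ) (a : ℕ) :
    Summable fun p => acf f τ p * lam B v p.2 ^ a := by
  refine Summable.of_norm_bounded ((norm_summ h v τ 1).mul_left (a.factorial : ℝ))
    fun p => ?_
  rw [norm_mul, norm_pow, mul_left_comm]
  refine mul_le_mul_of_nonneg_left ?_ (norm_nonneg _)
  have := Real.pow_div_factorial_le_exp ‖lam B v p.2‖ (norm_nonneg _) a
  rw [one_mul]
  rwa [div_le_iff₀' (by positivity)] at this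

lemma taylor (h : IsJacobiFormWith B k 2 φ f) (v : LV) (τ : ℍ) (s : ℂ) :
    HasSum (fun a : ℕ => (Ta B f v a τ / (a.factorial : ℂ)) * s ^ a) (φ τ (s • liftC v)) := by
  obtain ⟨F, hFd⟩ : ∃ F : (ℕ × LV) × ℕ → ℂ, ∀ p a, F (p, a) =
    acf f τ p * ((s * lam B v p.2) ^ a / (a.factorial : ℂ)) :=
    ⟨fun x => acf f τ x.1 * ((s * lam B v x.1.2) ^ x.2 / (x.2.factorial : ℂ)), fun p a => rfl⟩
  have hexp : ∀ x : ℂ, HasSum (fun a : ℕ => x ^ a / (a.factorial : ℂ)) (cexp x) := fun x => by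
    rw [Complex.exp_eq_exp_ℂ]; exact NormedSpace.expSeries_div_hasSum_exp x
  have hexpR : ∀ x : ℝ, HasSum (fun a : ℕ => x ^ a / (a.factorial : ℝ)) (Real.exp x) := fun x => by
    rw [Real.exp_eq_exp_ℝ]; exact NormedSpace.expSeries_div_hasSum_exp x
  have hn : ∀ p a, ‖F (p, a)‖ = ‖acf f τ p‖ * ((‖s‖ * ‖lam B v p.2‖) ^ a / (a.factorial : ℝ)) := by
    intro p a
    rw [hFd, norm_mul, norm_div, norm_pow, norm_mul, Complex.norm_natCast]
  have hR : ∀ p : ℕ × LV, HasSum (fun a => ‖F (p, a)‖)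
      (‖acf f τ p‖ * Real.exp (‖s‖ * ‖lam B v p.2‖)) := fun p => by
    simp_rw [hn]
    exact (hexpR _).mul_left _
  have hF : Summable fun x => ‖F x‖ := by
    rw [summable_prod_of_nonneg (fun x => norm_nonneg _)]
    exact ⟨fun p => (hR p).summable,
      (norm_summ h v τ ‖s‖).congr fun p => (hR p).tsum_eq.symm⟩
  have h1 := hF.of_norm.hasSum
  have hC : ∀ p : ℕ × LV, HasSum (fun a => F (p, a))
      (acf f τ p * cexp (s * lam B v p.2)) := fun p => by
    simp_rw [hFd]
    exact (hexp _).mul_left _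
  have h2 := h1.prod_fiberwise hC
  have h3 := h2.unique (exp_sum h v τ s)
  rw [h3] at h1
  have hD : ∀ a : ℕ, HasSum (fun p => F (p, a)) (s ^ a / (a.factorial : ℂ) * Ta B f v a τ) :=
    fun a => by
      refine ((Ta_summ h v τ a).hasSum.mul_left (s ^ a / (a.factorial : ℂ))).congr_fun'
        fun p => ?_
      rw [hFd, mul_pow]; ring
  have h4 := HasSum.prod_fiberwise (((Equiv.prodComm ℕ (ℕ × LV)).hasSum_iff).2 h1) hD
  refine h4.congr_fun' fun a => ?_
  ring

def Tq (B : Matrix (Fin 24) (Fin 24) ℤ) (f : ℕ → LV → ℂ) (v : LV) (a : ℕ) : PowerSeries ℂ :=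
  PowerSeries.mk fun N => ∑' ℓ, f N ℓ * lam B v ℓ ^ a

lemma Ta_QE (h : IsJacobiFormWith B k 2 φ f) (v : LV) (a : ℕ) : QE (Ta B f v a) (Tq B f v a) := by
  intro τ
  have h1 := Ta_summ h v τ a
  refine (h1.hasSum.prod_fiberwise fun N => (h1.prod_factor N).hasSum).congr_fun' fun N => ?_
  rw [Tq, PowerSeries.coeff_mk, smul_eq_mul, ← tsum_mul_right]
  refine tsum_congr fun ℓ => ?_
  rw [acf, qpow_eq]; ring

def ecf (α : ℂ) (m : ℕ) : ℂ := if Even m then α ^ (m / 2) / ((m / 2).factorial : ℂ) else 0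

lemma ecf_sum (α s : ℂ) : HasSum (fun m => ecf α m * s ^ m) (cexp (α * s ^ 2)) := by
  have hi : Function.Injective (fun b : ℕ => 2 * b) := fun a b e => by simpa using e
  rw [← hi.hasSum_iff]
  · have : HasSum (fun a : ℕ => (α * s ^ 2) ^ a / (a.factorial : ℂ)) (cexp (α * s ^ 2)) := by
      rw [Complex.exp_eq_exp_ℂ]; exact NormedSpace.expSeries_div_hasSum_exp _
    refine this.congr_fun' fun b => ?_
    simp only [Function.comp, ecf, even_two_mul, if_true]
    rw [Nat.mul_div_cancel_left b two_pos, mul_pow, pow_mul]; ring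
  · intro m hm
    rw [ecf, if_neg, zero_mul]
    rintro ⟨r, hr⟩
    exact hm ⟨r, by simp only; omega⟩

def gd (B : Matrix (Fin 24) (Fin 24) ℤ) (f : ℕ → LV → ℂ) (v : LV) (d : ℕ) (τ : ℍ) : ℂ :=
  ∑ x ∈ Finset.HasAntidiagonal.antidiagonal d, ecf (π ^ 2 / 3 * pairZ B v v * EE2 τ) x.1 *
    (Ta B f v x.2 τ / (x.2.factorial : ℂ))

lemma gd_sum (h : IsJacobiFormWith B k 2 φ f) (v : LV) (τ : ℍ) (s : ℂ) :
    HasSum (fun d => gd B f v d τ * s ^ d)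
      (cexp (π ^ 2 / 3 * pairZ B v v * EE2 τ * s ^ 2) * φ τ (s • liftC v)) := by
  have hF := ecf_sum (π ^ 2 / 3 * pairZ B v v * EE2 τ) s
  have hG := taylor h v τ s
  have h1 := summable_norm_sum_mul_antidiagonal_of_summable_norm hF.summable.norm
    hG.summable.norm
  have h2 := tsum_mul_tsum_eq_tsum_sum_antidiagonal_of_summable_norm hF.summable.norm
    hG.summable.norm
  rw [hF.tsum_eq, hG.tsum_eq] at h2
  have h3 := h1.of_norm.hasSum
  rw [← h2] at h3
  refine HasSum.congr_fun' h3 fun m => ?_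
  rw [gd, Finset.sum_mul]
  refine Finset.sum_congr rfl fun x hx => ?_
  rw [← Finset.HasAntidiagonal.mem_antidiagonal.1 hx, pow_add]
  ring

lemma phi_S (h : IsJacobiFormWith B k 2 φ f) (v : LV) (τ : ℍ) (s : ℂ) :
    φ (ModularGroup.S • τ) (s • liftC v) =
      (τ : ℂ) ^ k * (cexp (2 * π * Complex.I * pairZ B v v * s ^ 2 * τ) *
        φ τ ((τ * s) • liftC v)) := by
  have h0 := UpperHalfPlane.ne_zero τ
  have h1 := h.modular ModularGroup.S τ ((τ * s) • liftC v)
  have e : jfactor ModularGroup.S τ = τ := by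
    simp [jfactor, slc, sld, ModularGroup.S]
  have e2 : slc ModularGroup.S = 1 := by simp [slc, ModularGroup.S]
  rw [e, e2, smul_smul, inv_mul_cancel_left₀ h0, pc_smul_left, pc_smul_right, pc_lift] at h1
  rw [h1, mul_assoc]
  congr 3
  push_cast; field_simp

lemma gd_S (h : IsJacobiFormWith B k 2 φ f) (v : LV) (d : ℕ) (τ : ℍ) :
    gd B f v d (ModularGroup.S • τ) = (τ : ℂ) ^ (k + d) * gd B f v d τ := by
  have h0 := UpperHalfPlane.ne_zero τ
  have hu := pow_uniq (fun d => gd B f v d (ModularGroup.S • τ) -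
    (τ : ℂ) ^ (k + d) * gd B f v d τ) ?_
  · exact sub_eq_zero.1 (congrFun hu d)
  intro s
  have h1 := gd_sum h v (ModularGroup.S • τ) s
  have h2 := (gd_sum h v τ (τ * s)).mul_left ((τ : ℂ) ^ k)
  have e : cexp (π ^ 2 / 3 * pairZ B v v * EE2 (ModularGroup.S • τ) * s ^ 2) *
      φ (ModularGroup.S • τ) (s • liftC v) = (τ : ℂ) ^ k *
      (cexp (π ^ 2 / 3 * pairZ B v v * EE2 τ * (τ * s) ^ 2) * φ τ ((τ * s) • liftC v)) := by
    rw [phi_S h, EE2_S, mul_left_comm]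
    congr 1
    rw [← mul_assoc, ← Complex.exp_add]
    congr 2
    have hp : (π : ℂ) ≠ 0 := by exact_mod_cast Real.pi_ne_zero
    have hI := Complex.I_ne_zero
    field_simp
    linear_combination (6 * pairZ B v v * s ^ 2 : ℂ) * Complex.I_sq
  rw [e] at h1
  have h3 := h1.sub h2
  rw [sub_self] at h3
  refine h3.congr_fun' fun d => ?_
  rw [zpow_add₀ h0, zpow_natCast, mul_pow]; ring

def eq' (V : ℂ) (m : ℕ) : PowerSeries ℂ :=
  if Even m then (V ^ (m / 2) / ((m / 2).factorial : ℂ)) • e2p ^ (m / 2) else 0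

lemma ecf_QE (V : ℂ) (m : ℕ) : QE (fun τ => ecf (V * EE2 τ) m) (eq' V m) := by
  unfold ecf eq'
  split_ifs
  · have := (EE2_QE.pow (m / 2)).smul (V ^ (m / 2) / ((m / 2).factorial : ℂ))
    intro τ
    have h2 := this τ
    convert h2 using 1
    simp only
    rw [mul_pow]; ring
  · intro τ
    simp

lemma gd_QE (h : IsJacobiFormWith B k 2 φ f) (v : LV) (d : ℕ) :
    QE (gd B f v d) (∑ x ∈ Finset.HasAntidiagonal.antidiagonal d, eq' (π ^ 2 / 3 * pairZ B v v) x.1 *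
      ((1 / (x.2.factorial : ℂ)) • Tq B f v x.2)) := by
  have := QE.sum (Finset.HasAntidiagonal.antidiagonal d) (fun x _ => (ecf_QE (π ^ 2 / 3 * pairZ B v v) x.1).mul
    ((Ta_QE h v x.2).smul (1 / (x.2.factorial : ℂ))))
  intro τ
  convert this τ using 1
  rw [gd]
  refine Finset.sum_congr rfl fun x _ => ?_
  rw [div_eq_inv_mul _ (x.2.factorial : ℂ), one_div]

lemma QE.low_odd {F : ℍ → ℂ} {p : PowerSeries ℂ} (h : QE F p) {k : ℤ}
    (hS : ∀ τ : ℍ, F (ModularGroup.S • τ) = (τ : ℂ) ^ k * F τ) (n : ℕ)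
    (hk : Odd k) : p.coeff n = 0 := by
  rw [← h.qexp hS, ModularForm.levelOne_odd_weight_eq_zero hk (h.toMF hS), FunLike.coe_zero,
    qExpansion_zero]; simp

lemma coeff_low_mul (p r : PowerSeries ℂ) (n : ℕ) (hr : ∀ m < n, r.coeff m = 0) :
    (p * r).coeff n = p.coeff 0 * r.coeff n := by
  rw [PowerSeries.coeff_mul, Finset.sum_eq_single (0, n)]
  · rintro ⟨a, b⟩ hab hne
    have := Finset.HasAntidiagonal.mem_antidiagonal.1 hab
    simp only at this
    rw [hr b, mul_zero]
    rcases Nat.lt_or_ge b n with h | h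
    · exact h
    · exact absurd (Prod.ext (by simp; omega) (by simp; omega)) hne
  · intro hc; exact absurd (Finset.HasAntidiagonal.mem_antidiagonal.2 (by simp)) hc

lemma eq'_zero (V : ℂ) (m : ℕ) : (eq' V m).coeff 0 = ecf V m := by
  unfold eq' ecf
  split_ifs
  · simp [e2p]
  · simp

lemma low_rel (h : IsJacobiFormWith B k 2 φ f) (n : ℕ)
    (hn : ∀ m < n, ∀ ℓ, f m ℓ = 0) (d : ℕ)
    (hk : k + d < 0 ∨ (k + d = 0 ∧ 1 ≤ n) ∨ k + d = 2 ∨ Odd (k + d)) (v : LV) :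
    ∑ x ∈ Finset.HasAntidiagonal.antidiagonal d, ecf (π ^ 2 / 3 * pairZ B v v) x.1 *
      ((1 / (x.2.factorial : ℂ)) * ∑' ℓ, f n ℓ * lam B v ℓ ^ x.2) = 0 := by
  have h1 : (∑ x ∈ Finset.HasAntidiagonal.antidiagonal d, eq' (π ^ 2 / 3 * pairZ B v v) x.1 *
      ((1 / (x.2.factorial : ℂ)) • Tq B f v x.2)).coeff n = 0 := by
    rcases hk with hk | hk | hk | hk
    · exact (gd_QE h v d).low (gd_S h v d) n (Or.inl hk)
    · exact (gd_QE h v d).low (gd_S h v d) n (Or.inr (Or.inl hk))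
    · exact (gd_QE h v d).low (gd_S h v d) n (Or.inr (Or.inr hk))
    · exact (gd_QE h v d).low_odd (gd_S h v d) n hk
  rw [map_sum] at h1
  rw [← h1]
  refine Finset.sum_congr rfl fun x _ => ?_
  rw [coeff_low_mul, eq'_zero, PowerSeries.coeff_smul, Tq, PowerSeries.coeff_mk, smul_eq_mul]
  intro m hm
  simp [Tq, hn m hm]

end A3

section A4

abbrev AA := MvPolynomial (Fin 24) ℂ

def lapl (d : Fin 24 → ℂ) : AA →ₗ[ℂ] AA :=
  ∑ i, (d i)⁻¹ • ((MvPolynomial.pderiv i).toLinearMap ∘ₗ (MvPolynomial.pderiv i).toLinearMap)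

lemma lapl_apply (d : Fin 24 → ℂ) (P : AA) :
    lapl d P = ∑ i, MvPolynomial.C (d i)⁻¹ * MvPolynomial.pderiv i (MvPolynomial.pderiv i P) := by
  simp [lapl, LinearMap.sum_apply, MvPolynomial.smul_eq_C_mul]

def gam (d : Fin 24 → ℂ) (P Q : AA) : AA :=
  ∑ i, MvPolynomial.C (d i)⁻¹ * (MvPolynomial.pderiv i P * MvPolynomial.pderiv i Q)

lemma lapl_mul (d : Fin 24 → ℂ) (P Q : AA) :
    lapl d (P * Q) = lapl d P * Q + 2 * gam d P Q + P * lapl d Q := by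
  simp only [lapl_apply, gam, Finset.sum_mul, Finset.mul_sum, ← Finset.sum_add_distrib]
  refine Finset.sum_congr rfl fun i _ => ?_
  rw [MvPolynomial.pderiv_mul, map_add, MvPolynomial.pderiv_mul, MvPolynomial.pderiv_mul]
  ring

def Lp (c : Fin 24 → ℂ) : AA := ∑ i, MvPolynomial.C (c i) * MvPolynomial.X i
def Rp (d : Fin 24 → ℂ) : AA := ∑ i, MvPolynomial.C (d i) * MvPolynomial.X i ^ 2

lemma pd_L (c : Fin 24 → ℂ) (i) : MvPolynomial.pderiv i (Lp c) = MvPolynomial.C (c i) := by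
  rw [Lp, map_sum, Finset.sum_eq_single i]
  · rw [MvPolynomial.pderiv_mul]; simp
  · intro j _ hj
    rw [MvPolynomial.pderiv_mul, MvPolynomial.pderiv_X_of_ne hj]; simp
  · simp

lemma pd_R (d : Fin 24 → ℂ) (i) :
    MvPolynomial.pderiv i (Rp d) = 2 * MvPolynomial.C (d i) * MvPolynomial.X i := by
  rw [Rp, map_sum, Finset.sum_eq_single i]
  · rw [MvPolynomial.pderiv_mul, MvPolynomial.pderiv_pow]; simp; ring
  · intro j _ hj
    rw [MvPolynomial.pderiv_mul, MvPolynomial.pderiv_pow, MvPolynomial.pderiv_X_of_ne hj]; simp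
  · simp

lemma pd_Lpow (c : Fin 24 → ℂ) (i) (n : ℕ) : MvPolynomial.pderiv i (Lp c ^ (n + 1)) =
    ((n : AA) + 1) * Lp c ^ n * MvPolynomial.C (c i) := by
  rw [MvPolynomial.pderiv_pow, pd_L]; push_cast; rfl

lemma pd_Rpow (d : Fin 24 → ℂ) (i) (n : ℕ) : MvPolynomial.pderiv i (Rp d ^ (n + 1)) =
    ((n : AA) + 1) * Rp d ^ n * (2 * MvPolynomial.C (d i) * MvPolynomial.X i) := by
  rw [MvPolynomial.pderiv_pow, pd_R]; push_cast; rfl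

def qc (d c : Fin 24 → ℂ) : ℂ := ∑ i, c i * c i / d i

lemma pd_nat (i : Fin 24) (n : ℕ) : MvPolynomial.pderiv i ((n : AA) + 1) = 0 := by
  rw [map_add, Derivation.map_one_eq_zero, Derivation.map_natCast, add_zero]

lemma lapl_one (d : Fin 24 → ℂ) : lapl d 1 = 0 := by
  rw [lapl_apply]; simp

lemma lapl_L (d c : Fin 24 → ℂ) (n : ℕ) : lapl d (Lp c ^ (n + 2)) =
    ((n : AA) + 2) * ((n : AA) + 1) * MvPolynomial.C (qc d c) * Lp c ^ n := by
  rw [lapl_apply, qc, map_sum, Finset.mul_sum, Finset.sum_mul]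
  refine Finset.sum_congr rfl fun i _ => ?_
  rw [pd_Lpow, MvPolynomial.pderiv_mul, MvPolynomial.pderiv_mul, pd_nat, pd_Lpow,
    MvPolynomial.pderiv_C]
  rw [div_eq_mul_inv, map_mul, map_mul]
  push_cast
  ring

lemma CC (d : Fin 24 → ℂ) (hd : ∀ i, d i ≠ 0) (i) :
    (MvPolynomial.C (d i)⁻¹ * MvPolynomial.C (d i) : AA) = 1 := by
  rw [← map_mul, inv_mul_cancel₀ (hd i), map_one]

lemma lapl_R (d : Fin 24 → ℂ) (hd : ∀ i, d i ≠ 0) (n : ℕ) : lapl d (Rp d ^ (n + 1)) =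
    4 * ((n : AA) + 1) * ((n : AA) + 12) * Rp d ^ n := by
  rw [lapl_apply]
  have key : ∀ i : Fin 24, MvPolynomial.C (d i)⁻¹ * MvPolynomial.pderiv i
      (MvPolynomial.pderiv i (Rp d ^ (n + 1))) =
      2 * ((n : AA) + 1) * Rp d ^ n +
      4 * ((n : AA) + 1) * (n : AA) * Rp d ^ (n - 1) * (MvPolynomial.C (d i) * MvPolynomial.X i ^ 2) := by
    intro i
    rw [pd_Rpow, MvPolynomial.pderiv_mul, MvPolynomial.pderiv_mul, pd_nat,
      MvPolynomial.pderiv_pow, pd_R, MvPolynomial.pderiv_mul, MvPolynomial.pderiv_mul,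
      MvPolynomial.pderiv_C, MvPolynomial.pderiv_X_self]
    have h2 : MvPolynomial.pderiv i (2 : AA) = 0 := by
      have := pd_nat i 1; norm_num at this; exact this
    rw [h2]
    have := CC d hd i
    linear_combination (2 * ((n : AA) + 1) * Rp d ^ n +
      4 * ((n : AA) + 1) * (n : AA) * Rp d ^ (n - 1) * (MvPolynomial.C (d i) * MvPolynomial.X i ^ 2)) * this
  rw [Finset.sum_congr rfl fun i _ => key i, Finset.sum_add_distrib, ← Finset.mul_sum Finset.univ (fun i => MvPolynomial.C (d i) * MvPolynomial.X i ^ 2)]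
  rw [show ∑ i, MvPolynomial.C (d i) * MvPolynomial.X i ^ 2 = Rp d from rfl]
  rw [Finset.sum_const, Finset.card_univ, Fintype.card_fin, nsmul_eq_mul]
  rcases n with _ | n
  · simp; ring
  · simp only [Nat.add_sub_cancel]; push_cast; ring

lemma gam_LR (d c : Fin 24 → ℂ) (hd : ∀ i, d i ≠ 0) (n b : ℕ) :
    gam d (Lp c ^ (n + 1)) (Rp d ^ (b + 1)) =
    2 * ((n : AA) + 1) * ((b : AA) + 1) * Lp c ^ (n + 1) * Rp d ^ b := by
  have key : ∀ i : Fin 24, MvPolynomial.C (d i)⁻¹ * (MvPolynomial.pderiv i (Lp c ^ (n + 1)) *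
      MvPolynomial.pderiv i (Rp d ^ (b + 1))) =
      (2 * ((n : AA) + 1) * ((b : AA) + 1) * Lp c ^ n * Rp d ^ b) *
      (MvPolynomial.C (c i) * MvPolynomial.X i) := by
    intro i
    rw [pd_Lpow, pd_Rpow]
    linear_combination ((2 * ((n : AA) + 1) * ((b : AA) + 1) * Lp c ^ n * Rp d ^ b) *
      (MvPolynomial.C (c i) * MvPolynomial.X i)) * CC d hd i
  rw [gam, Finset.sum_congr rfl fun i _ => key i, ← Finset.mul_sum]
  rw [show ∑ i, MvPolynomial.C (c i) * MvPolynomial.X i = Lp c from rfl]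
  ring

def kap : ℕ → ℕ → ℂ
  | 0, 0 => 1
  | (a + 1), 0 => (2 * a + 2) * (2 * a + 1) * kap a 0
  | 0, (b + 1) => 4 * (b + 1) * (b + 12) * kap 0 b
  | (a + 1), (b + 1) => (2 * a + 2) * (2 * a + 1) * kap a (b + 1) +
      4 * (b + 1) * (2 * a + 2 + b + 12) * kap (a + 1) b

lemma lapl_C_mul (d : Fin 24 → ℂ) (N : ℕ) (x : ℂ) (P : AA) :
    (lapl d ^ N) (MvPolynomial.C x * P) = MvPolynomial.C x * (lapl d ^ N) P := by
  rw [← MvPolynomial.smul_eq_C_mul, map_smul, MvPolynomial.smul_eq_C_mul]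

lemma lapl_iter (d c : Fin 24 → ℂ) (hd : ∀ i, d i ≠ 0) (N : ℕ) : ∀ a b : ℕ, a + b = N →
    (lapl d ^ N) (Lp c ^ (2 * a) * Rp d ^ b) = MvPolynomial.C (kap a b * qc d c ^ a) := by
  induction N with
  | zero =>
    intro a b h
    obtain ⟨rfl, rfl⟩ : a = 0 ∧ b = 0 := by omega
    simp [kap]
  | succ N ih =>
    intro a b h
    rw [pow_succ, Module.End.mul_apply]
    rcases a with _ | a <;> rcases b with _ | b
    · omega
    · have : lapl d (Lp c ^ (2 * 0) * Rp d ^ (b + 1)) =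
          MvPolynomial.C (4 * ((b : ℂ) + 1) * (b + 12)) * (Lp c ^ (2 * 0) * Rp d ^ b) := by
        simp only [mul_zero, pow_zero, one_mul]
        rw [lapl_R d hd]; simp only [map_mul, map_add, map_natCast, map_one, map_ofNat]
      rw [this, lapl_C_mul, ih 0 b (by omega), ← map_mul]
      simp [kap]
    · have : lapl d (Lp c ^ (2 * (a + 1)) * Rp d ^ 0) =
          MvPolynomial.C ((2 * (a : ℂ) + 2) * (2 * a + 1) * qc d c) *
            (Lp c ^ (2 * a) * Rp d ^ 0) := by
        simp only [pow_zero, mul_one]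
        rw [show 2 * (a + 1) = 2 * a + 2 by ring, lapl_L]
        push_cast; simp only [map_mul, map_add, map_natCast, map_one, map_ofNat]
      rw [this, lapl_C_mul, ih a 0 (by omega), ← map_mul]
      simp only [kap]; congr 1; ring
    · have : lapl d (Lp c ^ (2 * (a + 1)) * Rp d ^ (b + 1)) =
          MvPolynomial.C ((2 * (a : ℂ) + 2) * (2 * a + 1) * qc d c) *
            (Lp c ^ (2 * a) * Rp d ^ (b + 1)) +
          MvPolynomial.C (4 * ((b : ℂ) + 1) * (2 * a + 2 + b + 12)) *
            (Lp c ^ (2 * (a + 1)) * Rp d ^ b) := by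
        rw [lapl_mul, lapl_R d hd, show 2 * (a + 1) = 2 * a + 1 + 1 by ring, gam_LR d c hd,
          show 2 * a + 1 + 1 = 2 * a + 2 by ring, lapl_L]
        push_cast; simp only [map_mul, map_add, map_natCast, map_one, map_ofNat]; ring
      rw [this, map_add, lapl_C_mul, lapl_C_mul, ih a (b + 1) (by omega),
        ih (a + 1) b (by omega), ← map_mul, ← map_mul, ← map_add]
      simp only [kap]; congr 1; ring

end A4

section A5

variable {B : Matrix (Fin 24) (Fin 24) ℤ} {k : ℤ} {φ : UpperHalfPlane → CV → ℂ} {f : ℕ → LV → ℂ}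

def cf (b a : ℕ) : ℂ :=
  (π ^ 2 / 3) ^ b / (b.factorial : ℂ) * ((-4 * π ^ 2) ^ a / ((2 * a).factorial : ℂ))

lemma lam_even (v ℓ : LV) (a : ℕ) :
    lam B v ℓ ^ (2 * a) = (-4 * π ^ 2) ^ a * (pairZ B ℓ v : ℂ) ^ (2 * a) := by
  rw [pow_mul, pow_mul, ← mul_pow]
  congr 1
  rw [lam]
  linear_combination (4 * (π : ℂ) ^ 2 * (pairZ B ℓ v) ^ 2) * Complex.I_sq

lemma low_rel2 (hB : IsLeech B) (h : IsJacobiFormWith B k 2 φ f) (n : ℕ)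
    (hn : ∀ m < n, ∀ ℓ, f m ℓ = 0) (m : ℕ)
    (hk : k + (2 * m : ℕ) < 0 ∨ (k + (2 * m : ℕ) = 0 ∧ 1 ≤ n) ∨ k + (2 * m : ℕ) = 2 ∨
      Odd (k + (2 * m : ℕ))) (v : LV) :
    ∑ x ∈ Finset.HasAntidiagonal.antidiagonal m, cf x.1 x.2 *
      ∑ ℓ ∈ (shell_finite hB 8).toFinset,
        f n ℓ * ((pairZ B ℓ v : ℂ) ^ (2 * x.2) * (pairZ B v v : ℂ) ^ x.1) = 0 := by
  rw [← low_rel h n hn (2 * m) hk v]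
  refine Finset.sum_of_injOn (fun x : ℕ × ℕ => (2 * x.1, 2 * x.2)) ?_ ?_ ?_ ?_
  · intro x _ y _ hxy
    simp only [Prod.mk.injEq] at hxy
    ext <;> omega
  · intro x hx
    simp only [Finset.mem_coe, Finset.HasAntidiagonal.mem_antidiagonal] at hx ⊢
    omega
  · intro x hx hx2
    rw [ecf, if_neg, zero_mul]
    rintro ⟨r, hr⟩
    apply hx2
    simp only [Finset.HasAntidiagonal.mem_antidiagonal] at hx
    refine ⟨(r, m - r), ?_, ?_⟩
    · simp only [Finset.mem_coe, Finset.HasAntidiagonal.mem_antidiagonal]; omega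
    · ext <;> simp <;> omega
  · intro x hx
    rw [tsum_eq_sum (s := (shell_finite hB 8).toFinset)]
    · simp only [lam_even, ecf, if_pos (even_two_mul x.1), Nat.mul_div_cancel_left _ two_pos, cf]
      rw [Finset.mul_sum, Finset.mul_sum, Finset.mul_sum]
      refine Finset.sum_congr rfl fun ℓ _ => ?_
      rw [mul_pow]
      ring
    · intro ℓ hℓ
      by_contra hne
      apply hℓ
      have := low_support hB h n hn ℓ (left_ne_zero_of_mul hne)
      simpa using this

def SS (hB : IsLeech B) (f : ℕ → LV → ℂ) (n a : ℕ) : ℂ :=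
  ∑ ℓ ∈ (shell_finite hB 8).toFinset, f n ℓ * (pairZ B ℓ ℓ : ℂ) ^ a

lemma low_rel3 (hB : IsLeech B) (h : IsJacobiFormWith B k 2 φ f) (n : ℕ)
    (hn : ∀ m < n, ∀ ℓ, f m ℓ = 0) (m : ℕ)
    (hk : k + (2 * m : ℕ) < 0 ∨ (k + (2 * m : ℕ) = 0 ∧ 1 ≤ n) ∨ k + (2 * m : ℕ) = 2 ∨
      Odd (k + (2 * m : ℕ))) :
    ∑ x ∈ Finset.HasAntidiagonal.antidiagonal m, cf x.1 x.2 * kap x.2 x.1 * SS hB f n x.2 = 0 := by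
  obtain ⟨w, hw⟩ := exists_ob hB
  obtain ⟨d, hd⟩ : ∃ d : Fin 24 → ℂ, ∀ i, d i = pairZ B (w i) (w i) := ⟨_, fun _ => rfl⟩
  obtain ⟨c, hc⟩ : ∃ c : LV → Fin 24 → ℂ, ∀ ℓ i, c ℓ i = pairZ B ℓ (w i) := ⟨_, fun _ _ => rfl⟩
  have hd0 : ∀ i, d i ≠ 0 := fun i => by
    rw [hd]; exact_mod_cast (hw.1 i).ne'
  have hq : ∀ ℓ, qc d (c ℓ) = pairZ B ℓ ℓ := fun ℓ => by
    rw [ob_parseval hB hw, qc]; simp only [hd, hc]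
  have hP : (∑ x ∈ Finset.HasAntidiagonal.antidiagonal m, MvPolynomial.C (cf x.1 x.2) *
      ∑ ℓ ∈ (shell_finite hB 8).toFinset,
        MvPolynomial.C (f n ℓ) * (Lp (c ℓ) ^ (2 * x.2) * Rp d ^ x.1) : AA) = 0 := by
    refine MvPolynomial.funext_set (fun _ => Set.range ((↑) : ℤ → ℂ))
      (fun _ => Set.infinite_range_of_injective Int.cast_injective) ?_
    intro y hy
    have : ∀ i, ∃ z : ℤ, (z : ℂ) = y i := fun i => hy i (Set.mem_univ i)
    choose z hz using this
    have eL : ∀ ℓ, MvPolynomial.eval y (Lp (c ℓ)) = pairZ B ℓ (∑ j, z j • w j) := by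
      intro ℓ
      rw [pz_sum_right, Lp, map_sum]
      push_cast
      refine Finset.sum_congr rfl fun i _ => ?_
      rw [pz_smul_right]
      simp [hc, ← hz, mul_comm]
    have eR : MvPolynomial.eval y (Rp d) = pairZ B (∑ j, z j • w j) (∑ j, z j • w j) := by
      rw [pz_sum_right, Rp, map_sum]
      push_cast
      refine Finset.sum_congr rfl fun i _ => ?_
      rw [pz_smul_right, ob_coord hw]
      simp [hd, ← hz]; ring
    rw [map_zero, ← low_rel2 hB h n hn m hk (∑ j, z j • w j), map_sum]
    refine Finset.sum_congr rfl fun x _ => ?_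
    rw [map_mul, map_sum, MvPolynomial.eval_C]
    congr 1
    refine Finset.sum_congr rfl fun ℓ _ => ?_
    rw [map_mul, map_mul, map_pow, map_pow, eL, eR, MvPolynomial.eval_C]
  have h2 := congrArg (lapl d ^ m) hP
  rw [map_zero, map_sum] at h2
  apply MvPolynomial.C_injective (Fin 24) ℂ
  rw [map_zero, ← h2, map_sum]
  refine Finset.sum_congr rfl fun x hx => ?_
  rw [lapl_C_mul, map_sum, mul_assoc, map_mul, SS, Finset.mul_sum, map_sum]
  congr 1
  refine Finset.sum_congr rfl fun ℓ _ => ?_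
  rw [Finset.HasAntidiagonal.mem_antidiagonal] at hx
  rw [lapl_C_mul, lapl_iter d (c ℓ) hd0 m x.2 x.1 (by omega), hq, ← map_mul]
  congr 1; ring

def Cj (hB : IsLeech B) (f : ℕ → LV → ℂ) (n j : ℕ) : ℂ :=
  ∑ ℓ ∈ (fiber_finite hB j).toFinset, f n ℓ

lemma SS_eq (hB : IsLeech B) (n a : ℕ) :
    SS hB f n a = ∑ j ∈ Finset.range 5, Cj hB f n j * (2 * (j : ℂ)) ^ a := by
  have : (shell_finite hB 8).toFinset = (Finset.range 5).biUnion
      (fun n => (fiber_finite hB n).toFinset) := by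
    ext u
    have := halfn_eq hB u
    simp; omega
  rw [SS, this, Finset.sum_biUnion]
  · refine Finset.sum_congr rfl fun j _ => ?_
    rw [Cj, Finset.sum_mul]
    refine Finset.sum_congr rfl fun x hx => ?_
    rw [halfn_eq hB x]
    have : halfn B x = j := by simpa using hx
    rw [this]; push_cast; rfl
  · intro i _ j _ hij
    simp only [Function.onFun]
    rw [Finset.disjoint_left]
    intro x hx hy
    simp at hx hy; omega

lemma Cj_one (hB : IsLeech B) (n : ℕ) : Cj hB f n 1 = 0 := by
  have h1 := shellN_one hB
  rw [shellN, Set.ncard_eq_toFinset_card _ (fiber_finite hB 1), Finset.card_eq_zero] at h1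
  rw [Cj, h1, Finset.sum_empty]

lemma Cj_fib (hB : IsLeech B) (h : IsJacobiFormWith B k 2 φ f) (n : ℕ) (ℓ : LV)
    (hℓ : pairZ B ℓ ℓ ≤ 8) (hC : Cj hB f n (halfn B ℓ) = 0) : f n ℓ = 0 := by
  rw [Cj, Finset.sum_congr rfl (g := fun _ => f n ℓ), Finset.sum_const, nsmul_eq_mul,
    mul_eq_zero] at hC
  · rcases hC with hC | hC
    · rw [Nat.cast_eq_zero, Finset.card_eq_zero] at hC
      have : ℓ ∈ (fiber_finite hB (halfn B ℓ)).toFinset := by simp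
      rw [hC] at this; simp at this
    · exact hC
  · intro x hx
    have : halfn B x = halfn B ℓ := by simpa using hx
    refine (low_const hB h n ℓ x hℓ ?_).symm
    rw [halfn_eq hB, halfn_eq hB, this]

lemma SS_vanish (hB : IsLeech B) (h : IsJacobiFormWith B k 2 φ f) (hk : k < -4) (n : ℕ)
    (hn : ∀ m < n, ∀ ℓ, f m ℓ = 0) : SS hB f n 0 = 0 ∧ SS hB f n 1 = 0 ∧ SS hB f n 2 = 0 ∧
      (SS hB f n 3 = 0 ∨ SS hB f n 4 = 20 * SS hB f n 3) := by
  have hpi : (π : ℂ) ≠ 0 := by exact_mod_cast Real.pi_ne_zero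
  have s0 : SS hB f n 0 = 0 := by
    have := low_rel3 hB h n hn 0 (by left; omega)
    simpa [cf, kap] using this
  have s1 : SS hB f n 1 = 0 := by
    have := low_rel3 hB h n hn 1 (by left; omega)
    simpa [Finset.Nat.antidiagonal_succ, cf, kap, s0, hpi] using this
  have s2 : SS hB f n 2 = 0 := by
    have := low_rel3 hB h n hn 2 (by left; omega)
    simp [Finset.Nat.antidiagonal_succ, s0, s1] at this
    norm_num [cf, kap, hpi, Nat.factorial] at this
    exact this
  refine ⟨s0, s1, s2, ?_⟩
  by_cases hc : k = -6 ∧ n = 0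
  · right
    have := low_rel3 hB h n hn 4 (by right; right; left; omega)
    simp [Finset.Nat.antidiagonal_succ, s0, s1, s2] at this
    norm_num [cf, kap, hpi, Nat.factorial] at this
    have h8 : (256 * (π : ℂ) ^ 8) ≠ 0 := by simp [hpi]
    apply mul_left_cancel₀ h8
    linear_combination this
  · left
    have := low_rel3 hB h n hn 3 (by
      by_cases h7 : k = -5
      · right; right; right; subst h7; decide
      · by_cases h6 : k = -6
        · right; left; omega
        · left; omega)
    simp [Finset.Nat.antidiagonal_succ, s0, s1, s2] at this
    norm_num [cf, kap, hpi, Nat.factorial] at this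
    exact this

lemma f_zero (hB : IsLeech B) (h : IsJacobiFormWith B k 2 φ f) (hk : k < -4) (n : ℕ) :
    ∀ ℓ, f n ℓ = 0 := by
  induction n using Nat.strong_induction_on with
  | _ n hn =>
  obtain ⟨s0, s1, s2, s3⟩ := SS_vanish hB h hk n hn
  have e1 := Cj_one (f := f) hB n
  rw [SS_eq] at s0 s1 s2
  rw [SS_eq, SS_eq] at s3
  simp only [Finset.sum_range_succ, Finset.sum_range_zero, e1] at s0 s1 s2 s3
  norm_num at s0 s1 s2 s3
  have s3' : Cj hB f n 2 * 64 + Cj hB f n 3 * 216 + Cj hB f n 4 * 512 = 0 := by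
    rcases s3 with s3 | s3
    · linear_combination s3
    · linear_combination (-1/2) * s3 - 52 * s2 + 96 * s1
  have c4 : Cj hB f n 4 = 0 := by
    linear_combination (1/64) * (s3' - 10 * s2 + 24 * s1)
  have c3 : Cj hB f n 3 = 0 := by
    linear_combination (1/12) * (s2 - 4 * s1) - (32/12) * c4
  have c2 : Cj hB f n 2 = 0 := by
    linear_combination (1/4) * s1 - (6/4) * c3 - 2 * c4
  have c0 : Cj hB f n 0 = 0 := by
    linear_combination s0 - c2 - c3 - c4
  intro ℓ
  by_contra hf
  have h8 := low_support hB h n hn ℓ hf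
  apply hf
  apply Cj_fib hB h n ℓ h8
  have := halfn_eq hB ℓ
  have h5 : halfn B ℓ < 5 := by omega
  interval_cases halfn B ℓ <;> assumption

lemma final_thm (hB : IsLeech B) (hk : k < -4) (hφ : IsWeakJacobiForm B k 2 φ)
    (τ : UpperHalfPlane) (z : CV) : φ τ z = 0 := by
  obtain ⟨f, h⟩ := hφ
  have := h.expansion τ z
  simp only [f_zero hB h hk, zero_mul] at this
  exact this.unique hasSum_zero

end A5

/-- Every Conway invariant weak Jacobi form of index 2 and weight `k < −4` vanishes. -/
theorem weak_jacobi_index_two_minimal_weight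
    (B : Matrix (Fin 24) (Fin 24) ℤ) (hB : IsLeech B)
    (k : ℤ) (hk : k < -4)
    (φ : UpperHalfPlane → CV → ℂ) (hφ : IsWeakJacobiForm B k 2 φ) :
    ∀ (τ : UpperHalfPlane) (z : CV), φ τ z = 0 := by
  intro τ z
  exact final_thm hB hk hφ τ z

end
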